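/- Let P ⊂ ℝ^n be a smooth full-dimensional lattice polytope. Then Σ_F (-1)^{n - dim F} (dim F + 1)! Vol(F) = 0, the sum running over all nonempty faces F of P, if and only if P is unimodularly equivalent to a Cayley sum Cayley(R_0, …, R_t)_π of normally equivalent smooth lattice polytopes R_0, …, R_t with dim R_i < t. -/

import Mathlib

noncomputable section

open MeasureTheory Pointwise

/-- A point of `ℝ^n` is a lattice point if all its coordinates are integers. -/
def IsLatticePt {n : ℕ} (x : Fin n → ℝ) : Prop := ∀ i, ∃ z : ℤ, x i = (z : ℝ)

/-- A lattice polytope is the convex hull of a finite set of lattice points. -/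
def IsLatticePolytope {n : ℕ} (P : Set (Fin n → ℝ)) : Prop :=
  ∃ V : Finset (Fin n → ℝ), (∀ v ∈ V, IsLatticePt v) ∧
    P = convexHull ℝ (↑V : Set (Fin n → ℝ))

/-- A rational polytope is the convex hull of a finite set of rational points. -/
def IsRatPolytope {n : ℕ} (P : Set (Fin n → ℝ)) : Prop :=
  ∃ V : Finset (Fin n → ℝ), (∀ v ∈ V, ∀ i, ∃ q : ℚ, v i = (q : ℝ)) ∧
    P = convexHull ℝ (↑V : Set (Fin n → ℝ))

/-- The vertices `0, e_1, …, e_t` of the standard unimodular simplex `Δ_t ⊆ ℝ^t`. -/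
def stdSimplexVert (t : ℕ) (k : Fin (t + 1)) : Fin t → ℝ :=
  fun j => if (k : ℕ) = (j : ℕ) + 1 then 1 else 0

/-- The standard unimodular simplex `Δ_t = conv(0, e_1, …, e_t) ⊆ ℝ^t`. -/
def unimodSimplex (t : ℕ) : Set (Fin t → ℝ) := convexHull ℝ (Set.range (stdSimplexVert t))

/-- The interior of the dilate `s • P` contains a lattice point. -/
def HasInteriorLatticePt {n : ℕ} (P : Set (Fin n → ℝ)) (s : ℕ) : Prop :=
  ∃ x ∈ interior ((s : ℝ) • P), IsLatticePt x

/-- The codegree `cd(P)`: the least positive integer `t` such that the interior of `t • P`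
contains a lattice point. -/
def codeg {n : ℕ} (P : Set (Fin n → ℝ)) : ℕ :=
  sInf {t : ℕ | 0 < t ∧ HasInteriorLatticePt P t}

/-- Pairing of an integer vector with a real vector. -/
def iprod {n : ℕ} (a : Fin n → ℤ) (x : Fin n → ℝ) : ℝ := ∑ i, (a i : ℝ) * x i

/-- An integer vector is primitive if it is nonzero and its coordinates have no common
non-unit divisor. -/
def IsPrimitive {n : ℕ} (a : Fin n → ℤ) : Prop :=
  a ≠ 0 ∧ ∀ d : ℤ, (∀ i, d ∣ a i) → IsUnit d

/-- `(a, b)` is a facet inequality of `P ⊆ ℝ^n`: `a` is a primitive integer inner normal,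
`b = min_{x ∈ P} ⟨a, x⟩`, and the corresponding face has dimension `n - 1`. -/
def IsFacetIneq {n : ℕ} (P : Set (Fin n → ℝ)) (a : Fin n → ℤ) (b : ℝ) : Prop :=
  IsPrimitive a ∧ (∀ x ∈ P, b ≤ iprod a x) ∧
  {x ∈ P | iprod a x = b}.Nonempty ∧
  Module.finrank ℝ ↥(vectorSpan ℝ {x ∈ P | iprod a x = b}) = n - 1

/-- The adjoint polytope `P^(s) = {x : ⟨a_F, x⟩ ≥ b_F + s for all facets F}`. -/
def adjointPoly {n : ℕ} (P : Set (Fin n → ℝ)) (s : ℝ) : Set (Fin n → ℝ) :=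
  {x | ∀ a b, IsFacetIneq P a b → b + s ≤ iprod a x}

/-- The set `{s > 0 : P^(s) ≠ ∅}`; the ℚ-codegree is `μ(P) = (sSup (muSet P))⁻¹`. -/
def muSet {n : ℕ} (P : Set (Fin n → ℝ)) : Set ℝ :=
  {s : ℝ | 0 < s ∧ (adjointPoly P s).Nonempty}

/-- `F` is a (nonempty, exposed) face of the polytope `P`; with `u = 0` this includes
`P` itself. -/
def IsFace {n : ℕ} (P F : Set (Fin n → ℝ)) : Prop :=
  F.Nonempty ∧ ∃ (u : (Fin n → ℝ) →ₗ[ℝ] ℝ) (c : ℝ),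
    (∀ x ∈ P, c ≤ u x) ∧ F = {x ∈ P | u x = c}

/-- The dimension of a face (or polytope): the rank of its direction vector space. -/
def fdim {n : ℕ} (F : Set (Fin n → ℝ)) : ℕ := Module.finrank ℝ ↥(vectorSpan ℝ F)

/-- `vol` is the relative lattice volume of `F`: the Lebesgue volume of the image of `F`
under an affine isomorphism of `aff F` with `ℝ^{dim F}` carrying `(aff F) ∩ ℤ^n` onto
`ℤ^{dim F}`. -/
def HasRelVol {n : ℕ} (F : Set (Fin n → ℝ)) (vol : ℝ) : Prop :=
  ∃ T : (Fin n → ℝ) →ᵃ[ℝ] (Fin (fdim F) → ℝ),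
    Set.BijOn T (affineSpan ℝ F : Set (Fin n → ℝ)) Set.univ ∧
    T '' ((affineSpan ℝ F : Set (Fin n → ℝ)) ∩ {x | IsLatticePt x}) = {y | IsLatticePt y} ∧
    vol = (volume (T '' F)).toReal

/-- The alternating face sum `Σ_F (-1)^{n - dim F} (dim F + 1)! Vol(F)`. -/
def faceSum {n : ℕ} (𝓕 : Finset (Set (Fin n → ℝ))) (volf : Set (Fin n → ℝ) → ℝ) : ℝ :=
  ∑ F ∈ 𝓕, (-1 : ℝ) ^ (n - fdim F) * (Nat.factorial (fdim F + 1) : ℝ) * volf F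

/-- The alternating sum over all nonempty faces of `P` of
`(-1)^{n - dim F} (dim F + 1)! Vol(F)` vanishes. -/
def FaceSumZero {n : ℕ} (P : Set (Fin n → ℝ)) : Prop :=
  ∃ (𝓕 : Finset (Set (Fin n → ℝ))) (volf : Set (Fin n → ℝ) → ℝ),
    (∀ F, F ∈ 𝓕 ↔ IsFace P F) ∧ (∀ F ∈ 𝓕, HasRelVol F (volf F)) ∧
    faceSum 𝓕 volf = 0

/-- A polytope `R ⊆ ℝ^n` (of dimension `d = fdim R`) is smooth: at each vertex there are
exactly `d` edges, whose primitive integer direction vectors form a ℤ-basis of the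
lattice `(vectorSpan R) ∩ ℤ^n`. -/
def IsSmoothPoly {n : ℕ} (R : Set (Fin n → ℝ)) : Prop :=
  ∀ v ∈ Set.extremePoints ℝ R,
    ∃ (w : Fin (fdim R) → (Fin n → ℤ)) (c : Fin (fdim R) → ℝ),
      (∀ i, 0 < c i) ∧ (∀ i, IsPrimitive (w i)) ∧
      LinearIndependent ℝ (fun i => ((fun j => ((w i j : ℝ))) : Fin n → ℝ)) ∧
      (∀ i, ((fun j => ((w i j : ℝ))) : Fin n → ℝ) ∈ vectorSpan ℝ R) ∧
      (∀ z : Fin n → ℤ, ((fun j => (z j : ℝ)) : Fin n → ℝ) ∈ vectorSpan ℝ R →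
        ∃ m : Fin (fdim R) → ℤ,
          ((fun j => (z j : ℝ)) : Fin n → ℝ) =
            ∑ i, (m i : ℝ) • ((fun j => ((w i j : ℝ))) : Fin n → ℝ)) ∧
      (∀ F : Set (Fin n → ℝ), (IsFace R F ∧ v ∈ F ∧ fdim F = 1) ↔
        ∃ i, F = segment ℝ v (v + c i • ((fun j => ((w i j : ℝ))) : Fin n → ℝ)))

/-- The real-linear map `ℝ^n → ℝ^t` induced by an integer matrix. -/
def matMap {t n : ℕ} (A : Matrix (Fin t) (Fin n) ℤ) : (Fin n → ℝ) → (Fin t → ℝ) :=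
  fun x k => ∑ j, (A k j : ℝ) * x j

/-- The piece `R_k = P ∩ π_ℝ^{-1}(v_k)` of a Cayley sum over the `k`-th vertex of `Δ_t`. -/
def cayleyPiece {t n : ℕ} (A : Matrix (Fin t) (Fin n) ℤ) (P : Set (Fin n → ℝ))
    (k : Fin (t + 1)) : Set (Fin n → ℝ) :=
  {x ∈ P | matMap A x = stdSimplexVert t k}

/-- Two polytopes are normally equivalent (have the same normal fan): for all linear
functionals `u, v`, the minimizing face of `u` equals that of `v` on `R` precisely when the
same holds on `S`. -/
def NormEquiv {n : ℕ} (R S : Set (Fin n → ℝ)) : Prop :=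
  ∀ u v : (Fin n → ℝ) →ₗ[ℝ] ℝ,
    ({x ∈ R | ∀ y ∈ R, u x ≤ u y} = {x ∈ R | ∀ y ∈ R, v x ≤ v y}) ↔
    ({x ∈ S | ∀ y ∈ S, u x ≤ u y} = {x ∈ S | ∀ y ∈ S, v x ≤ v y})

/-- `Q` is the Cayley sum, via the surjective lattice projection `A : ℤ^n → ℤ^t`, of the
normally equivalent polytopes `R_k = Q ∩ π_ℝ^{-1}(v_k)`: `π_ℝ` maps `Q` onto `Δ_t`. -/
def IsCayleyWith {n t : ℕ} (Q : Set (Fin n → ℝ)) (A : Matrix (Fin t) (Fin n) ℤ) : Prop :=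
  (∀ y : Fin t → ℤ, ∃ x : Fin n → ℤ, A.mulVec x = y) ∧
  matMap A '' Q = unimodSimplex t ∧
  ∀ k l : Fin (t + 1), NormEquiv (cayleyPiece A Q k) (cayleyPiece A Q l)

/-- The unimodular affine map `x ↦ Ux + w`. -/
def unimodMap {n : ℕ} (U : Matrix (Fin n) (Fin n) ℤ) (w : Fin n → ℤ) :
    (Fin n → ℝ) → (Fin n → ℝ) :=
  fun x i => (∑ j, (U i j : ℝ) * x j) + (w i : ℝ)

/-- The set `{s > 0 : P^(s) has the same normal fan as P}`; the nef value is
`τ(P) = (sSup (tauSet P))⁻¹`. -/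
def tauSet {n : ℕ} (P : Set (Fin n → ℝ)) : Set ℝ :=
  {s : ℝ | 0 < s ∧ NormEquiv (adjointPoly P s) P}

section
namespace Smooth8
open Finset

/-- Combinatorial model of a smooth polytope. -/
structure Mdl (n : ℕ) (ι ω E : Type) [Fintype ι] [DecidableEq ι] [Fintype ω]
    [AddCommGroup E] [Module ℝ E] where
  N : ω → Finset ι
  ell : ι → E →ᵃ[ℝ] ℝ
  pt : ω → E
  e : ω → ι → E
  w0 : ω
  inj : ∀ w w', pt w = pt w' → w = w'
  card : ∀ w, (N w).card = n
  mem : ∀ w k, k ∈ N w ↔ ell k (pt w) = 0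
  dual : ∀ w k l, k ∈ N w → l ∈ N w → (ell l).linear (e w k) = if l = k then 1 else 0
  span : ∀ w p, p = ∑ k ∈ N w, (ell k).linear p • e w k
  int : ∀ w k, ∃ z : ℤ, ell k (pt w) = z
  inte : ∀ w k l, k ∈ N w → ∃ z : ℤ, (ell l).linear (e w k) = z
  nonneg : ∀ w k, 0 ≤ ell k (pt w)
  adj : ∀ w k, k ∈ N w → ∃ w' : ω, ∃ c : ℝ, 1 ≤ c ∧ pt w' = pt w + c • e w k ∧
    (∀ x, (N w).erase k ⊆ N x → x = w ∨ x = w') ∧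
    ∀ k' ∈ N w', k' ∉ N w → e w' k' = - e w k

namespace Mdl
variable {n : ℕ} {ι ω E : Type} [Fintype ι] [DecidableEq ι] [Fintype ω]
    [AddCommGroup E] [Module ℝ E] (M : Mdl n ι ω E)

/-- Linear part. -/
def u (k : ι) : E →ₗ[ℝ] ℝ := (M.ell k).linear

theorem ell_add (k : ι) (p v : E) : M.ell k (p + v) = M.ell k p + M.u k v := by
  have := (M.ell k).map_vadd p v
  simp only [vadd_eq_add] at this
  rw [add_comm p v, this, add_comm]; rfl

theorem ell_sub (k : ι) (p q : E) : M.u k (p - q) = M.ell k p - M.ell k q := by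
  have := M.ell_add k q (p - q)
  rw [add_sub_cancel] at this
  linarith

theorem ell_conv (k : ι) (p q : E) (a b : ℝ) (hab : a + b = 1) :
    M.ell k (a • p + b • q) = a * M.ell k p + b * M.ell k q := by
  have h : a • p + b • q = p + b • (q - p) := by
    have : a = 1 - b := by linarith
    subst this; module
  rw [h, ell_add, map_smul, ell_sub, smul_eq_mul]
  have : a = 1 - b := by linarith
  subst this; ring

theorem dual' {w k l} (hk : k ∈ M.N w) (hl : l ∈ M.N w) :
    M.u l (M.e w k) = if l = k then 1 else 0 := M.dual w k l hk hl

theorem e_ne {w k} (hk : k ∈ M.N w) : M.e w k ≠ 0 := by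
  intro h
  have := M.dual' hk hk
  rw [h] at this; simp at this

theorem span' (w p) : p = ∑ k ∈ M.N w, M.u k p • M.e w k := M.span w p

theorem ell_pt {w k} (hk : k ∈ M.N w) : M.ell k (M.pt w) = 0 := (M.mem w k).1 hk

theorem span_pt (w p) : p = M.pt w + ∑ k ∈ M.N w, M.ell k p • M.e w k := by
  have h := M.span' w (p - M.pt w)
  rw [sub_eq_iff_eq_add'] at h
  conv_lhs => rw [h]
  congr 1
  apply sum_congr rfl
  intro k hk
  rw [ell_sub, M.ell_pt hk, sub_zero]

theorem pt_inj {w w'} (h : M.N w ⊆ M.N w') : M.pt w = M.pt w' := by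
  rw [M.span_pt w (M.pt w')]
  symm
  rw [add_eq_left]
  apply sum_eq_zero
  intro k hk
  rw [M.ell_pt (h hk), zero_smul]

theorem ell_pt_one {w k} (hk : k ∉ M.N w) : 1 ≤ M.ell k (M.pt w) := by
  obtain ⟨z, hz⟩ := M.int w k
  have h0 := M.nonneg w k
  have h1 : M.ell k (M.pt w) ≠ 0 := fun h => hk ((M.mem w k).2 h)
  rw [hz] at *
  have : z ≠ 0 := by intro h; apply h1; simp [h]
  have h2 : 0 ≤ z := by exact_mod_cast h0
  have : 1 ≤ z := by omega
  exact_mod_cast this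

theorem exists_xi : ∃ ξ : Module.Dual ℝ E, ∀ w, ∀ k ∈ M.N w, ξ (M.e w k) ≠ 0 := by
  classical
  obtain ⟨f, hf⟩ := Module.exists_dual_forall_apply_ne_zero (K := ℝ)
    (fun i : {i : ω × ι // i.2 ∈ M.N i.1} => M.e i.1.1 i.1.2) (fun i => M.e_ne i.2)
  exact ⟨f, fun w k hk => hf ⟨⟨w, k⟩, hk⟩⟩

/-- A generic functional. -/
noncomputable def xi : Module.Dual ℝ E := M.exists_xi.choose

theorem xi_ne {w k} (hk : k ∈ M.N w) : M.xi (M.e w k) ≠ 0 := M.exists_xi.choose_spec w k hk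

/-- Localization sum. -/
noncomputable def S (I : Finset ι) (G : ω → ℝ) : ℝ :=
  ∑ w, if I ⊆ M.N w then G w * ∏ k ∈ M.N w \ I, (M.xi (M.e w k))⁻¹ else 0

theorem S_rel (I : Finset ι) (G : ω → ℝ) (a : ι → ℝ) :
    M.S I (fun w => (∑ k ∈ M.N w \ I, a k * M.xi (M.e w k)) * G w) =
      ∑ k ∈ Iᶜ, a k * M.S (insert k I) G := by
  unfold S
  simp_rw [mul_sum]
  rw [sum_comm]
  apply sum_congr rfl
  intro w _
  split_ifs with h
  · rw [sum_mul, sum_mul]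
    rw [← sum_subset (s₁ := M.N w \ I) (s₂ := Iᶜ)]
    · apply sum_congr rfl
      intro k hk
      rw [mem_sdiff] at hk
      rw [if_pos (insert_subset hk.1 h)]
      have : M.N w \ I = insert k (M.N w \ insert k I) := by
        ext x; simp only [mem_sdiff, mem_insert]; grind
      conv_lhs => rw [this]
      rw [prod_insert (by simp)]
      have := M.xi_ne hk.1
      field_simp
    · intro x; simp
    · intro x hx hx'
      rw [if_neg]; simp
      intro hs
      apply hx'
      simp at hx
      simp [hx]; exact hs (mem_insert_self _ _)
  · symm
    apply sum_eq_zero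
    intro k _
    rw [if_neg, mul_zero]
    exact fun h' => h ((subset_insert _ _).trans h')

theorem S_sub (I : Finset ι) (G H : ω → ℝ) : M.S I (fun w => G w - H w) = M.S I G - M.S I H := by
  unfold S
  rw [← sum_sub_distrib]
  apply sum_congr rfl
  intro w _
  split_ifs <;> ring

theorem S_smul (I : Finset ι) (c : ℝ) (G : ω → ℝ) : M.S I (fun w => c * G w) = c * M.S I G := by
  unfold S
  rw [mul_sum]
  apply sum_congr rfl
  intro w _
  split_ifs <;> ring

theorem S_congr (I : Finset ι) (G H : ω → ℝ) (h : ∀ w, I ⊆ M.N w → G w = H w) :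
    M.S I G = M.S I H := by
  unfold S
  apply sum_congr rfl
  intro w _
  split_ifs with h'
  · rw [h w h']
  · rfl

theorem S_empty (I : Finset ι) (G : ω → ℝ) (h : ∀ w, ¬ I ⊆ M.N w) : M.S I G = 0 := by
  unfold S
  apply sum_eq_zero
  intro w _
  rw [if_neg (h w)]

/-- Indicator. -/
def del (k : ι) (j : Option ι) : ℝ := if j = some k then 1 else 0

/-- Shifted vertex. -/
noncomputable def mm (w : ω) (j : Option ι) : E := M.pt w + ∑ k ∈ M.N w, del k j • M.e w k

theorem ell_mm {w l} (hl : l ∈ M.N w) (j) : M.ell l (M.mm w j) = del l j := by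
  unfold mm
  rw [ell_add, M.ell_pt hl, map_sum, sum_eq_single l]
  · rw [map_smul, M.dual' hl hl]; simp
  · intro k hk hkl
    rw [map_smul, M.dual' hk hl, if_neg hkl.symm, smul_zero]
  · intro h; exact absurd hl h

theorem shift {I : Finset ι} {j p} (hp : ∀ l ∈ I, M.ell l p = del l j) {w} (hw : I ⊆ M.N w) :
    M.xi (M.mm w j) = M.xi p - ∑ k ∈ M.N w \ I, (M.ell k p - del k j) * M.xi (M.e w k) := by
  have h := M.span_pt w p
  rw [eq_sub_iff_add_eq, ← eq_sub_iff_add_eq']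
  have h2 : p - M.mm w j = ∑ k ∈ M.N w, (M.ell k p - del k j) • M.e w k := by
    conv_lhs => rw [h]
    unfold mm
    simp_rw [sub_smul, sum_sub_distrib]
    abel
  rw [← map_sub, h2, map_sum]
  apply sum_subset_zero_on_sdiff sdiff_subset
  · intro x hx
    have : x ∈ I := by simp at hx; exact hx.2
    simp [hp x this]
  · intro x hx; simp

/-- Product sums. -/
noncomputable def T (I : Finset ι) (J : List (Option ι)) : ℝ :=
  M.S I (fun w => (J.map (fun j => M.xi (M.mm w j))).prod)

theorem T_cons {I : Finset ι} {j p} (hp : ∀ l ∈ I, M.ell l p = del l j) (J) :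
    M.T I (j :: J) = M.xi p * M.T I J - ∑ k ∈ Iᶜ, (M.ell k p - del k j) * M.T (insert k I) J := by
  unfold T
  rw [← S_rel, ← S_smul, ← S_sub]
  apply S_congr
  intro w hw
  simp only [List.map_cons, List.prod_cons]
  rw [M.shift hp hw]
  ring

theorem T_nil (d : ℕ) : ∀ I : Finset ι, I.card + d + 1 = n → M.T I [] = 0 := by
  induction d with
  | zero =>
    intro I hI
    unfold T
    by_cases h : ∃ w, I ⊆ M.N w
    · obtain ⟨w, hw⟩ := h
      have hc : (M.N w \ I).card = 1 := by
        rw [card_sdiff_of_subset hw, M.card]; omega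
      obtain ⟨k, hk⟩ := card_eq_one.1 hc
      have hkm : k ∈ M.N w \ I := by rw [hk]; simp
      rw [mem_sdiff] at hkm
      have her : (M.N w).erase k = I := by
        rw [← sdiff_singleton_eq_erase, ← hk, Finset.sdiff_sdiff_eq_self hw]
      obtain ⟨w', c, hc1, hpt, hadj, he⟩ := M.adj w k hkm.1
      rw [her] at hadj
      have hw' : I ⊆ M.N w' := by
        intro l hl
        rw [M.mem, hpt, ell_add, map_smul, M.dual' hkm.1 (hw hl), M.ell_pt (hw hl), if_neg]
        · simp
        · rintro rfl; exact hkm.2 hl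
      have hkw' : k ∉ M.N w' := by
        rw [M.mem, hpt, ell_add, map_smul, M.dual' hkm.1 hkm.1, M.ell_pt hkm.1]
        simp; linarith
      have hne : w ≠ w' := by rintro rfl; exact hkw' hkm.1
      have hc' : (M.N w' \ I).card = 1 := by
        rw [card_sdiff_of_subset hw', M.card]; omega
      obtain ⟨k', hk'⟩ := card_eq_one.1 hc'
      have hkm' : k' ∈ M.N w' \ I := by rw [hk']; simp
      rw [mem_sdiff] at hkm'
      have hk'w : k' ∉ M.N w := by
        intro h
        by_cases hkk : k' = k
        · rw [hkk] at hkm'; exact hkw' hkm'.1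
        · apply hkm'.2; rw [← her, mem_erase]; exact ⟨hkk, h⟩
      unfold S
      classical
      rw [← sum_subset (s₁ := {w, w'}) (subset_univ _)]
      · rw [sum_pair hne, if_pos hw, if_pos hw', hk, hk']
        simp [he k' hkm'.1 hk'w, inv_neg]
      · intro x _ hx
        rw [if_neg]
        intro h; apply hx
        simpa using hadj x h
    · push Not at h
      exact M.S_empty I _ h
  | succ d ih =>
    intro I hI
    by_cases h : ∃ w, I ⊆ M.N w
    · obtain ⟨w, hw⟩ := h
      have hc : 0 < (M.N w \ I).card := by
        rw [card_sdiff_of_subset hw, M.card]; omega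
      obtain ⟨k, hk⟩ := card_pos.1 hc
      rw [mem_sdiff] at hk
      have key : M.xi (M.e w k) * M.T I [] = 0 := by
        have : M.xi (M.e w k) * M.T I [] = ∑ l ∈ Iᶜ, M.u l (M.e w k) * M.T (insert l I) [] := by
          unfold T
          rw [← S_rel, ← S_smul]
          apply S_congr
          intro x hx
          simp only [List.map_nil, List.prod_nil, mul_one]
          conv_lhs => rw [M.span' x (M.e w k), map_sum]
          symm
          simp_rw [map_smul, smul_eq_mul]
          apply sum_subset_zero_on_sdiff sdiff_subset
          · intro y hy
            have hyI : y ∈ I := by simp at hy; exact hy.2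
            rw [M.dual' hk.1 (hw hyI), if_neg, zero_mul]
            rintro rfl; exact hk.2 hyI
          · intros; rfl
        rw [this]
        apply sum_eq_zero
        intro l hl
        rw [ih (insert l I), mul_zero]
        rw [card_insert_of_notMem (by simpa using hl)]
        omega
      rcases mul_eq_zero.1 key with h | h
      · exact absurd h (M.xi_ne hk.1)
      · exact h
    · push Not at h
      exact M.S_empty I _ h

theorem T_van (J : List (Option ι)) : ∀ I : Finset ι, I.card + J.length < n → M.T I J = 0 := by
  induction J with
  | nil =>
    intro I hI
    simp at hI
    exact M.T_nil (n - I.card - 1) I (by omega)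
  | cons j J ih =>
    intro I hI
    simp at hI
    by_cases h : ∃ w, I ⊆ M.N w
    · obtain ⟨w, hw⟩ := h
      rw [M.T_cons (p := M.mm w j) (fun l hl => M.ell_mm (hw hl) j), ih I (by omega)]
      rw [sum_eq_zero]; simp
      intro k hk
      rw [ih, mul_zero]
      rw [card_insert_of_notMem (by simpa using hk)]
      omega
    · push Not at h
      exact M.S_empty I _ h

/-- Mixed degree. -/
noncomputable def X (I : Finset ι) (J : List (Option ι)) : ℝ := (-1) ^ J.length * M.T I J

theorem X_cons {I : Finset ι} {j p} (hp : ∀ l ∈ I, M.ell l p = del l j) (J : List (Option ι))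
    (hn : J.length + 1 + I.card = n) :
    M.X I (j :: J) = ∑ k ∈ Iᶜ, (M.ell k p - del k j) * M.X (insert k I) J := by
  unfold X
  rw [M.T_cons hp, M.T_van J I (by omega)]
  rw [mul_zero, zero_sub, List.length_cons, pow_succ]
  have : ∀ k, (M.ell k p - del k j) * ((-1) ^ J.length * M.T (insert k I) J) =
    (-1) ^ J.length * ((M.ell k p - del k j) * M.T (insert k I) J) := fun k => by ring
  simp_rw [this, ← mul_sum]
  ring

theorem X_perm (I : Finset ι) {J J' : List (Option ι)} (h : J.Perm J') : M.X I J = M.X I J' := by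
  unfold X T
  rw [h.length_eq]
  congr 1
  apply S_congr
  intro w _
  exact (h.map _).prod_eq

theorem X_empty (I : Finset ι) (J) (h : ∀ w, ¬ I ⊆ M.N w) : M.X I J = 0 := by
  unfold X T; rw [M.S_empty I _ h, mul_zero]

theorem X_nil (w) : M.X (M.N w) [] = ∑ x, if M.N w ⊆ M.N x then 1 else 0 := by
  unfold X T S
  simp only [List.length_nil, pow_zero, one_mul, List.map_nil, List.prod_nil]
  apply sum_congr rfl
  intro x _
  split_ifs with h
  · have : M.N x \ M.N w = ∅ := by
      rw [eq_of_subset_of_card_le h (by simp [M.card])]; simp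
    simp [this]
  · rfl

theorem X_nil_nonneg (I : Finset ι) (hI : I.card = n) : 0 ≤ M.X I [] := by
  by_cases h : ∃ w, I ⊆ M.N w
  · obtain ⟨w, hw⟩ := h
    rw [eq_of_subset_of_card_le hw (by simp [M.card, hI]), X_nil]
    positivity
  · push Not at h
    rw [M.X_empty I _ h]

theorem X_nil_pos (w) : 1 ≤ M.X (M.N w) [] := by
  rw [X_nil]
  calc (1:ℝ) = if M.N w ⊆ M.N w then 1 else 0 := by simp
    _ ≤ _ := single_le_sum (f := fun x => if M.N w ⊆ M.N x then (1:ℝ) else 0)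
      (fun i _ => by positivity) (mem_univ w)

theorem pt_e_nonneg (w k) (hk : k ∈ M.N w) (l) : 0 ≤ M.ell l (M.pt w + M.e w k) := by
  obtain ⟨w', c, hc, hpt, -⟩ := M.adj w k hk
  have h1 := M.nonneg w l
  have h2 := M.nonneg w' l
  rw [hpt, ell_add, map_smul, smul_eq_mul] at h2
  rw [ell_add]
  by_cases h : 0 ≤ M.u l (M.e w k)
  · linarith
  · nlinarith

theorem mm_none (w) : M.mm w none = M.pt w := by simp [mm, del]

theorem mm_some (w i) (hi : i ∈ M.N w) : M.mm w (some i) = M.pt w + M.e w i := by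
  unfold mm
  rw [sum_eq_single i]
  · simp [del]
  · intro k _ hk; simp [del, hk.symm]
  · intro h; exact absurd hi h

theorem mm_some' (w i) (hi : i ∉ M.N w) : M.mm w (some i) = M.pt w := by
  unfold mm
  rw [sum_eq_zero]; simp
  intro k hk
  have : i ≠ k := by rintro rfl; exact hi hk
  simp [del, this]

theorem mm_ge (w j k) : del k j ≤ M.ell k (M.mm w j) := by
  by_cases hk : k ∈ M.N w
  · rw [M.ell_mm hk]
  · rcases j with _ | i
    · rw [mm_none]; simp [del, M.nonneg]
    · by_cases hi : i ∈ M.N w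
      · rw [M.mm_some w i hi]
        have : i ≠ k := by rintro rfl; exact hk hi
        simp [del, this, M.pt_e_nonneg w i hi]
      · rw [M.mm_some' w i hi]
        unfold del
        split_ifs
        · exact M.ell_pt_one hk
        · exact M.nonneg _ _

theorem X_nonneg (J : List (Option ι)) : ∀ I : Finset ι, J.length + I.card = n → 0 ≤ M.X I J := by
  induction J with
  | nil => intro I hI; exact M.X_nil_nonneg I (by simpa using hI)
  | cons j J ih =>
    intro I hI
    simp at hI
    by_cases h : ∃ w, I ⊆ M.N w
    · obtain ⟨w, hw⟩ := h
      rw [M.X_cons (p := M.mm w j) (fun l hl => M.ell_mm (hw hl) j) J (by omega)]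
      apply sum_nonneg
      intro k hk
      apply mul_nonneg
      · have := M.mm_ge w j k; linarith
      · apply ih
        rw [card_insert_of_notMem (by simpa using hk)]
        omega
    · push Not at h
      rw [M.X_empty I _ h]

/-- Strict positivity step. -/
theorem X_pos_step {I : Finset ι} {j : Option ι} {p : E} {k : ι} {J : List (Option ι)}
    (hp : ∀ l ∈ I, M.ell l p = del l j) (hge : ∀ l, del l j ≤ M.ell l p) (hk : k ∉ I)
    (hlt : del k j < M.ell k p) (hn : J.length + 1 + I.card = n)
    (hX : 0 < M.X (insert k I) J) : 0 < M.X I (j :: J) := by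
  rw [M.X_cons hp J hn]
  apply sum_pos'
  · intro l hl
    apply mul_nonneg
    · have := hge l; linarith
    · apply M.X_nonneg
      rw [card_insert_of_notMem (by simpa using hl)]
      omega
  · exact ⟨k, by simpa using hk, mul_pos (by linarith) hX⟩

end Mdl
end Smooth8
end

section
namespace Smooth8
open Finset
namespace Mdl
variable {n : ℕ} {ι ω E : Type} [Fintype ι] [DecidableEq ι] [Fintype ω]
    [AddCommGroup E] [Module ℝ E] (M : Mdl n ι ω E)

theorem X_nil_one (w) : M.X (M.N w) [] = 1 := by
  rw [X_nil, sum_eq_single w]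
  · simp
  · intro x _ hx
    rw [if_neg]
    intro h; exact hx (M.inj _ _ (M.pt_inj h)).symm
  · simp

/-- Normalized volume. -/
noncomputable def NN (I : Finset ι) : ℝ := M.X I (List.replicate (n - I.card) none)

theorem NN_empty (I : Finset ι) (h : ∀ w, ¬ I ⊆ M.N w) : M.NN I = 0 := M.X_empty I _ h

theorem NN_vert (w) : M.NN (M.N w) = 1 := by
  unfold NN; rw [M.card]; simpa using M.X_nil_one w

theorem NN_nonneg (I : Finset ι) : 0 ≤ M.NN I := by
  by_cases h : ∃ w, I ⊆ M.N w
  · obtain ⟨w, hw⟩ := h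
    have := card_le_card hw
    rw [M.card] at this
    apply M.X_nonneg
    simp; omega
  · push Not at h
    rw [M.NN_empty I h]

theorem NN_rec {I : Finset ι} {p} (hp : ∀ l ∈ I, M.ell l p = 0) (hI : I.card < n) :
    M.NN I = ∑ k ∈ Iᶜ, M.ell k p * M.NN (insert k I) := by
  unfold NN
  have : n - I.card = (n - I.card - 1) + 1 := by omega
  rw [this, List.replicate_succ, M.X_cons (p := p)]
  · apply sum_congr rfl
    intro k hk
    rw [card_insert_of_notMem (by simpa using hk)]
    simp [del, Nat.sub_sub]
  · intro l hl; simp [hp l hl, del]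
  · simp; omega

theorem X_mu {I K : Finset ι} (hd : Disjoint I K) (hc : I.card + K.card = n) :
    M.X I (K.toList.map some) = ∑ J ∈ K.powerset, (-1) ^ J.card * M.NN (I ∪ J) := by
  have h1 : ∀ J ∈ K.powerset, (-1 : ℝ) ^ J.card * M.NN (I ∪ J) = (-1) ^ K.card *
      ∑ w, if I ⊆ M.N w then ((∏ i ∈ J, if i ∈ M.N w then M.xi (M.e w i) else 0) *
        (∏ i ∈ K \ J, M.xi (M.pt w))) * ∏ k ∈ M.N w \ I, (M.xi (M.e w k))⁻¹ else 0 := by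
    intro J hJ
    rw [mem_powerset] at hJ
    have hdJ : Disjoint I J := hd.mono_right hJ
    have hcJ := card_le_card hJ
    unfold NN X T S
    rw [card_union_of_disjoint hdJ, List.length_replicate]
    have e1 : n - (I.card + J.card) = K.card - J.card := by omega
    have e2 : (-1 : ℝ) ^ K.card = (-1) ^ J.card * (-1) ^ (K.card - J.card) := by
      rw [← pow_add]; congr 1; omega
    rw [e1, e2, mul_assoc]
    congr 2
    apply sum_congr rfl
    intro w _
    by_cases hI : I ⊆ M.N w
    · rw [if_pos hI]
      by_cases hJw : J ⊆ M.N w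
      · rw [if_pos (union_subset hI hJw)]
        simp only [List.map_replicate, List.prod_replicate, mm_none, prod_const]
        rw [card_sdiff_of_subset hJ]
        have e3 : M.N w \ I = J ∪ (M.N w \ (I ∪ J)) := by
          ext x
          simp only [mem_sdiff, mem_union]
          have := @hJw x
          have : x ∈ I → x ∉ J := fun h => disjoint_left.1 hdJ h
          tauto
        rw [e3, prod_union (by
          rw [disjoint_left]; intro x hx hx'; simp at hx'; exact hx'.2.2 hx)]
        have e4 : (∏ i ∈ J, if i ∈ M.N w then M.xi (M.e w i) else 0) *
            ∏ i ∈ J, (M.xi (M.e w i))⁻¹ = 1 := by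
          rw [← prod_mul_distrib]
          apply prod_eq_one
          intro i hi
          rw [if_pos (hJw hi), mul_inv_cancel₀ (M.xi_ne (hJw hi))]
        linear_combination (- M.xi (M.pt w) ^ (K.card - J.card) *
          ∏ k ∈ M.N w \ (I ∪ J), (M.xi (M.e w k))⁻¹) * e4
      · rw [if_neg (fun h => hJw (subset_union_right.trans h))]
        obtain ⟨i, hi, hi'⟩ := not_subset.1 hJw
        rw [prod_eq_zero hi (by rw [if_neg hi'])]
        simp
    · rw [if_neg hI, if_neg (fun h => hI (subset_union_left.trans h))]
  rw [sum_congr rfl h1, ← mul_sum, sum_comm]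
  unfold X T S
  rw [List.length_map, length_toList]
  congr 1
  apply sum_congr rfl
  intro w _
  split_ifs with hI
  · rw [← sum_mul, ← prod_add]
    congr 1
    show (List.map (fun j => M.xi (M.mm w j)) (List.map some K.toList)).prod = _
    rw [List.map_map, prod_map_toList]
    apply prod_congr rfl
    intro i _
    simp only [Function.comp]
    split_ifs with h
    · rw [M.mm_some w i h, map_add, add_comm]
    · rw [M.mm_some' w i h, zero_add]
  · simp

/-- The alternating sum over subfaces. -/
noncomputable def DD (I : Finset ι) : ℝ :=
  ∑ I' : Finset ι, if I ⊆ I' then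
    (-1) ^ I.card * ((-1) ^ I'.card * (((n : ℝ) + 1 - I'.card) * M.NN I')) else 0

/-- The local contribution. -/
noncomputable def mu (v : ω) (I : Finset ι) : ℝ := M.X I ((M.N v \ I).toList.map some)

theorem mu_eq {v I} (h : I ⊆ M.N v) :
    M.mu v I = ∑ J ∈ Icc I (M.N v), (-1) ^ I.card * ((-1) ^ J.card * M.NN J) := by
  unfold mu
  rw [M.X_mu disjoint_sdiff (by
    rw [card_sdiff_of_subset h, M.card]; have := card_le_card h; rw [M.card] at this; omega)]
  rw [Icc_eq_image_powerset h, sum_image]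
  · apply sum_congr rfl
    intro J hJ
    rw [mem_powerset] at hJ
    have : Disjoint I J := disjoint_sdiff.mono_right hJ
    rw [card_union_of_disjoint this, pow_add]
    have : (-1 : ℝ) ^ I.card * (-1) ^ I.card = 1 := by rw [← mul_pow]; simp
    linear_combination -(-1) ^ J.card * M.NN (I ∪ J) * this
  · intro J hJ J' hJ' hh
    simp only [coe_powerset, Set.mem_preimage, Set.mem_powerset_iff, coe_subset] at hJ hJ' hh
    have h1 : Disjoint I J := disjoint_sdiff.mono_right hJ
    have h2 : Disjoint I J' := disjoint_sdiff.mono_right hJ'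
    rw [← union_sdiff_cancel_left h1, hh, union_sdiff_cancel_left h2]

theorem neg_one_sum (K : Finset ι) :
    ∑ S ∈ K.powerset, (-1 : ℝ) ^ S.card = if K = ∅ then 1 else 0 := by
  have := sum_powerset_neg_one_pow_card (x := K)
  have h2 := congrArg (Int.cast : ℤ → ℝ) this
  push_cast at h2
  exact h2

theorem csum (c : ι → ℝ) (K : Finset ι) :
    ∑ S ∈ K.powerset, (-1 : ℝ) ^ S.card * (∑ k ∈ S, c k - 1) =
      -(if K = ∅ then 1 else 0) - ∑ k ∈ K, if K = {k} then c k else 0 := by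
  induction K using Finset.induction_on with
  | empty => simp
  | insert k K hk ih =>
    clear ih
    rw [sum_powerset_insert hk, ← sum_add_distrib]
    have : ∀ S ∈ K.powerset, (-1 : ℝ) ^ S.card * (∑ k ∈ S, c k - 1) +
        (-1 : ℝ) ^ (insert k S).card * (∑ k ∈ insert k S, c k - 1) = -c k * (-1 : ℝ) ^ S.card := by
      intro S hS
      have hkS : k ∉ S := fun h => hk (mem_powerset.1 hS h)
      rw [card_insert_of_notMem hkS, sum_insert hkS, pow_succ]
      ring
    rw [sum_congr rfl this, ← mul_sum, neg_one_sum]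
    rw [if_neg (insert_ne_empty k K), sum_insert hk]
    have h0 : ∀ x ∈ K, (if insert k K = {x} then c x else 0) = 0 := by
      intro x hx
      rw [if_neg]
      intro h
      have : k ∈ ({x} : Finset ι) := h ▸ mem_insert_self k K
      simp at this; subst this; exact hk hx
    rw [sum_congr rfl h0]
    by_cases hK : K = ∅
    · subst hK; simp
    · rw [if_neg hK, if_neg]
      · simp
      · intro h
        apply hK
        rw [eq_empty_iff_forall_notMem]
        intro x hx
        have : x ∈ ({k} : Finset ι) := h ▸ mem_insert_of_mem hx
        simp at this; subst this; exact hk hx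

theorem DD_sum {v I} (h : I ⊆ M.N v) :
    ∑ S ∈ (M.N v)ᶜ.powerset, (∑ k ∈ S, M.ell k (M.pt v) - 1) * M.DD (I ∪ S) = - M.mu v I := by
  have h1 : ∀ S ∈ (M.N v)ᶜ.powerset, (∑ k ∈ S, M.ell k (M.pt v) - 1) * M.DD (I ∪ S) =
      ∑ I' : Finset ι, if I ⊆ I' then (if S ⊆ I' then
        ((-1) ^ S.card * (∑ k ∈ S, M.ell k (M.pt v) - 1)) * ((-1) ^ I.card * ((-1) ^ I'.card *
        (((n : ℝ) + 1 - I'.card) * M.NN I'))) else 0) else 0 := by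
    intro S hS
    rw [mem_powerset] at hS
    have hd : Disjoint I S := by
      rw [disjoint_left]; intro x hx hx'
      exact (mem_compl.1 (hS hx')) (h hx)
    unfold DD
    rw [mul_sum]
    apply sum_congr rfl
    intro I' _
    rw [card_union_of_disjoint hd, pow_add]
    by_cases h1 : I ⊆ I'
    · by_cases h2 : S ⊆ I'
      · rw [if_pos h1, if_pos h2, if_pos (union_subset h1 h2)]; ring
      · rw [if_pos h1, if_neg h2, if_neg (fun h => h2 (subset_union_right.trans h)), mul_zero]
    · rw [if_neg h1, if_neg (fun h => h1 (subset_union_left.trans h)), mul_zero]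
  rw [sum_congr rfl h1, sum_comm]
  have h2 : ∀ I' : Finset ι, (∑ S ∈ (M.N v)ᶜ.powerset, if I ⊆ I' then (if S ⊆ I' then
        ((-1) ^ S.card * (∑ k ∈ S, M.ell k (M.pt v) - 1)) * ((-1) ^ I.card * ((-1) ^ I'.card *
        (((n : ℝ) + 1 - I'.card) * M.NN I'))) else 0) else 0) =
      -(if I' ∈ Icc I (M.N v) then ((-1) ^ I.card * ((-1) ^ I'.card *
        (((n : ℝ) + 1 - I'.card) * M.NN I'))) else 0) -
      ∑ k ∈ (M.N v)ᶜ, if I ⊆ I' ∧ I' ∩ (M.N v)ᶜ = {k} then M.ell k (M.pt v) *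
        ((-1) ^ I.card * ((-1) ^ I'.card * (((n : ℝ) + 1 - I'.card) * M.NN I'))) else 0 := by
    intro I'
    by_cases hI : I ⊆ I'
    · simp only [hI, true_and, mem_Icc, if_true]
      rw [← sum_filter, ← sum_mul]
      have : {a ∈ (M.N v)ᶜ.powerset | a ⊆ I'} = (I' ∩ (M.N v)ᶜ).powerset := by
        ext S; simp only [mem_filter, mem_powerset, subset_inter_iff]; tauto
      rw [this, csum]
      have e1 : (I' ∩ (M.N v)ᶜ = ∅) ↔ I' ⊆ M.N v := by
        rw [← sdiff_eq_inter_compl, sdiff_eq_empty_iff_subset]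
      simp only [e1]
      have e2 : ∑ k ∈ I' ∩ (M.N v)ᶜ, (if I' ∩ (M.N v)ᶜ = {k} then M.ell k (M.pt v) else 0) =
          ∑ k ∈ (M.N v)ᶜ, (if I' ∩ (M.N v)ᶜ = {k} then M.ell k (M.pt v) else 0) := by
        apply sum_subset inter_subset_right
        intro x _ hx
        rw [if_neg]
        intro hh; apply hx; rw [hh]; simp
      rw [e2, sub_mul, sum_mul]
      congr 1
      · split_ifs <;> simp
      · apply sum_congr rfl
        intro k _
        split_ifs <;> simp
    · simp [hI]
  rw [sum_congr rfl (fun I' _ => h2 I'), sum_sub_distrib, sum_neg_distrib]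
  rw [← sum_filter, sum_comm]
  have h3 : ∀ k ∈ (M.N v)ᶜ, (∑ I' : Finset ι, if I ⊆ I' ∧ I' ∩ (M.N v)ᶜ = {k} then M.ell k (M.pt v) *
        ((-1) ^ I.card * ((-1) ^ I'.card * (((n : ℝ) + 1 - I'.card) * M.NN I'))) else 0) =
      ∑ J ∈ Icc I (M.N v), M.ell k (M.pt v) * ((-1) ^ I.card * (-(-1) ^ J.card *
        (((n : ℝ) - J.card) * M.NN (insert k J)))) := by
    intro k hk
    rw [mem_compl] at hk
    rw [← sum_filter]
    symm
    refine sum_bij' (fun J _ => insert k J) (fun I' _ => I'.erase k) ?_ ?_ ?_ ?_ ?_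
    · intro J hJ
      simp at hJ
      simp only [mem_filter, mem_univ, true_and]
      refine ⟨hJ.1.trans (subset_insert _ _), ?_⟩
      ext x
      simp only [mem_inter, mem_insert, mem_compl, mem_singleton]
      have := @hJ.2 x
      grind
    · intro I' hI'
      simp at hI'
      rw [mem_Icc]
      constructor
      · intro x hx
        rw [mem_erase]
        refine ⟨?_, hI'.1 hx⟩
        rintro rfl; exact hk (h hx)
      · intro x hx
        rw [mem_erase] at hx
        by_contra hxn
        have : x ∈ I' ∩ (M.N v)ᶜ := by simp [hx.2, hxn]
        rw [hI'.2] at this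
        simp at this; exact hx.1 this
    · intro J hJ
      simp at hJ
      exact erase_insert (fun h => hk (hJ.2 h))
    · intro I' hI'
      simp at hI'
      apply insert_erase
      have : k ∈ I' ∩ (M.N v)ᶜ := by rw [hI'.2]; simp
      exact (mem_inter.1 this).1
    · intro J hJ
      simp at hJ
      rw [card_insert_of_notMem (fun h => hk (hJ.2 h)), pow_succ]
      push_cast
      ring
  rw [sum_congr rfl h3, sum_comm, M.mu_eq h]
  have h4 : Finset.filter (fun a => a ∈ Icc I (M.N v)) univ = Icc I (M.N v) := by ext; simp
  rw [h4, ← sum_neg_distrib, ← sum_neg_distrib, ← sum_sub_distrib]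
  apply sum_congr rfl
  intro J hJ
  simp at hJ
  have hcard := card_le_card hJ.2
  rw [M.card] at hcard
  have h5 : ((n : ℝ) - J.card) * ∑ k ∈ (M.N v)ᶜ, M.ell k (M.pt v) * M.NN (insert k J) =
      ((n : ℝ) - J.card) * M.NN J := by
    rcases eq_or_lt_of_le hcard with h | h
    · simp [h]
    · congr 1
      rw [M.NN_rec (p := M.pt v) (fun l hl => M.ell_pt (hJ.2 hl)) h]
      apply sum_subset (compl_subset_compl.2 hJ.2)
      intro x _ hx
      rw [mem_compl, not_not] at hx
      rw [M.ell_pt hx, zero_mul]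
  have h6 : ∑ k ∈ (M.N v)ᶜ, M.ell k (M.pt v) * ((-1) ^ I.card * (-(-1) ^ J.card *
        (((n : ℝ) - J.card) * M.NN (insert k J)))) = - (-1) ^ I.card * (-1) ^ J.card *
        (((n : ℝ) - J.card) * ∑ k ∈ (M.N v)ᶜ, M.ell k (M.pt v) * M.NN (insert k J)) := by
    rw [mul_sum, mul_sum]
    apply sum_congr rfl
    intro k _
    ring
  rw [h6, h5]
  ring

theorem DD_eq {v I} (h : I ⊆ M.N v) :
    M.DD I = M.mu v I + ∑ S ∈ (M.N v)ᶜ.powerset.erase ∅,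
      (∑ k ∈ S, M.ell k (M.pt v) - 1) * M.DD (I ∪ S) := by
  have h1 := M.DD_sum h
  rw [← add_sum_erase _ _ (empty_mem_powerset _), sum_empty, union_empty] at h1
  linarith

theorem DD_empty {I} (h : ∀ w, ¬ I ⊆ M.N w) : M.DD I = 0 := by
  unfold DD
  apply sum_eq_zero
  intro I' _
  split_ifs with h1
  · rw [M.NN_empty I' (fun w hw => h w (h1.trans hw))]; simp
  · rfl

theorem mu_nonneg {v I} (h : I ⊆ M.N v) : 0 ≤ M.mu v I := by
  apply M.X_nonneg
  rw [List.length_map, length_toList, card_sdiff_of_subset h, M.card]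
  have := card_le_card h; rw [M.card] at this; omega

theorem DD_nonneg (d : ℕ) : ∀ I : Finset ι, n + 1 - I.card ≤ d → 0 ≤ M.DD I := by
  induction d with
  | zero =>
    intro I hI
    rw [M.DD_empty]
    intro w hw
    have := card_le_card hw; rw [M.card] at this; omega
  | succ d ih =>
    intro I hI
    by_cases h : ∃ w, I ⊆ M.N w
    · obtain ⟨v, hv⟩ := h
      rw [M.DD_eq hv]
      apply add_nonneg (M.mu_nonneg hv)
      apply sum_nonneg
      intro S hS
      rw [mem_erase, mem_powerset, ← nonempty_iff_ne_empty] at hS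
      obtain ⟨k, hk⟩ := hS.1
      apply mul_nonneg
      · have : M.ell k (M.pt v) ≤ ∑ k ∈ S, M.ell k (M.pt v) :=
          single_le_sum (f := fun k => M.ell k (M.pt v)) (fun i _ => M.nonneg v i) hk
        have h2 := M.ell_pt_one (mem_compl.1 (hS.2 hk))
        linarith
      · apply ih
        have : I ⊂ I ∪ S := by
          rw [ssubset_iff_of_subset subset_union_left]
          exact ⟨k, mem_union_right _ hk, fun h => (mem_compl.1 (hS.2 hk)) (hv h)⟩
        have := card_lt_card this
        have := card_le_card hv; rw [M.card] at this; omega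
    · push Not at h
      rw [M.DD_empty h]

theorem mu_zero_of_DD {v : ω} (h : M.DD ∅ = 0) : M.mu v ∅ = 0 := by
  apply le_antisymm _ (M.mu_nonneg (empty_subset _))
  rw [← h, M.DD_eq (empty_subset (M.N v))]
  rw [le_add_iff_nonneg_right]
  apply sum_nonneg
  intro S hS
  rw [mem_erase, mem_powerset, ← nonempty_iff_ne_empty] at hS
  obtain ⟨k, hk⟩ := hS.1
  apply mul_nonneg
  · have : M.ell k (M.pt v) ≤ ∑ k ∈ S, M.ell k (M.pt v) :=
      single_le_sum (f := fun k => M.ell k (M.pt v)) (fun i _ => M.nonneg v i) hk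
    have h2 := M.ell_pt_one (mem_compl.1 (hS.2 hk))
    linarith
  · exact M.DD_nonneg _ _ le_rfl

end Mdl
end Smooth8
end

section
namespace Smooth8
open Finset
namespace Mdl
variable {n : ℕ} {ι ω E : Type} [Fintype ι] [DecidableEq ι] [Fintype ω]
    [AddCommGroup E] [Module ℝ E] (M : Mdl n ι ω E)

theorem miss {C : Finset ι} (hC : ∀ p, ∑ c ∈ C, M.ell c p = 1) (w) :
    ∃ c ∈ C, c ∉ M.N w ∧ M.ell c (M.pt w) = 1 ∧ ∀ c' ∈ C, c' ≠ c → c' ∈ M.N w := by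
  have h := hC (M.pt w)
  have h1 : ∃ c ∈ C, c ∉ M.N w := by
    by_contra! hh
    rw [sum_eq_zero (fun c hc => M.ell_pt (hh c hc))] at h
    simp at h
  obtain ⟨c, hc, hcw⟩ := h1
  have h2 := M.ell_pt_one hcw
  rw [← add_sum_erase _ _ hc] at h
  have h3 : ∀ c' ∈ C.erase c, 0 ≤ M.ell c' (M.pt w) := fun c' _ => M.nonneg w c'
  have h4 := sum_nonneg h3
  have h5 : ∑ x ∈ C.erase c, M.ell x (M.pt w) = 0 := by linarith
  refine ⟨c, hc, hcw, by linarith, ?_⟩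
  intro c' hc' hne
  rw [M.mem]
  exact (sum_eq_zero_iff_of_nonneg h3).1 h5 c' (mem_erase.2 ⟨hne, hc'⟩)

/-- Along an edge: the data of the far end. -/
theorem edge {v i} (hi : i ∈ M.N v) : ∃ (w : ω) (c : ℝ) (g : ι), 1 ≤ c ∧ (∃ z : ℤ, c = z) ∧
    M.pt w = M.pt v + c • M.e v i ∧ g ∉ M.N v ∧ M.N w = insert g ((M.N v).erase i) ∧
    M.u g (M.e v i) = -1 ∧ M.ell g (M.pt v) = c ∧ M.e w g = - M.e v i ∧
    ∀ k ∈ M.N v, k ≠ i → M.e w k = M.e v k + M.u g (M.e v k) • M.e v i := by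
  obtain ⟨w, c, hc, hpt, -, he⟩ := M.adj v i hi
  have hsub : (M.N v).erase i ⊆ M.N w := by
    intro l hl
    rw [mem_erase] at hl
    rw [M.mem, hpt, ell_add, map_smul, M.dual' hi hl.2, M.ell_pt hl.2, if_neg hl.1]
    simp
  have hiw : M.ell i (M.pt w) = c := by
    rw [hpt, ell_add, map_smul, M.dual' hi hi, M.ell_pt hi]; simp
  have hiw' : i ∉ M.N w := by rw [M.mem, hiw]; linarith
  have hcard : (M.N w \ (M.N v).erase i).card = 1 := by
    rw [card_sdiff_of_subset hsub, M.card, card_erase_of_mem hi, M.card]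
    have : 0 < (M.N v).card := card_pos.2 ⟨i, hi⟩
    rw [M.card] at this; omega
  obtain ⟨g, hg⟩ := card_eq_one.1 hcard
  have hgm : g ∈ M.N w \ (M.N v).erase i := by rw [hg]; simp
  rw [mem_sdiff, mem_erase] at hgm
  have hgv : g ∉ M.N v := by
    intro h
    by_cases hgi : g = i
    · rw [hgi] at hgm; exact hiw' hgm.1
    · exact hgm.2 ⟨hgi, h⟩
  have hN : M.N w = insert g ((M.N v).erase i) := by
    rw [insert_eq, ← hg, union_comm, union_sdiff_of_subset hsub]
  have heg := he g hgm.1 hgv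
  have hug : M.u g (M.e v i) = -1 := by
    have := M.dual' hgm.1 hgm.1
    rw [heg, map_neg] at this
    simp at this; linarith
  refine ⟨w, c, g, hc, ?_, hpt, hgv, hN, hug, ?_, heg, ?_⟩
  · obtain ⟨z, hz⟩ := M.int w i
    exact ⟨z, by rw [← hz, hiw]⟩
  · have := M.ell_pt hgm.1
    rw [hpt, ell_add, map_smul, hug] at this
    simp at this; linarith
  · intro k hk hki
    have hkw : k ∈ M.N w := hsub (mem_erase.2 ⟨hki, hk⟩)
    have h1 := M.span' v (M.e w k)
    rw [← add_sum_erase _ _ hi] at h1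
    have h2 : ∑ x ∈ (M.N v).erase i, M.u x (M.e w k) • M.e v x = M.e v k := by
      rw [sum_eq_single_of_mem k (mem_erase.2 ⟨hki, hk⟩)]
      · rw [M.dual' hkw hkw]; simp
      · intro l hl hlk
        rw [M.dual' hkw (hsub hl), if_neg hlk, zero_smul]
    rw [h2] at h1
    have h3 : M.u g (M.e w k) = 0 := by
      rw [M.dual' hkw hgm.1, if_neg]
      rintro rfl; exact hgv hk
    have h4 : M.u i (M.e w k) = M.u g (M.e v k) := by
      rw [h1, map_add, map_smul, hug, smul_eq_mul] at h3
      linarith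
    rw [h4, add_comm] at h1
    exact h1

theorem claimZ {C : Finset ι} (hC : ∀ p, ∑ c ∈ C, M.ell c p = 1) (m : ℕ) :
    ∀ (J : List (Option ι)) (I : Finset ι), J.length = m → J.length + I.card = n →
    (∃ w, I ⊆ M.N w) → n + 1 < (I ∪ C).card + J.countP (fun j => decide (∃ c ∈ C \ I, j = some c)) →
    M.X I J = 0 := by
  induction m with
  | zero =>
    intro J I hJ hn hw hlt
    have : J = [] := List.eq_nil_of_length_eq_zero hJ
    subst this
    obtain ⟨w, hw⟩ := hw
    simp at hlt hn
    obtain ⟨c, hc, -, -, hc'⟩ := M.miss hC w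
    have : I ∪ C ⊆ insert c (M.N w) := by
      intro x hx
      rw [mem_insert]
      rcases mem_union.1 hx with h | h
      · exact Or.inr (hw h)
      · by_cases hxc : x = c
        · exact Or.inl hxc
        · exact Or.inr (hc' x h hxc)
    have h1 := card_le_card this
    have h2 := card_insert_le c (M.N w)
    rw [M.card] at h2
    omega
  | succ m ih =>
    intro J I hJ hn hw hlt
    obtain ⟨w, hw⟩ := hw
    have hle : (I ∪ C).card ≤ n + 1 := by
      obtain ⟨c, hc, -, -, hc'⟩ := M.miss hC w
      have : I ∪ C ⊆ insert c (M.N w) := by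
        intro x hx
        rw [mem_insert]
        rcases mem_union.1 hx with h | h
        · exact Or.inr (hw h)
        · by_cases hxc : x = c
          · exact Or.inl hxc
          · exact Or.inr (hc' x h hxc)
      have h1 := card_le_card this
      have h2 := card_insert_le c (M.N w)
      rw [M.card] at h2
      omega
    have hpos : 0 < J.countP (fun j => decide (∃ c ∈ C \ I, j = some c)) := by omega
    rw [List.countP_pos_iff] at hpos
    obtain ⟨j, hj, hjc⟩ := hpos
    rw [decide_eq_true_eq] at hjc
    obtain ⟨c, hc, rfl⟩ := hjc
    have hperm := List.perm_cons_erase hj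
    rw [M.X_perm I hperm]
    rw [hperm.countP_eq, List.countP_cons_of_pos (by simpa using hc)] at hlt
    rw [hperm.length_eq, List.length_cons] at hJ hn
    set J' := J.erase (some c)
    rw [mem_sdiff] at hc
    have hx : ∃ x, I ⊆ M.N x ∧ c ∉ M.N x := by
      by_cases hcw : c ∈ M.N w
      · obtain ⟨x, d, g, -, -, -, hg, hN, -⟩ := M.edge hcw
        refine ⟨x, ?_, ?_⟩
        · rw [hN]
          intro y hy
          rw [mem_insert, mem_erase]
          exact Or.inr ⟨fun h => hc.2 (h ▸ hy), hw hy⟩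
        · rw [hN, mem_insert, mem_erase]
          rintro (h | h)
          · subst h; exact hg hcw
          · exact h.1 rfl
      · exact ⟨w, hw, hcw⟩
    obtain ⟨x, hxI, hxc⟩ := hx
    obtain ⟨c0, hc0, hc0x, hone, hall⟩ := M.miss hC x
    have hcc : c = c0 := by
      by_contra h; exact hxc (hall c hc.1 h)
    subst hcc
    rw [M.X_cons (p := M.pt x) _ _ (by omega)]
    · apply sum_eq_zero
      intro k hk
      rw [mem_compl] at hk
      by_cases hkC : k ∈ C
      · have : M.ell k (M.pt x) - del k (some c) = 0 := by
          unfold del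
          by_cases hkc : c = k
          · subst hkc; simp [hone]
          · rw [if_neg (by simpa using hkc), M.ell_pt (hall k hkC (Ne.symm hkc))]; simp
        rw [this, zero_mul]
      · by_cases hw' : ∃ w, insert k I ⊆ M.N w
        · rw [ih J' (insert k I) (by omega) (by rw [card_insert_of_notMem hk]; omega) hw', mul_zero]
          rw [insert_union, card_insert_of_notMem (by simp [hk, hkC])]
          have : C \ insert k I = C \ I := by
            ext y
            simp only [mem_sdiff, mem_insert]
            by_cases hyk : y = k
            · subst hyk; simp [hkC]
            · simp [hyk]
          rw [this]
          omega
        · push Not at hw'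
          rw [M.X_empty _ _ hw', mul_zero]
    · intro l hl
      rw [M.ell_pt (hxI hl), del, if_neg]
      intro h
      simp at h
      subst h; exact hc.2 hl

theorem DD_zero {C : Finset ι} (hC : ∀ p, ∑ c ∈ C, M.ell c p = 1) (d : ℕ) :
    ∀ I : Finset ι, n + 1 - I.card ≤ d → n + 2 < (I ∪ C).card + (C \ I).card → M.DD I = 0 := by
  induction d with
  | zero =>
    intro I hI _
    rw [M.DD_empty]
    intro w hw
    have := card_le_card hw; rw [M.card] at this; omega
  | succ d ih =>
    intro I hI hlt
    by_cases h : ∃ w, I ⊆ M.N w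
    · obtain ⟨v, hv⟩ := h
      obtain ⟨c0, hc0, hc0v, hone, hall⟩ := M.miss hC v
      have hcard := card_le_card hv
      rw [M.card] at hcard
      rw [M.DD_eq hv]
      have hmu : M.mu v I = 0 := by
        unfold mu
        apply M.claimZ hC _ _ _ rfl _ ⟨v, hv⟩
        · rw [List.countP_map]
          have h1 : List.countP ((fun j => decide (∃ c ∈ C \ I, j = some c)) ∘ some)
              (M.N v \ I).toList = ((C \ I).erase c0).card := by
            rw [List.countP_eq_length_filter, ← List.toFinset_card_of_nodup
              ((nodup_toList _).filter _)]
            congr 1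
            ext x
            simp only [List.mem_toFinset, List.mem_filter, mem_toList, mem_sdiff, Function.comp,
              decide_eq_true_eq, Option.some.injEq, mem_erase]
            constructor
            · rintro ⟨⟨hx, hxI⟩, c, ⟨hc, _⟩, rfl⟩
              refine ⟨?_, hc, hxI⟩
              rintro rfl; exact hc0v hx
            · rintro ⟨hx, hxC, hxI⟩
              exact ⟨⟨hall x hxC hx, hxI⟩, x, ⟨hxC, hxI⟩, rfl⟩
          rw [h1, card_erase_of_mem (mem_sdiff.2 ⟨hc0, fun h => hc0v (hv h)⟩)]
          omega
        · rw [List.length_map, length_toList, card_sdiff_of_subset hv, M.card]; omega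
      rw [hmu, zero_add]
      apply sum_eq_zero
      intro S hS
      rw [mem_erase, mem_powerset, ← nonempty_iff_ne_empty] at hS
      obtain ⟨k, hk⟩ := hS.1
      by_cases hSc : S = {c0}
      · subst hSc; simp [hone]
      · rw [ih (I ∪ S), mul_zero]
        · have : I ⊂ I ∪ S := by
            rw [ssubset_iff_of_subset subset_union_left]
            exact ⟨k, mem_union_right _ hk, fun h => (mem_compl.1 (hS.2 hk)) (hv h)⟩
          have := card_lt_card this
          omega
        · have hdis : Disjoint (I ∪ C) (S.erase c0) := by
            rw [disjoint_left]
            intro x hx hx'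
            rw [mem_erase] at hx'
            have hxv := mem_compl.1 (hS.2 hx'.2)
            rcases mem_union.1 hx with h | h
            · exact hxv (hv h)
            · exact hxv (hall x h hx'.1)
          have h1 : (I ∪ C) ∪ S.erase c0 ⊆ (I ∪ S) ∪ C := by
            intro x; simp only [mem_union, mem_erase]; tauto
          have h2 := card_le_card h1
          rw [card_union_of_disjoint hdis] at h2
          by_cases hcS : c0 ∈ S
          · have h3 : (C \ I).erase c0 ⊆ C \ (I ∪ S) := by
              intro x
              simp only [mem_sdiff, mem_erase, mem_union]
              rintro ⟨hx, hxC, hxI⟩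
              refine ⟨hxC, ?_⟩
              rintro (h | h)
              · exact hxI h
              · exact mem_compl.1 (hS.2 h) (hall x hxC hx)
            have h4 := card_le_card h3
            rw [card_erase_of_mem (mem_sdiff.2 ⟨hc0, fun h => hc0v (hv h)⟩)] at h4
            have h5 : 0 < (S.erase c0).card := by
              rw [card_pos]
              by_contra hne
              rw [not_nonempty_iff_eq_empty, erase_eq_empty_iff] at hne
              rcases hne with h | h
              · rw [h] at hk; simp at hk
              · exact hSc h
            omega
          · have h3 : C \ I ⊆ C \ (I ∪ S) := by
              intro x
              simp only [mem_sdiff, mem_union]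
              rintro ⟨hxC, hxI⟩
              refine ⟨hxC, ?_⟩
              rintro (h | h)
              · exact hxI h
              · have hx : x ≠ c0 := fun hh => hcS (hh ▸ h)
                exact mem_compl.1 (hS.2 h) (hall x hxC hx)
            have h4 := card_le_card h3
            have h5 : 0 < (S.erase c0).card := by
              rw [erase_eq_of_notMem hcS]; exact card_pos.2 hS.1
            omega
    · push Not at h
      rw [M.DD_empty h]

theorem DD_of_cayley {C : Finset ι} (hC : ∀ p, ∑ c ∈ C, M.ell c p = 1) (h : n + 2 < 2 * C.card) :
    M.DD ∅ = 0 := by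
  apply M.DD_zero hC _ _ le_rfl
  simp; omega

/-- Membership in the polytope. -/
def inP (p : E) : Prop := ∀ l, 0 ≤ M.ell l p

theorem inP_conv {p q : E} (hp : M.inP p) (hq : M.inP q) {a b : ℝ} (ha : 0 ≤ a) (hb : 0 ≤ b)
    (hab : a + b = 1) : M.inP (a • p + b • q) := by
  intro l
  rw [M.ell_conv l p q a b hab]
  have := hp l
  have := hq l
  positivity

theorem inP_line {p d : E} {s t : ℝ} (hp : M.inP p) (hq : M.inP (p + t • d)) (hs : 0 ≤ s)
    (hst : s ≤ t) : M.inP (p + s • d) := by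
  rcases eq_or_lt_of_le hs with h | h
  · rw [← h]; simpa using hp
  · have ht : 0 < t := by linarith
    have := M.inP_conv hp hq (a := 1 - s / t) (b := s / t)
      (by rw [sub_nonneg, div_le_one ht]; exact hst) (by positivity) (by ring)
    have h2 : (1 - s / t) • p + (s / t) • (p + t • d) = p + s • d := by
      have : s = (s / t) * t := by field_simp
      conv_rhs => rw [this]
      module
    rwa [h2] at this

theorem inP_pt (w) : M.inP (M.pt w) := fun l => M.nonneg w l
theorem inP_e {w k} (hk : k ∈ M.N w) : M.inP (M.pt w + M.e w k) := M.pt_e_nonneg w k hk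

end Mdl
end Smooth8
end

section
namespace Smooth8
open Finset
namespace Mdl
variable {n : ℕ} {ι ω E : Type} [Fintype ι] [DecidableEq ι] [Fintype ω]
    [AddCommGroup E] [Module ℝ E] (M : Mdl n ι ω E)

/-- The two-step relation at a vertex. -/
def AA (v : ω) (i k : ι) : Prop := M.inP (M.pt v + M.e v i + M.e v k)

theorem AA_symm {v i k} (h : M.AA v i k) : M.AA v k i := by
  unfold AA at *; rwa [add_right_comm]

theorem pos_list (v : ω) (L : List (ι × ι)) : ∀ I : Finset ι, I ⊆ M.N v → L.length + I.card = n →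
    (L.map Prod.snd).Nodup → (∀ x ∈ L, x.1 ∈ M.N v ∧ x.2 ∈ M.N v ∧ x.2 ∉ I ∧ M.AA v x.1 x.2) →
    0 < M.X I (L.map (fun x => some x.1)) := by
  induction L with
  | nil =>
    intro I hI hc _ _
    simp at hc
    rw [eq_of_subset_of_card_le hI (by rw [M.card, hc])]
    simp [M.X_nil_one]
  | cons x L ih =>
    obtain ⟨i, k⟩ := x
    intro I hI hc hnd hL
    obtain ⟨hi, hk, hkI, hA⟩ := hL (i, k) (by simp)
    simp only at hi hk hkI hA
    simp only [List.map_cons, List.nodup_cons, List.length_cons] at hnd hc ⊢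
    have hval : ∀ l ∈ M.N v, M.ell l (M.pt v + M.e v i + M.e v k) =
        (if l = i then 1 else 0) + if l = k then 1 else 0 := by
      intro l hl
      rw [ell_add, ell_add, M.ell_pt hl, M.dual' hi hl, M.dual' hk hl, zero_add]
    have hdel : ∀ l, del l (some i) = if l = i then 1 else 0 := by
      intro l; unfold del; simp [eq_comm]
    apply M.X_pos_step (p := M.pt v + M.e v i + M.e v k) (k := k)
    · intro l hl
      rw [hval l (hI hl), hdel, if_neg (fun h => hkI (h ▸ hl)) (c := l = k), add_zero]
    · intro l
      rw [hdel]
      by_cases hl : l ∈ M.N v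
      · rw [hval l hl]
        have : (0 : ℝ) ≤ if l = k then 1 else 0 := by positivity
        linarith
      · rw [if_neg (fun h : l = i => hl (h ▸ hi))]
        exact hA l
    · exact hkI
    · rw [hdel, hval k hk]; simp
    · rw [List.length_map]; omega
    · apply ih
      · exact insert_subset hk hI
      · rw [card_insert_of_notMem hkI]; omega
      · exact hnd.2
      · intro x hx
        obtain ⟨h1, h2, h3, h4⟩ := hL x (List.mem_cons_of_mem _ hx)
        refine ⟨h1, h2, ?_, h4⟩
        rw [mem_insert, not_or]
        refine ⟨?_, h3⟩
        intro h
        exact hnd.1 (h ▸ List.mem_map_of_mem hx)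

theorem pos_loops (v : ω) (j : ι) (hj : j ∈ M.N v) (J : List (Option ι)) (L : List ι) :
    ∀ I : Finset ι, I ⊆ M.N v → L.length + J.length + I.card = n →
    L.Nodup → j ∉ I → (∀ i ∈ L, i ∈ M.N v ∧ i ∉ I ∧ j ≠ i ∧
      M.inP (M.pt v + M.e v j + (2 : ℝ) • M.e v i)) →
    0 < M.X (I ∪ L.toFinset) J →
    0 < M.X I (L.map some ++ J) := by
  induction L with
  | nil =>
    intro I hI hc _ _ _ h
    simpa using h
  | cons i L ih =>
    intro I hI hc hnd hjI hL hX
    obtain ⟨hi, hiI, hji, hA⟩ := hL i (by simp)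
    simp only [List.map_cons, List.nodup_cons, List.length_cons, List.cons_append] at hnd hc ⊢
    have hval : ∀ l ∈ M.N v, M.ell l (M.pt v + M.e v j + (2 : ℝ) • M.e v i) =
        (if l = j then 1 else 0) + 2 * if l = i then 1 else 0 := by
      intro l hl
      rw [ell_add, ell_add, map_smul, M.ell_pt hl, M.dual' hi hl, M.dual' hj hl, zero_add,
        smul_eq_mul]
    have hdel : ∀ l, del l (some i) = if l = i then 1 else 0 := by
      intro l; unfold del; simp [eq_comm]
    apply M.X_pos_step (p := M.pt v + M.e v j + (2 : ℝ) • M.e v i) (k := i)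
    · intro l hl
      rw [hval l (hI hl), hdel, if_neg (fun h => hiI (h ▸ hl)) (c := l = i),
        if_neg (fun h : l = j => hjI (h ▸ hl))]
      simp
    · intro l
      rw [hdel]
      by_cases hl : l ∈ M.N v
      · rw [hval l hl]
        split_ifs <;> norm_num
      · rw [if_neg (fun h : l = i => hl (h ▸ hi))]
        exact hA l
    · exact hiI
    · rw [hdel, hval i hi, if_pos rfl]; split_ifs <;> norm_num
    · rw [List.length_append, List.length_map]; omega
    · apply ih
      · exact insert_subset hi hI
      · rw [card_insert_of_notMem hiI]; omega
      · exact hnd.2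
      · rw [mem_insert]; tauto
      · intro x hx
        obtain ⟨h1, h2, h3, h4⟩ := hL x (List.mem_cons_of_mem _ hx)
        refine ⟨h1, ?_, h3, h4⟩
        rw [mem_insert, not_or]
        refine ⟨?_, h2⟩
        rintro rfl
        exact hnd.1 hx
      · convert hX using 2
        ext x; simp

/-- Edge data at a vertex, in functional form. -/
structure ED (v : ω) (W : ι → ω) (c : ι → ℝ) (g : ι → ι) : Prop where
  one : ∀ i ∈ M.N v, 1 ≤ c i
  intc : ∀ i ∈ M.N v, ∃ z : ℤ, c i = z
  pt : ∀ i ∈ M.N v, M.pt (W i) = M.pt v + c i • M.e v i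
  gn : ∀ i ∈ M.N v, g i ∉ M.N v
  N : ∀ i ∈ M.N v, M.N (W i) = insert (g i) ((M.N v).erase i)
  ug : ∀ i ∈ M.N v, M.u (g i) (M.e v i) = -1
  lg : ∀ i ∈ M.N v, M.ell (g i) (M.pt v) = c i
  e : ∀ i ∈ M.N v, ∀ k ∈ M.N v, k ≠ i →
    M.e (W i) k = M.e v k + M.u (g i) (M.e v k) • M.e v i

theorem exists_ED (v : ω) : ∃ W c g, M.ED v W c g := by
  by_cases hne : (M.N v).Nonempty
  · obtain ⟨i0, hi0⟩ := hne
    have : Nonempty ι := ⟨i0⟩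
    have : Nonempty ω := ⟨v⟩
    have h := fun i (hi : i ∈ M.N v) => M.edge hi
    choose! W c g h1 h2 h3 h4 h5 h6 h7 h8 h9 using h
    exact ⟨W, c, g, h1, h2, h3, h4, h5, h6, h7, h9⟩
  · rw [not_nonempty_iff_eq_empty] at hne
    exact ⟨fun _ => v, fun _ => 0, fun i => i, by simp [hne], by simp [hne], by simp [hne],
      by simp [hne], by simp [hne], by simp [hne], by simp [hne], by simp [hne]⟩

theorem ED.half {v W c g} (D : M.ED v W c g) {i k} (hi : i ∈ M.N v) (hk : k ∈ M.N v)
    (hik : k ≠ i) (hA : ¬ M.AA v i k) : M.u (g i) (M.e v k) = - c i ∧ c k = 1 := by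
  have hkw : k ∈ M.N (W i) := by rw [D.N i hi, mem_insert, mem_erase]; exact Or.inr ⟨hik, hk⟩
  have h1 := M.inP_e hkw
  rw [D.pt i hi, D.e i hi k hk hik] at h1
  have h2 := M.inP_e hk
  have h3 : M.pt v + c i • M.e v i + (M.e v k + M.u (g i) (M.e v k) • M.e v i) =
    M.pt v + M.e v k + (c i + M.u (g i) (M.e v k)) • M.e v i := by module
  rw [h3] at h1
  have h4 := h2 (g i)
  rw [ell_add, D.lg i hi] at h4
  have h5 : ¬ 1 ≤ c i + M.u (g i) (M.e v k) := by
    intro h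
    apply hA
    have := M.inP_line h2 h1 zero_le_one h
    rw [one_smul] at this
    unfold AA
    rwa [add_right_comm]
  obtain ⟨z, hz⟩ := D.intc i hi
  obtain ⟨z', hz'⟩ := M.inte v k (g i) hk
  have hz'' : M.u (g i) (M.e v k) = z' := hz'
  have h6 : M.u (g i) (M.e v k) = - c i := by
    rw [hz, hz''] at h4 h5 ⊢
    have h4' : 0 ≤ z + z' := by exact_mod_cast h4
    have h5' : ¬ 1 ≤ z + z' := by exact_mod_cast h5
    have : z' = -z := by omega
    rw [this]; push_cast; rfl
  refine ⟨h6, ?_⟩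
  have h7 := M.nonneg (W k) (g i)
  rw [D.pt k hk, ell_add, map_smul, h6, D.lg i hi, smul_eq_mul] at h7
  have h8 := D.one k hk
  have h9 := D.one i hi
  nlinarith

theorem ED.notA {v W c g} (D : M.ED v W c g) {i k} (hi : i ∈ M.N v) (hk : k ∈ M.N v)
    (hA : ¬ M.AA v i k) : c i = 1 ∧ c k = 1 ∧ g i = g k ∧ M.u (g i) (M.e v k) = - 1 := by
  by_cases hik : k = i
  · subst hik
    have : c k = 1 := by
      by_contra h
      apply hA
      obtain ⟨z, hz⟩ := D.intc k hk
      have h1 := D.one k hk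
      have h2 : 2 ≤ c k := by
        rw [hz] at h h1 ⊢
        have h' : z ≠ 1 := by exact_mod_cast h
        have h1' : 1 ≤ z := by exact_mod_cast h1
        have : 2 ≤ z := by omega
        exact_mod_cast this
      have h3 := M.inP_pt (W k)
      rw [D.pt k hk] at h3
      have := M.inP_line (M.inP_pt v) h3 zero_le_two h2
      unfold AA
      convert this using 1
      module
    exact ⟨this, this, rfl, D.ug k hk⟩
  · obtain ⟨h1, h2⟩ := D.half M hi hk hik hA
    obtain ⟨h3, h4⟩ := D.half M hk hi (Ne.symm hik) (fun h => hA (M.AA_symm h))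
    refine ⟨h4, h2, ?_, by rw [h1, h4]⟩
    have : g i ∈ M.N (W k) := by
      rw [M.mem, D.pt k hk, ell_add, map_smul, h1, h2, h4, D.lg i hi, h4]; norm_num
    rw [D.N k hk, mem_insert] at this
    rcases this with h | h
    · exact h
    · exact absurd (mem_of_mem_erase h) (D.gn i hi)

theorem cayley_of_mu {v : ω} (hmu : M.mu v ∅ = 0) :
    ∃ C : Finset ι, (∀ p, ∑ c ∈ C, M.ell c p = 1) ∧ n + 2 < 2 * C.card := by
  classical
  unfold mu at hmu
  rw [sdiff_empty] at hmu
  obtain ⟨W, c, g, D⟩ := M.exists_ED v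
  by_cases hHall : ∀ s : Finset (M.N v), s.card ≤
      (s.biUnion (fun i => (M.N v).filter (fun k => M.AA v i.1 k))).card
  · exfalso
    rw [all_card_le_biUnion_card_iff_exists_injective] at hHall
    obtain ⟨f, hf, hfA⟩ := hHall
    have h := M.pos_list v ((univ : Finset (M.N v)).toList.map (fun i => (i.1, f i))) ∅
      (empty_subset _) (by simp [M.card])
      (by
        rw [List.map_map]
        exact (nodup_toList _).map hf)
      (by
        intro x hx
        rw [List.mem_map] at hx
        obtain ⟨i, -, rfl⟩ := hx
        have := hfA i
        rw [mem_filter] at this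
        exact ⟨i.2, this.1, by simp, this.2⟩)
    have hperm : (((univ : Finset (M.N v)).toList.map (fun i => (i.1, f i))).map
        (fun x => some x.1)).Perm ((M.N v).toList.map some) := by
      rw [List.map_map]
      have : ((fun x : ι × ι => some x.1) ∘ fun i : M.N v => (i.1, f i)) = some ∘ Subtype.val := rfl
      rw [this, ← List.map_map]
      apply List.Perm.map
      rw [List.perm_ext_iff_of_nodup ((nodup_toList _).map Subtype.val_injective) (nodup_toList _)]
      intro a
      simp
    rw [M.X_perm _ hperm, hmu] at h
    exact lt_irrefl _ h
  · push Not at hHall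
    obtain ⟨s, hs⟩ := hHall
    set U := s.biUnion (fun i => (M.N v).filter (fun k => M.AA v i.1 k)) with hU
    have hUsub : U ⊆ M.N v := by
      intro x hx
      rw [hU, mem_biUnion] at hx
      obtain ⟨i, -, hx⟩ := hx
      exact (mem_filter.1 hx).1
    have hscard : s.card ≤ (M.N v).card := by
      have := card_le_univ s
      simpa using this
    obtain ⟨k0, hk0, hk0U⟩ : ∃ k0 ∈ M.N v, k0 ∉ U := by
      by_contra! h
      have := card_le_card (show M.N v ⊆ U from h)
      omega
    have hnA : ∀ i ∈ s, ¬ M.AA v i.1 k0 := by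
      intro i hi hA
      apply hk0U
      rw [hU, mem_biUnion]
      exact ⟨i, hi, mem_filter.2 ⟨hk0, hA⟩⟩
    obtain ⟨i0, hi0⟩ : s.Nonempty := by rw [← card_pos]; omega
    obtain ⟨hci0, hck0, hgi0, hui0⟩ := D.notA M i0.2 hk0 (hnA i0 hi0)
    set γ := g k0 with hγ
    have hγ1 : M.ell γ (M.pt v) = 1 := by rw [hγ, D.lg k0 hk0, hck0]
    set C := (M.N v).filter (fun k => M.u γ (M.e v k) = -1) with hC
    have hsC : ∀ i ∈ s, i.1 ∈ C := by
      intro i hi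
      obtain ⟨h1, h2, h3, h4⟩ := D.notA M i.2 hk0 (hnA i hi)
      rw [hC, mem_filter, hγ, ← h3]
      exact ⟨i.2, D.ug _ i.2⟩
    have hCn : ∀ i ∈ C, ∀ k ∈ C, ¬ M.AA v i k := by
      intro i hi k hk hA
      have := hA γ
      rw [ell_add, ell_add, hγ1, (mem_filter.1 hi).2, (mem_filter.1 hk).2] at this
      norm_num at this
    have hCN : C ⊆ M.N v := filter_subset _ _
    have hgC : ∀ i ∈ C, c i = 1 ∧ g i = γ := by
      intro i hi
      obtain ⟨h1, h2, h3, h4⟩ := D.notA M i0.2 (hCN hi) (hCn _ (hsC _ hi0) _ hi)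
      exact ⟨h2, by rw [← h3, hgi0]⟩
    have hAC : ∀ i ∈ C, ∀ j ∈ M.N v \ C, M.AA v i j := by
      intro i hi j hj
      rw [mem_sdiff] at hj
      by_contra hA
      obtain ⟨h1, h2, h3, h4⟩ := D.notA M (hCN hi) hj.1 hA
      apply hj.2
      rw [hC, mem_filter]
      refine ⟨hj.1, ?_⟩
      rw [(hgC i hi).2] at h4
      exact h4
    have hsub : M.N v \ C ⊆ U := by
      intro j hj
      rw [hU, mem_biUnion]
      exact ⟨i0, hi0, mem_filter.2 ⟨(mem_sdiff.1 hj).1, hAC _ (hsC _ hi0) j hj⟩⟩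
    have hcard : (M.N v \ C).card < C.card := by
      have h1 := card_le_card hsub
      have h2 : s.card ≤ C.card := by
        rw [← card_image_of_injective s Subtype.val_injective]
        apply card_le_card
        intro x hx
        rw [mem_image] at hx
        obtain ⟨i, hi, rfl⟩ := hx
        exact hsC i hi
      omega
    have hu0 : ∀ j ∈ M.N v \ C, 0 ≤ M.u γ (M.e v j) ∧ (M.u γ (M.e v j) = 0 ∨ 1 ≤ M.u γ (M.e v j)) := by
      intro j hj
      rw [mem_sdiff] at hj
      obtain ⟨z, hz⟩ := M.inte v j γ hj.1
      have hz' : M.u γ (M.e v j) = z := hz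
      have h1 := M.inP_e hj.1 γ
      rw [ell_add, hγ1] at h1
      have h2 : M.u γ (M.e v j) ≠ -1 := fun h => hj.2 (mem_filter.2 ⟨hj.1, h⟩)
      rw [hz'] at h1 h2 ⊢
      have h1' : 0 ≤ 1 + z := by exact_mod_cast h1
      have h2' : z ≠ -1 := by exact_mod_cast h2
      constructor
      · have : 0 ≤ z := by omega
        exact_mod_cast this
      · rcases (show z = 0 ∨ 1 ≤ z by omega) with h | h
        · left; exact_mod_cast h
        · right; exact_mod_cast h
    have huz : ∀ j ∈ M.N v \ C, M.u γ (M.e v j) = 0 := by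
      intro j hj
      by_contra hne
      have hj1 : 1 ≤ M.u γ (M.e v j) := by
        rcases (hu0 j hj).2 with h | h
        · exact absurd h hne
        · exact h
      obtain ⟨C1, hC1, hC1c⟩ := exists_subset_card_eq (le_of_lt hcard)
      set B := M.N v \ C with hB
      have hjN := (mem_sdiff.1 hj).1
      have hloop : ∀ i ∈ C, M.inP (M.pt v + M.e v j + (2 : ℝ) • M.e v i) := by
        intro i hi
        have hji : j ≠ i := by rintro rfl; exact (mem_sdiff.1 hj).2 hi
        have hjw : j ∈ M.N (W i) := by
          rw [D.N i (hCN hi), mem_insert, mem_erase]; exact Or.inr ⟨hji, hjN⟩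
        have h1 := M.inP_e hjw
        rw [D.pt i (hCN hi), D.e i (hCN hi) j hjN hji, (hgC i hi).1, (hgC i hi).2] at h1
        have h3 : M.pt v + (1 : ℝ) • M.e v i + (M.e v j + M.u γ (M.e v j) • M.e v i) =
          M.pt v + M.e v j + (1 + M.u γ (M.e v j)) • M.e v i := by module
        rw [h3] at h1
        exact M.inP_line (M.inP_e hjN) h1 zero_le_two (by linarith)
      have hlen : C1.toList.length = B.toList.length := by simp [hC1c]
      set L := C1.toList.zip B.toList ++ B.toList.zip C1.toList with hL
      have hfst : L.map (fun x => some x.1) = (C1.toList ++ B.toList).map some := by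
        have : (fun x : ι × ι => some x.1) = some ∘ Prod.fst := rfl
        rw [this, ← List.map_map, hL, List.map_append, List.map_fst_zip hlen.le,
          List.map_fst_zip hlen.ge]
      have hsnd : L.map Prod.snd = B.toList ++ C1.toList := by
        rw [hL, List.map_append, List.map_snd_zip hlen.ge, List.map_snd_zip hlen.le]
      have hBC : Disjoint B C := sdiff_disjoint
      have hcB : B.card + C.card = n := by
        rw [hB, card_sdiff_add_card_eq_card hCN, M.card]
      have hcC : (C \ C1).card + C1.card = C.card := card_sdiff_add_card_eq_card hC1
      have hpos : 0 < M.X (∅ ∪ (C \ C1).toList.toFinset) (L.map (fun x => some x.1)) := by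
        rw [toList_toFinset, empty_union]
        apply M.pos_list v
        · exact sdiff_subset.trans hCN
        · rw [hL, List.length_append, List.length_zip, List.length_zip]
          simp only [length_toList]
          omega
        · rw [hsnd, List.nodup_append]
          refine ⟨nodup_toList _, nodup_toList _, ?_⟩
          intro a ha b hb hab
          rw [mem_toList] at ha hb
          subst hab
          exact disjoint_left.1 hBC ha (hC1 hb)
        · rintro ⟨a, b⟩ hx
          rw [hL, List.mem_append] at hx
          rcases hx with hx | hx
          · have := List.of_mem_zip hx
            rw [mem_toList, mem_toList] at this
            exact ⟨hCN (hC1 this.1), (mem_sdiff.1 this.2).1,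
              fun h => (mem_sdiff.1 this.2).2 (mem_sdiff.1 h).1, hAC a (hC1 this.1) b this.2⟩
          · have := List.of_mem_zip hx
            rw [mem_toList, mem_toList] at this
            exact ⟨(mem_sdiff.1 this.1).1, hCN (hC1 this.2),
              fun h => (mem_sdiff.1 h).2 this.2, M.AA_symm (hAC b (hC1 this.2) a this.1)⟩
      have hfin := M.pos_loops v j hjN (L.map (fun x => some x.1)) (C \ C1).toList ∅
        (empty_subset _) (by
          rw [List.length_map, hL, List.length_append, List.length_zip, List.length_zip]
          simp only [length_toList, card_empty]
          omega) (nodup_toList _) (by simp) (by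
          intro i hi
          rw [mem_toList, mem_sdiff] at hi
          refine ⟨hCN hi.1, by simp, ?_, hloop i hi.1⟩
          rintro rfl; exact (mem_sdiff.1 hj).2 hi.1) hpos
      rw [hfst, ← List.map_append] at hfin
      have hperm : ((C \ C1).toList ++ (C1.toList ++ B.toList)).Perm (M.N v).toList := by
        rw [List.perm_ext_iff_of_nodup _ (nodup_toList _)]
        · intro a
          simp only [List.mem_append, mem_toList, mem_sdiff, hB]
          have h1 := @hC1 a
          have h2 := @hCN a
          tauto
        · rw [List.nodup_append, List.nodup_append]
          refine ⟨nodup_toList _, ⟨nodup_toList _, nodup_toList _, ?_⟩, ?_⟩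
          · intro a ha b hb hab
            rw [mem_toList] at ha hb
            subst hab
            exact disjoint_left.1 hBC hb (hC1 ha)
          · intro a ha b hb hab
            simp only [List.mem_append, mem_toList, mem_sdiff] at ha hb
            subst hab
            rcases hb with hb | hb
            · exact ha.2 hb
            · exact disjoint_left.1 hBC hb ha.1
      rw [M.X_perm _ (hperm.map some), hmu] at hfin
      exact lt_irrefl _ hfin
    have hγC : γ ∉ C := fun h => D.gn k0 hk0 (hCN h)
    refine ⟨insert γ C, ?_, ?_⟩
    · intro p
      rw [sum_insert hγC]
      have h1 : M.ell γ p = 1 - ∑ x ∈ C, M.ell x p := by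
        conv_lhs => rw [M.span_pt v p]
        rw [ell_add, hγ1, map_sum, sub_eq_add_neg, ← sum_neg_distrib]
        congr 1
        symm
        apply sum_subset_zero_on_sdiff hCN
        · intro x hx
          rw [map_smul, huz x hx, smul_zero]
        · intro x hx
          rw [map_smul, (mem_filter.1 hx).2, smul_eq_mul]; ring
      rw [h1]; ring
    · rw [card_insert_of_notMem hγC]
      have := card_sdiff_add_card_eq_card hCN
      rw [M.card] at this
      omega

theorem main_comb : M.DD ∅ = 0 ↔
    ∃ C : Finset ι, (∀ p, ∑ c ∈ C, M.ell c p = 1) ∧ n + 2 < 2 * C.card := by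
  constructor
  · intro h
    exact M.cayley_of_mu (v := M.w0) (M.mu_zero_of_DD h)
  · rintro ⟨C, hC, h⟩
    exact M.DD_of_cayley hC h

end Mdl
end Smooth8
end

section
namespace Smooth8
open Finset

theorem vdata {n : ℕ} {P : Set (Fin n → ℝ)} (hfull : affineSpan ℝ P = ⊤) (hsm : IsSmoothPoly P) :
    ∀ v ∈ Set.extremePoints ℝ P, ∃ (b : Module.Basis (Fin n) ℝ (Fin n → ℝ)) (c : Fin n → ℝ),
      (∀ i, 0 < c i) ∧ (∀ i, IsLatticePt (b i)) ∧
      (∀ x, IsLatticePt x → ∀ i, ∃ z : ℤ, b.repr x i = z) ∧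
      ∀ F, (IsFace P F ∧ v ∈ F ∧ fdim F = 1) ↔ ∃ i, F = segment ℝ v (v + c i • b i) := by
  have hvs : vectorSpan ℝ P = ⊤ := by
    rw [← direction_affineSpan, hfull, AffineSubspace.direction_top]
  have hd : fdim P = n := by
    unfold fdim; rw [hvs]; simp
  intro v hv
  obtain ⟨w, c, hc, -, hli, -, hz, hF⟩ := hsm v hv
  revert w c
  rw [hd]
  intro w c hc hli hz hF
  have hcard : Fintype.card (Fin n) = Module.finrank ℝ (Fin n → ℝ) := by simp
  rcases Nat.eq_zero_or_pos n with h0 | h0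
  · subst h0
    refine ⟨Pi.basisFun ℝ (Fin 0), c, hc, fun i => i.elim0, fun _ _ i => i.elim0, ?_⟩
    intro F
    rw [hF F]
    constructor <;> (rintro ⟨i, _⟩; exact i.elim0)
  have : Nonempty (Fin n) := ⟨⟨0, h0⟩⟩
  let b := basisOfLinearIndependentOfCardEqFinrank hli hcard
  have hb : ∀ i, b i = (fun j => (w i j : ℝ)) := fun i => by simp [b]
  refine ⟨b, c, hc, fun i j => ⟨w i j, by rw [hb]⟩, ?_, ?_⟩
  · intro x hx i
    choose z hz' using hx
    obtain ⟨m, hm⟩ := hz z (by rw [hvs]; trivial)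
    have hx : x = ∑ i, (m i : ℝ) • b i := by
      rw [show x = (fun j => (z j : ℝ)) from funext hz', hm]
      simp only [hb]
    refine ⟨m i, ?_⟩
    rw [hx, map_sum, Finsupp.finsetSum_apply]
    simp [Finsupp.single_apply]
  · intro F
    rw [hF F]
    simp only [hb]

theorem expo {n : ℕ} (T : Finset (Fin n → ℝ)) {t : Fin n → ℝ}
    (ht : t ∈ Set.extremePoints ℝ (convexHull ℝ (T : Set (Fin n → ℝ)))) :
    ∃ f : (Fin n → ℝ) →ₗ[ℝ] ℝ, ∀ s ∈ T, s ≠ t → f t < f s := by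
  have h1 := ((convex_convexHull ℝ _).mem_extremePoints_iff_mem_sdiff_convexHull_sdiff).1 ht
  have hfin : Set.Finite ((T : Set (Fin n → ℝ)) \ {t}) := T.finite_toSet.sdiff
  have h2 : t ∉ convexHull ℝ ((T : Set (Fin n → ℝ)) \ {t}) := by
    intro h
    exact h1.2 (convexHull_mono (Set.sdiff_subset_sdiff_left (subset_convexHull ℝ _)) h)
  obtain ⟨f, u, hu, hb⟩ := geometric_hahn_banach_point_closed (convex_convexHull ℝ _)
    (hfin.isClosed_convexHull (𝕜 := ℝ)) h2
  refine ⟨f, fun s hs hst => hu.trans (hb s (subset_convexHull ℝ _ ⟨hs, hst⟩))⟩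

theorem hull_ext {n : ℕ} (T : Finset (Fin n → ℝ)) :
    convexHull ℝ (T : Set (Fin n → ℝ)) =
      convexHull ℝ (Set.extremePoints ℝ (convexHull ℝ (T : Set (Fin n → ℝ)))) := by
  have hs : Set.extremePoints ℝ (convexHull ℝ (T : Set (Fin n → ℝ))) ⊆ T :=
    extremePoints_convexHull_subset
  have hf := T.finite_toSet.subset hs
  have := closure_convexHull_extremePoints (T.finite_toSet.isCompact_convexHull (𝕜 := ℝ))
    (convex_convexHull ℝ (T : Set (Fin n → ℝ)))
  rw [(hf.isClosed_convexHull (𝕜 := ℝ)).closure_eq] at this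
  exact this.symm

theorem cone {n : ℕ} {P : Set (Fin n → ℝ)} (V : Finset (Fin n → ℝ))
    (hV : P = convexHull ℝ (V : Set (Fin n → ℝ))) {v : Fin n → ℝ} (hv : v ∈ Set.extremePoints ℝ P)
    (b : Module.Basis (Fin n) ℝ (Fin n → ℝ)) (c : Fin n → ℝ) (hc : ∀ i, 0 < c i)
    (hF : ∀ F, (IsFace P F ∧ v ∈ F ∧ fdim F = 1) ↔ ∃ i, F = segment ℝ v (v + c i • b i))
    (x : Fin n → ℝ) (hx : x ∈ P) (i : Fin n) : 0 ≤ b.repr (x - v) i := by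
  have hvP : v ∈ P := hv.1
  have hVP : ∀ s ∈ V, s ∈ P := fun s hs => by rw [hV]; exact subset_convexHull ℝ _ hs
  obtain ⟨g, hg⟩ := expo V (t := v) (by rw [← hV]; exact hv)
  classical
  let φ : (Fin n → ℝ) → (Fin n → ℝ) := fun s => (g s - g v)⁻¹ • (s - v)
  let V' := (V.erase v).image φ
  have hφ : ∀ s, s ∈ V → s ≠ v → s - v = (g s - g v) • φ s := by
    intro s hs hsv
    have := hg s hs hsv
    simp only [φ]
    rw [smul_smul, mul_inv_cancel₀ (by linarith), one_smul]
  -- extreme rays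
  have key : ∀ t ∈ Set.extremePoints ℝ (convexHull ℝ (V' : Set (Fin n → ℝ))), 0 ≤ b.repr t i := by
    intro t ht
    obtain ⟨f, hf⟩ := expo V' ht
    have htV : t ∈ V' := extremePoints_convexHull_subset ht
    obtain ⟨s, hs, hst⟩ := Finset.mem_image.1 htV
    have hsv := (Finset.mem_erase.1 hs).1
    have hsV := (Finset.mem_erase.1 hs).2
    have hgs := hg s hsV hsv
    let u : (Fin n → ℝ) →ₗ[ℝ] ℝ := f - f t • g
    have hgφ : ∀ s, s ∈ V → s ≠ v → g (φ s) = 1 := by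
      intro s hs hsv
      have := hg s hs hsv
      simp only [φ, map_smul, map_sub, smul_eq_mul]
      exact inv_mul_cancel₀ (by linarith)
    have hut : u t = 0 := by
      have := hgφ s hsV hsv
      rw [hst] at this
      simp [u, this]
    have huV : ∀ s ∈ V, 0 ≤ u (s - v) ∧ (u (s - v) = 0 → s - v ∈ Submodule.span ℝ {t}) := by
      intro s hs
      by_cases hsv : s = v
      · subst hsv; simp
      have h1 := hg s hs hsv
      by_cases hφt : φ s = t
      · rw [hφ s hs hsv, hφt, map_smul, hut]
        refine ⟨by simp, fun _ => Submodule.smul_mem _ _ (Submodule.mem_span_singleton_self t)⟩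
      · have h2 := hf (φ s) (Finset.mem_image_of_mem _ (Finset.mem_erase.2 ⟨hsv, hs⟩)) hφt
        have h3 : u (φ s) = f (φ s) - f t := by simp [u, hgφ s hs hsv]
        have h4 : 0 < u (s - v) := by
          rw [hφ s hs hsv, map_smul, h3, smul_eq_mul]
          exact mul_pos (by linarith) (by linarith)
        exact ⟨h4.le, fun h => absurd h h4.ne'⟩
    have huP : ∀ x ∈ P, 0 ≤ u (x - v) ∧ (u (x - v) = 0 → x - v ∈ Submodule.span ℝ {t}) := by
      intro x hx
      rw [hV] at hx
      refine convexHull_min (t := {x | 0 ≤ u (x - v) ∧ (u (x - v) = 0 → x - v ∈ Submodule.span ℝ {t})})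
        (fun s hs => huV s hs) ?_ hx
      intro p hp q hq α β hα hβ hαβ
      have e : α • p + β • q - v = α • (p - v) + β • (q - v) := by
        have : α = 1 - β := by linarith
        subst this; module
      simp only [Set.mem_ofPred_eq] at hp hq ⊢
      rw [e, map_add, map_smul, map_smul, smul_eq_mul, smul_eq_mul]
      have h1 := mul_nonneg hα hp.1
      have h2 := mul_nonneg hβ hq.1
      refine ⟨add_nonneg h1 h2, fun h => ?_⟩
      have h3 : α * u (p - v) = 0 := by linarith
      have h4 : β * u (q - v) = 0 := by linarith
      refine Submodule.add_mem _ ?_ ?_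
      · rcases mul_eq_zero.1 h3 with h | h
        · rw [h]; simp
        · exact Submodule.smul_mem _ _ (hp.2 h)
      · rcases mul_eq_zero.1 h4 with h | h
        · rw [h]; simp
        · exact Submodule.smul_mem _ _ (hq.2 h)
    have hsv' : s - v = (g s - g v) • t := by rw [hφ s hsV hsv, hst]
    let F := {x ∈ P | u x = u v}
    have hvF : v ∈ F := ⟨hvP, rfl⟩
    have hsF : s ∈ F := by
      refine ⟨hVP s hsV, ?_⟩
      have : u (s - v) = 0 := by rw [hsv', map_smul, hut]; simp
      rw [map_sub] at this; linarith
    have hface : IsFace P F := by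
      refine ⟨⟨v, hvF⟩, u, u v, fun x hx => ?_, rfl⟩
      have := (huP x hx).1
      rw [map_sub] at this; linarith
    have hFspan : ∀ x ∈ F, x - v ∈ Submodule.span ℝ {t} := by
      intro x hx
      refine (huP x hx.1).2 ?_
      rw [map_sub, hx.2, sub_self]
    have htne : t ≠ 0 := by
      intro h
      rw [h, smul_zero] at hsv'
      exact hsv (sub_eq_zero.1 hsv')
    have hvsp : vectorSpan ℝ F = Submodule.span ℝ {t} := by
      apply le_antisymm
      · rw [vectorSpan_def, Submodule.span_le]
        rintro _ ⟨x, hx, y, hy, rfl⟩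
        have := Submodule.sub_mem _ (hFspan x hx) (hFspan y hy)
        simpa using this
      · rw [Submodule.span_le, Set.singleton_subset_iff]
        have h1 : s - v ∈ vectorSpan ℝ F := vsub_mem_vectorSpan ℝ hsF hvF
        have h2 : t = (g s - g v)⁻¹ • (s - v) := hst.symm
        rw [h2]
        exact Submodule.smul_mem _ _ h1
    have hfd : fdim F = 1 := by
      unfold fdim; rw [hvsp]; exact finrank_span_singleton htne
    obtain ⟨j, hj⟩ := (hF F).1 ⟨hface, hvF, hfd⟩
    rw [hj] at hsF
    rw [segment_eq_image'] at hsF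
    obtain ⟨θ, hθ, h⟩ := hsF
    have h5 : t = ((g s - g v)⁻¹ * (θ * c j)) • b j := by
      have : s - v = (θ * c j) • b j := by
        rw [← h]; simp only [add_sub_cancel_left, smul_smul]
      rw [← hst]; simp only [φ]; rw [this, smul_smul]
    rw [h5, map_smul]
    simp only [Module.Basis.repr_self, Finsupp.smul_apply, smul_eq_mul]
    apply mul_nonneg
    · apply mul_nonneg
      · rw [inv_nonneg]; linarith
      · exact mul_nonneg hθ.1 (hc j).le
    · rw [Finsupp.single_apply]; split_ifs <;> norm_num
  have hK : ∀ y ∈ convexHull ℝ (V' : Set (Fin n → ℝ)), 0 ≤ b.repr y i := by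
    intro y hy
    rw [hull_ext] at hy
    refine convexHull_min (t := {y | 0 ≤ b.repr y i}) key ?_ hy
    have := convex_halfSpace_ge (𝕜 := ℝ) (f := fun y => b.coord i y) ((b.coord i).isLinear) 0
    exact this
  rw [hV] at hx
  refine convexHull_min (t := {x | 0 ≤ b.repr (x - v) i}) ?_ ?_ hx
  · intro s hs
    simp only [Set.mem_ofPred_eq]
    by_cases hsv : s = v
    · simp [hsv]
    rw [hφ s hs hsv, map_smul]
    have := hg s hs hsv
    refine mul_nonneg (by linarith) (hK _ (subset_convexHull ℝ _ ?_))
    exact Finset.mem_image_of_mem _ (Finset.mem_erase.2 ⟨hsv, hs⟩)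
  · intro p hp q hq α β hα hβ hαβ
    have e : α • p + β • q - v = α • (p - v) + β • (q - v) := by
      have : α = 1 - β := by linarith
      subst this; module
    simp only [Set.mem_ofPred_eq] at hp hq ⊢
    rw [e, map_add, map_smul, map_smul]
    exact add_nonneg (mul_nonneg hα hp) (mul_nonneg hβ hq)

end Smooth8
end

section
namespace Smooth8
open Finset

/-- Vertex data. -/
structure VD {n : ℕ} (P : Set (Fin n → ℝ)) (v : Fin n → ℝ)
    (b : Module.Basis (Fin n) ℝ (Fin n → ℝ)) (c : Fin n → ℝ) : Prop where
  blat : ∀ i, IsLatticePt (b i)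
  int : ∀ x, IsLatticePt x → ∀ i, ∃ z : ℤ, b.repr x i = z
  cone : ∀ x ∈ P, ∀ i, 0 ≤ b.repr (x - v) i
  tip : ∀ i, v + c i • b i ∈ Set.extremePoints ℝ P
  seg : ∀ x ∈ P, ∀ i, (∀ j, j ≠ i → b.repr (x - v) j = 0) → b.repr (x - v) i ≤ c i
  one : ∀ i, 1 ≤ c i

theorem lat_sub {n : ℕ} {x y : Fin n → ℝ} (hx : IsLatticePt x) (hy : IsLatticePt y) :
    IsLatticePt (x - y) := by
  intro i
  obtain ⟨a, ha⟩ := hx i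
  obtain ⟨b, hb⟩ := hy i
  exact ⟨a - b, by simp [ha, hb]⟩

theorem lat_add {n : ℕ} {x y : Fin n → ℝ} (hx : IsLatticePt x) (hy : IsLatticePt y) :
    IsLatticePt (x + y) := by
  intro i
  obtain ⟨a, ha⟩ := hx i
  obtain ⟨b, hb⟩ := hy i
  exact ⟨a + b, by simp [ha, hb]⟩

theorem lat_zero {n : ℕ} : IsLatticePt (0 : Fin n → ℝ) := fun _ => ⟨0, by simp⟩

theorem lat_zsmul {n : ℕ} {x : Fin n → ℝ} (hx : IsLatticePt x) (z : ℤ) :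
    IsLatticePt ((z : ℝ) • x) := by
  intro i
  obtain ⟨a, ha⟩ := hx i
  exact ⟨z * a, by simp [ha]⟩

theorem lat_sum {n : ℕ} {α : Type*} (s : Finset α) (f : α → Fin n → ℝ)
    (h : ∀ a ∈ s, IsLatticePt (f a)) : IsLatticePt (∑ a ∈ s, f a) := by
  classical
  induction s using Finset.induction_on with
  | empty => simpa using lat_zero
  | insert a s ha ih =>
    rw [sum_insert ha]
    exact lat_add (h a (mem_insert_self _ _)) (ih fun b hb => h b (mem_insert_of_mem hb))

theorem ext_lat {n : ℕ} {P : Set (Fin n → ℝ)} (hP : IsLatticePolytope P) {v}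
    (hv : v ∈ Set.extremePoints ℝ P) : IsLatticePt v := by
  obtain ⟨V, hV, rfl⟩ := hP
  exact hV v (extremePoints_convexHull_subset hv)

theorem exists_VD {n : ℕ} {P : Set (Fin n → ℝ)} (hP : IsLatticePolytope P)
    (hfull : affineSpan ℝ P = ⊤) (hsm : IsSmoothPoly P) :
    ∀ v ∈ Set.extremePoints ℝ P, ∃ b c, VD P v b c := by
  intro v hv
  obtain ⟨b, c, hc, hb, hi, hF⟩ := vdata hfull hsm v hv
  obtain ⟨V, hVl, hV⟩ := id hP
  have hcone := cone V hV hv b c hc hF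
  have htip : ∀ i, v + c i • b i ∈ Set.extremePoints ℝ P := by
    intro i
    obtain ⟨⟨-, u, m, hu, hFu⟩, hvF, -⟩ := (hF _).2 ⟨i, rfl⟩
    have hp : v + c i • b i ∈ segment ℝ v (v + c i • b i) := right_mem_segment _ _ _
    rw [mem_extremePoints]
    have hpP := hp
    rw [hFu] at hpP
    refine ⟨hpP.1, ?_⟩
    rintro x hx y hy ⟨α, β, hα, hβ, hαβ, h⟩
    have hum : α * u x + β * u y = m := by
      rw [← hpP.2, ← h]; simp
    have h1 := hu x hx
    have h2 := hu y hy
    have hx' : u x = m := by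
      have : α * (u x - m) + β * (u y - m) = 0 := by
        have : m = (α + β) * m := by rw [hαβ, one_mul]
        linarith
      have h3 := mul_nonneg hα.le (sub_nonneg.2 h1)
      have h4 := mul_nonneg hβ.le (sub_nonneg.2 h2)
      have h5 : α * (u x - m) = 0 := by linarith
      rcases mul_eq_zero.1 h5 with h | h <;> linarith
    have hy' : u y = m := by
      have : α * (u x - m) + β * (u y - m) = 0 := by
        have : m = (α + β) * m := by rw [hαβ, one_mul]
        linarith
      have h3 := mul_nonneg hα.le (sub_nonneg.2 h1)
      have h4 := mul_nonneg hβ.le (sub_nonneg.2 h2)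
      have h5 : β * (u y - m) = 0 := by linarith
      rcases mul_eq_zero.1 h5 with h | h <;> linarith
    have hxF : x ∈ segment ℝ v (v + c i • b i) := by rw [hFu]; exact ⟨hx, hx'⟩
    have hyF : y ∈ segment ℝ v (v + c i • b i) := by rw [hFu]; exact ⟨hy, hy'⟩
    rw [segment_eq_image'] at hxF hyF
    obtain ⟨θ, hθ, rfl⟩ := hxF
    obtain ⟨η, hη, rfl⟩ := hyF
    simp only [add_sub_cancel_left] at h ⊢
    have hcb : (α * θ + β * η - 1) • (c i • b i) = 0 := by
      have hα' : α = 1 - β := by linarith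
      subst hα'
      have : ((1 - β) • (v + θ • c i • b i) + β • (v + η • c i • b i)) - (v + c i • b i) = 0 := by
        rw [h, sub_self]
      rw [← this]; module
    have hne : c i • b i ≠ 0 := smul_ne_zero (hc i).ne' (b.ne_zero i)
    have h6 := (smul_eq_zero.1 hcb).resolve_right hne
    have h7 := mul_nonneg hα.le (sub_nonneg.2 hθ.2)
    have h8 := mul_nonneg hβ.le (sub_nonneg.2 hη.2)
    have h9 : α * (1 - θ) = 0 := by linarith
    have h10 : β * (1 - η) = 0 := by linarith
    have h11 : θ = 1 := by rcases mul_eq_zero.1 h9 with h | h <;> linarith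
    have h12 : η = 1 := by rcases mul_eq_zero.1 h10 with h | h <;> linarith
    rw [h11, h12]; simp
  refine ⟨b, c, hb, hi, hcone, htip, ?_, ?_⟩
  · intro x hx i h0
    obtain ⟨⟨-, u, m, hu, hFu⟩, hvF, -⟩ := (hF _).2 ⟨i, rfl⟩
    have hxe : x - v = b.repr (x - v) i • b i := by
      conv_lhs => rw [← b.sum_repr (x - v)]
      rw [Finset.sum_eq_single i]
      · intro j _ hj; rw [h0 j hj, zero_smul]
      · simp
    have hp : v + c i • b i ∈ segment ℝ v (v + c i • b i) := right_mem_segment _ _ _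
    rw [hFu] at hvF hp
    have h1 : u (b i) = 0 := by
      have := hp.2
      rw [map_add, hvF.2, map_smul, smul_eq_mul] at this
      have h2 : c i * u (b i) = 0 := by linarith
      exact (mul_eq_zero.1 h2).resolve_left (hc i).ne'
    have h2 : u x = m := by
      have : u (x - v) = 0 := by rw [hxe, map_smul, h1, smul_zero]
      rw [map_sub, hvF.2] at this; linarith
    have hxF : x ∈ segment ℝ v (v + c i • b i) := by rw [hFu]; exact ⟨hx, h2⟩
    rw [segment_eq_image'] at hxF
    obtain ⟨θ, hθ, rfl⟩ := hxF
    simp only [add_sub_cancel_left, map_smul, Module.Basis.repr_self, Finsupp.smul_apply,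
      Finsupp.single_eq_same, smul_eq_mul, mul_one]
    have := mul_le_mul_of_nonneg_right hθ.2 (hc i).le
    linarith
  · intro i
    have h1 := lat_sub (ext_lat hP (htip i)) (ext_lat hP hv)
    obtain ⟨z, hz⟩ := hi _ h1 i
    simp only [add_sub_cancel_left, map_smul, Module.Basis.repr_self, Finsupp.smul_apply,
      Finsupp.single_eq_same, smul_eq_mul, mul_one] at hz
    have := hc i
    rw [hz] at this ⊢
    exact_mod_cast this

end Smooth8
end

section
namespace Smooth8
open Finset

/-- The geometric meaning of a model. -/
structure Geo {n : ℕ} {ι ω : Type} [Fintype ι] [DecidableEq ι] [Fintype ω]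
    (P : Set (Fin n → ℝ)) (M : Mdl n ι ω (Fin n → ℝ)) : Prop where
  hP : ∀ x, x ∈ P ↔ M.inP x
  hull : P = convexHull ℝ (Set.range M.pt)
  ext : Set.extremePoints ℝ P = Set.range M.pt
  latpt : ∀ w, IsLatticePt (M.pt w)
  late : ∀ w k, k ∈ M.N w → IsLatticePt (M.e w k)
  latl : ∀ k x, IsLatticePt x → ∃ z : ℤ, M.u k x = z

/-- Affine coordinate at a vertex. -/
noncomputable def xf {n : ℕ} (b : Module.Basis (Fin n) ℝ (Fin n → ℝ)) (v : Fin n → ℝ) (i : Fin n) :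
    (Fin n → ℝ) →ᵃ[ℝ] ℝ :=
  (b.coord i).toAffineMap - AffineMap.const ℝ _ (b.coord i v)

theorem xf_apply {n : ℕ} (b : Module.Basis (Fin n) ℝ (Fin n → ℝ)) (v : Fin n → ℝ) (i : Fin n) (x) :
    xf b v i x = b.repr (x - v) i := by
  simp [xf]

theorem xf_linear {n : ℕ} (b : Module.Basis (Fin n) ℝ (Fin n → ℝ)) (v : Fin n → ℝ) (i : Fin n) :
    (xf b v i).linear = b.coord i := by
  ext x; simp [xf]

theorem xf_eq {n : ℕ} {P : Set (Fin n → ℝ)} {v w : Fin n → ℝ} {b b' c c'}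
    (hv : v ∈ P) (hw : w ∈ P) (hvl : IsLatticePt v) (hwl : IsLatticePt w)
    (D : VD P v b c) (D' : VD P w b' c') (j : Fin n) (h0 : xf b v j w = 0) :
    ∃ i, xf b v j = xf b' w i := by
  have key : ∀ p, xf b v j p = ∑ i, b'.repr (p - w) i * b.repr (b' i) j := by
    intro p
    rw [xf_apply] at h0 ⊢
    have h1 : b.repr (p - v) j = b.repr (p - w) j := by
      have : p - v = (p - w) + (w - v) := by abel
      rw [this, map_add, Finsupp.add_apply, h0, add_zero]
    rw [h1]
    conv_lhs => rw [← b'.sum_repr (p - w)]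
    rw [map_sum, Finsupp.finsetSum_apply]
    simp
  have ha : ∀ i, 0 ≤ b.repr (b' i) j := by
    intro i
    have h1 := D.cone _ (D'.tip i).1 j
    rw [← xf_apply, key] at h1
    simp only [add_sub_cancel_left, map_smul, Module.Basis.repr_self, Finsupp.smul_apply,
      smul_eq_mul, Finsupp.single_apply] at h1
    rw [Finset.sum_eq_single i (by intro k _ hk; simp [Ne.symm hk]) (by simp)] at h1
    simp only [if_true, mul_one] at h1
    have := D'.one i
    by_contra h
    push Not at h
    nlinarith
  obtain ⟨i, hi⟩ : ∃ i, b.repr (b' i) j ≠ 0 := by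
    by_contra h
    push Not at h
    have : b.coord j = 0 := b'.ext fun i => by simpa using h i
    have h2 := congrArg (fun f => f (b j)) this
    simp at h2
  have hz : ∀ p ∈ P, xf b v j p = 0 → b'.repr (p - w) i = 0 := by
    intro p hp h
    rw [key, Finset.sum_eq_zero_iff_of_nonneg
      (fun l _ => mul_nonneg (D'.cone p hp l) (ha l))] at h
    exact (mul_eq_zero.1 (h i (mem_univ i))).resolve_right hi
  have hl : ∀ l, l ≠ j → b'.repr (b l) i = 0 := by
    intro l hl
    have h1 := hz _ (D.tip l).1 (by rw [xf_apply]; simp [hl])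
    have h2 := hz v hv (by rw [xf_apply]; simp)
    have : (v + c l • b l - w) = (v - w) + c l • b l := by abel
    rw [this, map_add, Finsupp.add_apply, h2, zero_add, map_smul, Finsupp.smul_apply,
      smul_eq_mul] at h1
    have := D.one l
    exact (mul_eq_zero.1 h1).resolve_left (by linarith)
  have hlin : b'.coord i = b'.repr (b j) i • b.coord j := by
    refine b.ext fun l => ?_
    by_cases h : l = j
    · subst h; simp
    · simp [hl l h, h]
  have h1 : (1 : ℝ) = b'.repr (b j) i * b.repr (b' i) j := by
    have := congrArg (fun f => f (b' i)) hlin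
    simpa using this
  obtain ⟨z, hz1⟩ := D'.int _ (D.blat j) i
  obtain ⟨z', hz2⟩ := D.int _ (D'.blat i) j
  have hz3 : z * z' = 1 := by
    rw [hz1, hz2] at h1; exact_mod_cast h1.symm
  have hz'0 : 0 ≤ z' := by
    have := ha i; rw [hz2] at this; exact_mod_cast this
  have hz1' : z = 1 := by
    rcases Int.eq_one_or_neg_one_of_mul_eq_one hz3 with h | h
    · exact h
    · rw [h] at hz3; omega
  rw [hz1, hz1'] at hlin
  refine ⟨i, ?_⟩
  ext p
  have e1 : b.coord j = b'.coord i := by rw [hlin]; simp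
  have e2 : xf b v j p = b.coord j (p - w) := by
    rw [xf_apply] at h0 ⊢
    have : p - v = (p - w) + (w - v) := by abel
    rw [this, map_add, Finsupp.add_apply, h0, add_zero]; simp
  rw [e2, e1, xf_apply]; simp

theorem exists_model {n : ℕ} {P : Set (Fin n → ℝ)} (hP : IsLatticePolytope P)
    (hfull : affineSpan ℝ P = ⊤) (hsm : IsSmoothPoly P) :
    ∃ (ι ω : Type) (_ : Fintype ι) (_ : DecidableEq ι) (_ : Fintype ω)
      (M : Mdl n ι ω (Fin n → ℝ)), Geo P M := by
  classical
  obtain ⟨V, hVl, hV⟩ := id hP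
  have hfin : (Set.extremePoints ℝ P).Finite := by
    refine V.finite_toSet.subset ?_
    rw [hV]; exact extremePoints_convexHull_subset
  have hhull : P = convexHull ℝ (Set.extremePoints ℝ P) := by
    conv_lhs => rw [hV, hull_ext, ← hV]
  have hPne : P.Nonempty := by
    rw [Set.nonempty_iff_ne_empty]
    intro h
    rw [h, AffineSubspace.span_empty] at hfull
    exact AffineSubspace.bot_ne_top _ _ _ hfull
  have hextne : (Set.extremePoints ℝ P).Nonempty := by
    rw [hhull] at hPne
    exact convexHull_nonempty_iff.1 hPne
  let ω : Type := ↥(Set.extremePoints ℝ P)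
  have fω : Fintype ω := hfin.fintype
  choose b c D using fun v : ω => exists_VD hP hfull hsm v.1 v.2
  let X : ω × Fin n → ((Fin n → ℝ) →ᵃ[ℝ] ℝ) := fun q => xf (b q.1) q.1.1 q.2
  let ι : Type := ↥(Set.range X)
  have fι : Fintype ι := (Set.finite_range X).fintype
  have hin : ∀ w : ω, w.1 ∈ P := fun w => w.2.1
  have hlat : ∀ w : ω, IsLatticePt w.1 := fun w => ext_lat hP w.2
  let N : ω → Finset ι := fun w => univ.filter (fun k => k.1 w.1 = 0)
  let κ : ω → Fin n → ι := fun w i => ⟨X (w, i), Set.mem_range_self _⟩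
  have κlin : ∀ w i, (κ w i).1.linear = (b w).coord i := fun w i => xf_linear _ _ _
  have κinj : ∀ w, Function.Injective (κ w) := by
    intro w i j h
    have h1 : (b w).coord i = (b w).coord j := by rw [← κlin, ← κlin, h]
    have h2 := congrArg (fun f => f (b w i)) h1
    by_contra hij
    simp [Finsupp.single_apply, hij] at h2
  have hN : ∀ w, N w = univ.image (κ w) := by
    intro w
    ext k
    simp only [N, mem_filter, mem_univ, true_and, mem_image]
    constructor
    · intro h
      obtain ⟨⟨v, j⟩, hk⟩ := k.2
      obtain ⟨i, hi⟩ := xf_eq (hin v) (hin w) (hlat v) (hlat w) (D v) (D w) j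
        (by rw [← hk] at h; exact h)
      exact ⟨i, Subtype.ext (by rw [← hk]; exact hi.symm)⟩
    · rintro ⟨i, rfl⟩
      show xf (b w) w.1 i w.1 = 0
      rw [xf_apply]; simp
  let e : ω → ι → (Fin n → ℝ) := fun w k => ∑ i, k.1.linear (b w i) • b w i
  have he : ∀ w i, e w (κ w i) = b w i := by
    intro w i
    simp only [e, κlin]
    rw [Finset.sum_eq_single i (by intro k _ hk; simp [hk]) (by simp)]
    simp
  have hnonneg : ∀ p ∈ P, ∀ k : ι, 0 ≤ k.1 p := by
    intro p hp k
    obtain ⟨⟨v, j⟩, hk⟩ := k.2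
    rw [← hk]
    show 0 ≤ xf (b v) v.1 j p
    rw [xf_apply]
    exact (D v).cone p hp j
  have hinteg : ∀ (k : ι) x, IsLatticePt x → ∃ z : ℤ, k.1.linear x = z := by
    intro k x hx
    obtain ⟨⟨v, j⟩, hk⟩ := k.2
    rw [← hk]
    show ∃ z : ℤ, (xf (b v) v.1 j).linear x = z
    rw [xf_linear]
    exact (D v).int x hx j
  have hval : ∀ (w : ω) (i : Fin n) (p), (κ w i).1 p = (b w).repr (p - w.1) i :=
    fun w i p => xf_apply _ _ _ _
  let M : Mdl n ι ω (Fin n → ℝ) :=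
    { N := N
      ell := fun k => k.1
      pt := fun w => w.1
      e := e
      w0 := ⟨hextne.some, hextne.some_mem⟩
      inj := fun w w' h => Subtype.ext h
      card := by
        intro w
        rw [hN, card_image_of_injective _ (κinj w)]; simp
      mem := by intro w k; simp [N]
      dual := by
        intro w k l hk hl
        rw [hN] at hk hl
        obtain ⟨i, -, rfl⟩ := mem_image.1 hk
        obtain ⟨j, -, rfl⟩ := mem_image.1 hl
        rw [he, κlin]
        simp [Finsupp.single_apply, (κinj w).eq_iff, eq_comm]
      span := by
        intro w p
        rw [hN, sum_image (fun _ _ _ _ h => κinj w h)]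
        simp only [he, κlin]
        exact ((b w).sum_repr p).symm
      int := by
        intro w k
        obtain ⟨⟨v, j⟩, hk⟩ := k.2
        rw [← hk]
        show ∃ z : ℤ, xf (b v) v.1 j w.1 = z
        rw [xf_apply]
        exact (D v).int _ (lat_sub (hlat w) (hlat v)) j
      inte := by
        intro w k l hk
        rw [hN] at hk
        obtain ⟨i, -, rfl⟩ := mem_image.1 hk
        rw [he]
        exact hinteg l _ ((D w).blat i)
      nonneg := fun w k => hnonneg _ (hin w) k
      adj := by
        intro w k hk
        rw [hN] at hk
        obtain ⟨i, -, rfl⟩ := mem_image.1 hk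
        rw [he]
        refine ⟨⟨_, (D w).tip i⟩, c w i, (D w).one i, rfl, ?_, ?_⟩
        · intro x hx
          have h0 : ∀ j, j ≠ i → (b w).repr (x.1 - w.1) j = 0 := by
            intro j hj
            have : κ w j ∈ N x := hx (mem_erase.2 ⟨fun h => hj (κinj w h), by
              rw [hN]; exact mem_image_of_mem _ (mem_univ _)⟩)
            simp only [N, mem_filter, hval] at this
            exact this.2
          have hle := (D w).seg x.1 (hin x) i h0
          have hge := (D w).cone x.1 (hin x) i
          have hxe : x.1 = w.1 + (b w).repr (x.1 - w.1) i • b w i := by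
            have h1 := (b w).sum_repr (x.1 - w.1)
            rw [Finset.sum_eq_single i (by intro j _ hj; rw [h0 j hj, zero_smul]) (by simp)] at h1
            rw [h1]; abel
          set τ := (b w).repr (x.1 - w.1) i with hτ
          have hc := (D w).one i
          rcases hge.eq_or_lt with h | h
          · left; apply Subtype.ext; rw [hxe, ← h]; simp
          rcases hle.eq_or_lt with h' | h'
          · right; apply Subtype.ext; rw [hxe, h']
          exfalso
          have hx2 := x.2
          rw [mem_extremePoints] at hx2
          have := (hx2.2 w.1 (hin w) _ ((D w).tip i).1 ⟨1 - τ / c w i, τ / c w i, ?_, ?_, by ring, ?_⟩).1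
          · rw [hxe] at this
            have h3 : τ • b w i = 0 := by
              have := this.symm
              rwa [add_eq_left] at this
            rcases smul_eq_zero.1 h3 with h4 | h4
            · linarith
            · exact (b w).ne_zero i h4
          · rw [sub_pos, div_lt_one (by linarith)]; exact h'
          · exact div_pos h (by linarith)
          · rw [hxe]
            have : τ = τ / c w i * c w i := by field_simp
            conv_rhs => rw [this]
            module
        · intro k' hk' hkn
          rw [hN] at hk'
          obtain ⟨j, -, rfl⟩ := mem_image.1 hk'
          set w' : ω := ⟨_, (D w).tip i⟩ with hw'
          rw [he]
          have hw'0 : (κ w' j).1 w'.1 = 0 := by rw [hval]; simp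
          -- the functional vanishes at w' but not at w
          have hpos : 0 < (κ w' j).1 w.1 := by
            refine lt_of_le_of_ne (hnonneg _ (hin w) _) ?_
            intro h
            exact hkn (by simp only [N, mem_filter, mem_univ, true_and]; exact h.symm)
          have hww : w'.1 = w.1 + c w i • b w i := rfl
          have hA : ∀ l, l ≠ j → (b w').repr (b w i) l = 0 := by
            -- all coordinates other than j of w at w' vanish: by card argument
            have hcard : ∀ l, l ≠ i → κ w l ∈ N w' := by
              intro l hl
              simp only [N, mem_filter, mem_univ, true_and, hval]
              rw [hww]; simp [Ne.symm hl]
            have hsub : (N w).erase (κ w i) ⊆ (N w').erase (κ w' j) := by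
              intro k hk
              obtain ⟨hk1, hk2⟩ := mem_erase.1 hk
              have hk3 := hk2
              rw [hN] at hk2
              obtain ⟨l, -, rfl⟩ := mem_image.1 hk2
              refine mem_erase.2 ⟨?_, hcard l (fun h => hk1 (by rw [h]))⟩
              intro h; rw [h] at hk3; exact hkn hk3
            have hcN : ∀ w, (N w).card = n := by
              intro w
              rw [hN, card_image_of_injective _ (κinj w)]; simp
            have heq : (N w).erase (κ w i) = (N w').erase (κ w' j) := by
              apply eq_of_subset_of_card_le hsub
              rw [card_erase_of_mem, card_erase_of_mem, hcN, hcN]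
              · rw [hN]; exact mem_image_of_mem _ (mem_univ _)
              · rw [hN]; exact mem_image_of_mem _ (mem_univ _)
            intro l hl
            have hm : κ w' l ∈ (N w').erase (κ w' j) :=
              mem_erase.2 ⟨fun h => hl (κinj w' h), by
                rw [hN]; exact mem_image_of_mem _ (mem_univ _)⟩
            rw [← heq, hN] at hm
            obtain ⟨hm1, hm2⟩ := mem_erase.1 hm
            obtain ⟨q, -, hq⟩ := mem_image.1 hm2
            have : (b w').coord l = (b w).coord q := by rw [← κlin, ← κlin, hq]
            have h2 : (b w').repr (b w i) l = (b w).coord q (b w i) := by rw [← this]; rfl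
            rw [h2]
            have hqi : q ≠ i := fun h => hm1 (by rw [← hq, h])
            simp [Ne.symm hqi]
          have hbi : b w i = (b w').repr (b w i) j • b w' j := by
            have h1 := (b w').sum_repr (b w i)
            rw [Finset.sum_eq_single j (by intro l _ hl; rw [hA l hl, zero_smul]) (by simp)] at h1
            exact h1.symm
          set β := (b w').repr (b w i) j with hβ
          have hβneg : β < 0 := by
            have h1 : (κ w' j).1 w.1 = - (c w i * β) := by
              rw [hval]
              have : w.1 - w'.1 = - (c w i • b w i) := by rw [hww]; abel
              rw [this, map_neg, map_smul]; simp [hβ]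
            rw [h1] at hpos
            have := (D w).one i
            by_contra h
            push Not at h
            nlinarith
          have h1 : (1 : ℝ) = β * (b w).repr (b w' j) i := by
            have := congrArg (fun x => (b w).repr x i) hbi
            simpa using this
          obtain ⟨z, hz1⟩ := (D w').int _ ((D w).blat i) j
          obtain ⟨z', hz2⟩ := (D w).int _ ((D w').blat j) i
          have hz3 : z * z' = 1 := by
            rw [hβ, hz1, hz2] at h1; exact_mod_cast h1.symm
          have hzneg : z < 0 := by
            rw [hβ, hz1] at hβneg; exact_mod_cast hβneg
          have hzm : z = -1 := by
            rcases Int.eq_one_or_neg_one_of_mul_eq_one hz3 with h | h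
            · omega
            · exact h
          rw [hbi, hβ, hz1, hzm]; simp }
  have hMP : ∀ x, x ∈ P ↔ M.inP x := by
    intro x
    refine ⟨fun h l => hnonneg x h l, fun h => ?_⟩
    by_contra hx
    have hcl : IsClosed P := by
      rw [hV]; exact V.finite_toSet.isClosed_convexHull (𝕜 := ℝ)
    have hcv : Convex ℝ P := by rw [hV]; exact convex_convexHull ℝ _
    obtain ⟨f, u, hu, hf⟩ := geometric_hahn_banach_point_closed hcv hcl hx
    obtain ⟨w, hw, hmin⟩ := hfin.exists_minimalFor f _ hextne
    have hmin' : ∀ p ∈ P, f w ≤ f p := by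
      intro p hp
      rw [hhull] at hp
      refine convexHull_min (t := {p | f w ≤ f p}) ?_ ?_ hp
      · intro s hs
        simp only [Set.mem_ofPred_eq]
        rcases le_total (f w) (f s) with h | h
        · exact h
        · exact hmin hs h
      · exact convex_halfSpace_ge (𝕜 := ℝ) (f := fun y => f y) f.toLinearMap.isLinear (f w)
    have hfx : f w ≤ f x := by
      have h1 := (b ⟨w, hw⟩).sum_repr (x - w)
      have h2 : x = w + ∑ i, (b ⟨w, hw⟩).repr (x - w) i • b ⟨w, hw⟩ i := by rw [h1]; abel
      rw [h2, map_add, map_sum]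
      have : 0 ≤ ∑ i, f ((b ⟨w, hw⟩).repr (x - w) i • b ⟨w, hw⟩ i) := by
        refine Finset.sum_nonneg fun i _ => ?_
        rw [map_smul, smul_eq_mul]
        apply mul_nonneg
        · have := h (κ ⟨w, hw⟩ i)
          rw [← hval ⟨w, hw⟩ i x]
          exact this
        · have h3 := hmin' _ ((D ⟨w, hw⟩).tip i).1
          rw [map_add, map_smul, smul_eq_mul] at h3
          have := (D ⟨w, hw⟩).one i
          simp only at h3
          by_contra h
          push Not at h
          nlinarith
      linarith
    have := hf w hw.1
    linarith
  have hrange : Set.range M.pt = Set.extremePoints ℝ P := by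
    show Set.range (fun w : ω => w.1) = _
    exact Subtype.range_coe
  refine ⟨ι, ω, fι, inferInstance, fω, M, hMP, by rw [hrange]; exact hhull, hrange.symm,
    hlat, ?_, hinteg⟩
  intro w k hk
  have hk' : k ∈ N w := hk
  rw [hN] at hk'
  obtain ⟨i, -, rfl⟩ := mem_image.1 hk'
  show IsLatticePt (e w (κ w i))
  rw [he]
  exact (D w).blat i

end Smooth8
end

section
namespace Smooth8
open Finset MeasureTheory

theorem lat_det {d : ℕ} (L : (Fin d → ℝ) →ₗ[ℝ] (Fin d → ℝ))
    (h1 : ∀ y, IsLatticePt y → IsLatticePt (L y))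
    (h2 : ∀ y, IsLatticePt y → ∃ y0, IsLatticePt y0 ∧ L y0 = y) : |LinearMap.det L| = 1 := by
  have hs : ∀ i, IsLatticePt (Pi.single i (1 : ℝ) : Fin d → ℝ) := by
    intro i j
    by_cases h : j = i
    · subst h; exact ⟨1, by simp⟩
    · exact ⟨0, by simp [h]⟩
  choose A hA using fun i j => h1 _ (hs j) i
  choose Y hY hLY using fun i => h2 _ (hs i)
  choose B hB using fun i j => hY j i
  have hL : LinearMap.toMatrix' L = (Matrix.of A).map (Int.cast : ℤ → ℝ) := by
    ext i j
    rw [LinearMap.toMatrix'_apply]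
    simp only [Matrix.map_apply, Matrix.of_apply, ← hA]
  have hAB : Matrix.of A * Matrix.of B = 1 := by
    ext i j
    have h3 := congrFun (hLY j) i
    rw [← LinearMap.toMatrix'_mulVec, hL] at h3
    simp only [Matrix.mulVec, dotProduct, Matrix.map_apply, Matrix.of_apply, hB] at h3
    rw [Matrix.mul_apply, Matrix.one_apply]
    simp only [Matrix.of_apply]
    rw [Pi.single_apply] at h3
    split_ifs at h3 ⊢ <;> exact_mod_cast h3
  have hdet : (Matrix.of A).det * (Matrix.of B).det = 1 := by
    rw [← Matrix.det_mul, hAB, Matrix.det_one]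
  have h3 : LinearMap.det L = ((Matrix.of A).det : ℝ) := by
    rw [← LinearMap.det_toMatrix', hL]
    have := (Int.castRingHom ℝ).map_det (Matrix.of A)
    simp only [RingHom.mapMatrix_apply] at this
    exact this.symm
  rw [h3]
  rcases Int.eq_one_or_neg_one_of_mul_eq_one hdet with h | h <;> rw [h] <;> simp

theorem aff_split {d m : ℕ} (φ : (Fin d → ℝ) →ᵃ[ℝ] (Fin m → ℝ)) (y) :
    φ y = φ.linear y + φ 0 := by
  have := φ.map_vadd 0 y
  simpa using this

theorem lat_vol {d : ℕ} (φ : (Fin d → ℝ) →ᵃ[ℝ] (Fin d → ℝ))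
    (h1 : ∀ y, IsLatticePt y → IsLatticePt (φ y))
    (h2 : ∀ y, IsLatticePt y → ∃ y0, IsLatticePt y0 ∧ φ y0 = y) (S : Set (Fin d → ℝ)) :
    volume (φ ⁻¹' S) = volume S := by
  have h0 := h1 0 lat_zero
  have hdet := lat_det φ.linear
    (fun y hy => by
      have := lat_sub (h1 y hy) h0
      rwa [aff_split φ y, add_sub_cancel_right] at this)
    (fun y hy => by
      obtain ⟨y0, hy0, h⟩ := h2 _ (lat_add hy h0)
      refine ⟨y0, hy0, ?_⟩
      rw [aff_split] at h
      exact add_right_cancel h)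
  have hne : LinearMap.det φ.linear ≠ 0 := by
    intro h; rw [h] at hdet; simp at hdet
  have : φ ⁻¹' S = φ.linear ⁻¹' ((fun y => y + φ 0) ⁻¹' S) := by
    ext y; simp only [Set.mem_preimage]; rw [← aff_split]
  rw [this, Measure.addHaar_preimage_linearMap _ hne, measure_preimage_add_right, abs_inv, hdet]
  simp

namespace Mdl
variable {n d : ℕ} {ι ω : Type} [Fintype ι] [DecidableEq ι] [Fintype ω]
    (M : Mdl n ι ω (Fin n → ℝ))

/-- Vertex charts. -/
structure IsCh (I : Finset ι) (w : ω) (κ : Fin d → ι) : Prop where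
  sub : I ⊆ M.N w
  inj : Function.Injective κ
  mem : ∀ i, κ i ∈ M.N w
  nmem : ∀ i, κ i ∉ I
  surj : ∀ k ∈ M.N w, k ∉ I → ∃ i, κ i = k

/-- Chart map. -/
noncomputable def psi (w : ω) (κ : Fin d → ι) : (Fin d → ℝ) →ᵃ[ℝ] (Fin n → ℝ) :=
  (Fintype.linearCombination ℝ (fun i => M.e w (κ i))).toAffineMap + AffineMap.const ℝ _ (M.pt w)

theorem psi_apply (w : ω) (κ : Fin d → ι) (y) :
    M.psi w κ y = M.pt w + ∑ i, y i • M.e w (κ i) := by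
  simp [psi, Fintype.linearCombination_apply, add_comm]

/-- Coordinates. -/
noncomputable def tee (κ : Fin d → ι) : (Fin n → ℝ) →ᵃ[ℝ] (Fin d → ℝ) :=
  AffineMap.pi fun i => M.ell (κ i)

theorem tee_apply (κ : Fin d → ι) (x i) : M.tee κ x i = M.ell (κ i) x := by
  simp [tee]

variable {M}

theorem IsCh.ell_kap {I : Finset ι} {w : ω} {κ : Fin d → ι} (h : M.IsCh I w κ) (y j) :
    M.ell (κ j) (M.psi w κ y) = y j := by
  rw [psi_apply, ell_add, M.ell_pt (h.mem j), map_sum, Finset.sum_eq_single j]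
  · rw [map_smul, M.dual' (h.mem j) (h.mem j)]; simp
  · intro i _ hij
    rw [map_smul, M.dual' (h.mem i) (h.mem j), if_neg (fun h' => hij (h.inj h').symm)]; simp
  · simp

theorem IsCh.ell_I {I : Finset ι} {w : ω} {κ : Fin d → ι} (h : M.IsCh I w κ) (y) {l} (hl : l ∈ I) :
    M.ell l (M.psi w κ y) = 0 := by
  rw [psi_apply, ell_add, M.ell_pt (h.sub hl), map_sum, zero_add]
  refine Finset.sum_eq_zero fun i _ => ?_
  rw [map_smul, M.dual' (h.mem i) (h.sub hl), if_neg]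
  · simp
  · intro h'; exact h.nmem i (h' ▸ hl)

theorem IsCh.psi_tee {I : Finset ι} {w : ω} {κ : Fin d → ι} (h : M.IsCh I w κ) {x}
    (hx : ∀ l ∈ I, M.ell l x = 0) : M.psi w κ (M.tee κ x) = x := by
  rw [psi_apply]
  conv_rhs => rw [M.span_pt w x]
  congr 1
  have : ∑ k ∈ M.N w, M.ell k x • M.e w k = ∑ k ∈ univ.image κ, M.ell k x • M.e w k := by
    symm
    apply Finset.sum_subset
    · intro k hk
      obtain ⟨i, -, rfl⟩ := mem_image.1 hk
      exact h.mem i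
    · intro k hk hk'
      by_cases hI : k ∈ I
      · rw [hx k hI, zero_smul]
      · obtain ⟨i, rfl⟩ := h.surj k hk hI
        exact absurd (mem_image_of_mem _ (mem_univ i)) hk'
  rw [this, sum_image (fun _ _ _ _ h' => h.inj h')]
  simp [tee_apply]

theorem IsCh.tee_psi {I : Finset ι} {w : ω} {κ : Fin d → ι} (h : M.IsCh I w κ) (y) :
    M.tee κ (M.psi w κ y) = y := by
  ext j; rw [tee_apply, h.ell_kap]

theorem IsCh.exists_of_card {I : Finset ι} {w : ω} (hI : I ⊆ M.N w) (hd : I.card + d = n) :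
    ∃ κ : Fin d → ι, M.IsCh I w κ := by
  have hc : (M.N w \ I).card = d := by
    rw [card_sdiff_of_subset hI, M.card]; omega
  let e := (M.N w \ I).equivFinOfCardEq hc
  refine ⟨fun i => (e.symm i).1, hI, ?_, ?_, ?_, ?_⟩
  · intro i j hij; exact e.symm.injective (Subtype.ext hij)
  · intro i; exact (mem_sdiff.1 (e.symm i).2).1
  · intro i; exact (mem_sdiff.1 (e.symm i).2).2
  · intro k hk hkI
    exact ⟨e ⟨k, mem_sdiff.2 ⟨hk, hkI⟩⟩, by simp⟩

theorem IsCh.card {I : Finset ι} {w : ω} {κ : Fin d → ι} (h : M.IsCh I w κ) : I.card + d = n := by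
  have h1 : M.N w \ I = univ.image κ := by
    ext k
    simp only [mem_sdiff, mem_image, mem_univ, true_and]
    constructor
    · rintro ⟨h1, h2⟩; exact h.surj k h1 h2
    · rintro ⟨i, rfl⟩; exact ⟨h.mem i, h.nmem i⟩
  have h2 : (M.N w \ I).card = d := by
    rw [h1, card_image_of_injective _ h.inj]; simp
  rw [card_sdiff_of_subset h.sub, M.card] at h2
  have := card_le_card h.sub
  rw [M.card] at this
  omega

end Mdl

variable {n d : ℕ} {ι ω : Type} [Fintype ι] [DecidableEq ι] [Fintype ω]
    {M : Mdl n ι ω (Fin n → ℝ)} {P : Set (Fin n → ℝ)}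

theorem Geo.ell_int (G : Geo P M) (k) {x} (hx : IsLatticePt x) : ∃ z : ℤ, M.ell k x = z := by
  obtain ⟨a, ha⟩ := G.latl k _ (lat_sub hx (G.latpt M.w0))
  obtain ⟨b, hb⟩ := M.int M.w0 k
  rw [M.ell_sub] at ha
  exact ⟨a + b, by push_cast; linarith⟩

theorem Geo.lat_psi (G : Geo P M) {I : Finset ι} {w : ω} {κ : Fin d → ι} (h : M.IsCh I w κ) {y}
    (hy : IsLatticePt y) : IsLatticePt (M.psi w κ y) := by
  rw [M.psi_apply]
  refine lat_add (G.latpt w) (lat_sum _ _ fun i _ => ?_)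
  obtain ⟨z, hz⟩ := hy i
  rw [hz]
  exact lat_zsmul (G.late w _ (h.mem i)) z

theorem Geo.lat_tee (G : Geo P M) (κ : Fin d → ι) {x}
    (hx : IsLatticePt x) : IsLatticePt (M.tee κ x) := by
  intro i
  rw [M.tee_apply]
  exact G.ell_int _ hx

theorem Geo.chart_vol (G : Geo P M) {I : Finset ι} {w w' : ω} {κ κ' : Fin d → ι}
    (h : M.IsCh I w κ) (h' : M.IsCh I w' κ') (H : Set (Fin n → ℝ)) :
    volume (M.psi w κ ⁻¹' H) = volume (M.psi w' κ' ⁻¹' H) := by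
  have := lat_vol ((M.tee κ').comp (M.psi w κ))
    (fun y hy => by simpa using G.lat_tee κ' (G.lat_psi h hy))
    (fun y hy => ⟨M.tee κ (M.psi w' κ' y), G.lat_tee κ (G.lat_psi h' hy), by
      simp only [AffineMap.comp_apply]
      rw [h.psi_tee (fun l hl => h'.ell_I y hl), h'.tee_psi]⟩) (M.psi w' κ' ⁻¹' H)
  rw [← this]
  congr 1
  ext y
  simp only [Set.mem_preimage, AffineMap.comp_apply]
  rw [h'.psi_tee (fun l hl => h.ell_I y hl)]

end Smooth8
end

section
namespace Smooth8
open Finset MeasureTheory Pointwise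

theorem pyr_int (d : ℕ) {c : ℝ} (hc : 0 < c) :
    ∫⁻ h in Set.Ico 0 c, ENNReal.ofReal ((1 - h / c) ^ d) = ENNReal.ofReal (c / (d + 1)) := by
  have hcont : Continuous fun h : ℝ => (1 - h / c) ^ d := by fun_prop
  rw [← ofReal_integral_eq_lintegral_ofReal]
  · congr 1
    rw [integral_Ico_eq_integral_Ioc, ← intervalIntegral.integral_of_le hc.le]
    have : ∀ x ∈ Set.uIcc 0 c, HasDerivAt (fun h : ℝ => - (c / (d + 1)) * (1 - h / c) ^ (d + 1))
        ((1 - x / c) ^ d) x := by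
      intro x _
      have h1 : HasDerivAt (fun h : ℝ => 1 - h / c) (-(1 / c)) x := by
        simpa using ((hasDerivAt_id x).div_const c).const_sub 1
      have h2 := (h1.pow (d + 1)).const_mul (- (c / (d + 1)))
      have h3 : (1 - x / c) ^ d =
          -(c / (↑d + 1)) * (↑(d + 1) * (1 - x / c) ^ (d + 1 - 1) * -(1 / c)) := by
        have : (d : ℝ) + 1 ≠ 0 := by positivity
        rw [Nat.add_sub_cancel]
        push_cast
        field_simp
      rw [h3]
      exact h2
    rw [intervalIntegral.integral_eq_sub_of_hasDerivAt this (hcont.intervalIntegrable _ _)]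
    rw [div_self hc.ne']
    simp
  · exact (hcont.integrableOn_Icc (a := 0) (b := c)).mono_set Set.Ico_subset_Icc_self
  · refine (ae_restrict_iff' measurableSet_Ico).2 (Filter.Eventually.of_forall fun h hh => ?_)
    apply pow_nonneg
    have : h / c ≤ 1 := (div_le_one hc).2 hh.2.le
    linarith

theorem pyr {d : ℕ} {c : ℝ} (hc : 0 < c) {S : Set (Fin (d + 1) → ℝ)} (hS : MeasurableSet S)
    (B : Set (Fin d → ℝ)) (a : Fin d → ℝ)
    (h1 : ∀ (h : ℝ) (z : Fin d → ℝ), (Fin.cons h z : Fin (d + 1) → ℝ) ∈ S → 0 ≤ h ∧ h ≤ c)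
    (h2 : ∀ (h : ℝ), 0 ≤ h → h < c → ∀ z : Fin d → ℝ, (Fin.cons h z : Fin (d + 1) → ℝ) ∈ S ↔
      ∃ b ∈ B, z = (h / c) • a + (1 - h / c) • b) :
    volume S = ENNReal.ofReal (c / (d + 1)) * volume B := by
  have hmp := (volume_preserving_piFinSuccAbove (fun _ : Fin (d + 1) => ℝ) 0).symm
  have e1 := hmp.measure_preimage hS.nullMeasurableSet
  rw [← e1, Measure.volume_eq_prod, Measure.prod_apply (hmp.measurable hS)]
  have e2 : ∀ h : ℝ, h ≠ c → volume (Prod.mk h ⁻¹' ((MeasurableEquiv.piFinSuccAbove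
      (fun _ : Fin (d + 1) => ℝ) 0).symm ⁻¹' S)) =
      (Set.Ico 0 c).indicator (fun h => ENNReal.ofReal ((1 - h / c) ^ d) * volume B) h := by
    intro h hhc
    have hmem : ∀ z : Fin d → ℝ, z ∈ (Prod.mk h ⁻¹' ((MeasurableEquiv.piFinSuccAbove
      (fun _ : Fin (d + 1) => ℝ) 0).symm ⁻¹' S)) ↔ (Fin.cons h z : Fin (d + 1) → ℝ) ∈ S := by
      intro z
      simp [MeasurableEquiv.piFinSuccAbove, Fin.insertNthEquiv]
    by_cases hI : h ∈ Set.Ico 0 c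
    · rw [Set.indicator_of_mem hI]
      have hs : 0 < 1 - h / c := by
        rw [sub_pos, div_lt_one hc]; exact hI.2
      have : (Prod.mk h ⁻¹' ((MeasurableEquiv.piFinSuccAbove
          (fun _ : Fin (d + 1) => ℝ) 0).symm ⁻¹' S)) =
          (fun z => (h / c) • a + z) '' ((1 - h / c) • B) := by
        ext z
        rw [hmem, h2 h hI.1 hI.2]
        constructor
        · rintro ⟨b, hb, rfl⟩
          exact ⟨_, Set.smul_mem_smul_set hb, rfl⟩
        · rintro ⟨_, ⟨b, hb, rfl⟩, rfl⟩
          exact ⟨b, hb, rfl⟩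
      rw [this, Set.image_add_left, measure_preimage_add, Measure.addHaar_smul]
      simp only [Module.finrank_fin_fun]
      rw [abs_of_nonneg (pow_nonneg hs.le _)]
    · rw [Set.indicator_of_notMem hI]
      have : (Prod.mk h ⁻¹' ((MeasurableEquiv.piFinSuccAbove
          (fun _ : Fin (d + 1) => ℝ) 0).symm ⁻¹' S)) = ∅ := by
        ext z
        rw [hmem]
        simp only [Set.mem_empty_iff_false, iff_false]
        intro hz
        have := h1 h z hz
        exact hI ⟨this.1, lt_of_le_of_ne this.2 hhc⟩
      rw [this, measure_empty]
  have e3 : ∀ᵐ h : ℝ, h ≠ c := by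
    rw [ae_iff]; simp
  rw [lintegral_congr_ae (e3.mono e2), lintegral_indicator measurableSet_Ico,
    lintegral_mul_const _ (by fun_prop), pyr_int d hc]

end Smooth8
end

section
namespace Smooth8
open Finset MeasureTheory

namespace Mdl
variable {n : ℕ} {ι ω : Type} [Fintype ι] [DecidableEq ι] [Fintype ω]
    (M : Mdl n ι ω (Fin n → ℝ))

/-- Faces. -/
def FF (I : Finset ι) : Set (Fin n → ℝ) := {x | M.inP x ∧ ∀ i ∈ I, M.ell i x = 0}

end Mdl

variable {n d : ℕ} {ι ω : Type} [Fintype ι] [DecidableEq ι] [Fintype ω]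
    {M : Mdl n ι ω (Fin n → ℝ)} {P : Set (Fin n → ℝ)}

theorem Geo.FF_hull (G : Geo P M) (I : Finset ι) :
    M.FF I = convexHull ℝ (M.pt '' {w | I ⊆ M.N w}) := by
  apply Set.Subset.antisymm
  · intro x hx
    have hxP : x ∈ P := (G.hP x).2 hx.1
    rw [G.hull] at hxP
    have hfx : ∑ i ∈ I, M.ell i x = 0 := Finset.sum_eq_zero fun i hi => hx.2 i hi
    have key : convexHull ℝ (Set.range M.pt) ⊆ {x | M.inP x ∧ (∑ i ∈ I, M.ell i x = 0 →
        x ∈ convexHull ℝ (M.pt '' {w | I ⊆ M.N w}))} := by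
      apply convexHull_min
      · rintro _ ⟨w, rfl⟩
        refine ⟨M.inP_pt w, fun h => subset_convexHull ℝ _ ⟨w, ?_, rfl⟩⟩
        rw [Finset.sum_eq_zero_iff_of_nonneg (fun i _ => M.nonneg w i)] at h
        intro i hi
        exact (M.mem w i).2 (h i hi)
      · intro p hp q hq α β hα hβ hαβ
        refine ⟨M.inP_conv hp.1 hq.1 hα hβ hαβ, fun h => ?_⟩
        simp only [M.ell_conv _ _ _ _ _ hαβ, Finset.sum_add_distrib, ← Finset.mul_sum] at h
        have h1 : 0 ≤ ∑ i ∈ I, M.ell i p := Finset.sum_nonneg fun i _ => hp.1 i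
        have h2 : 0 ≤ ∑ i ∈ I, M.ell i q := Finset.sum_nonneg fun i _ => hq.1 i
        have h3 := mul_nonneg hα h1
        have h4 := mul_nonneg hβ h2
        have h5 : α * ∑ i ∈ I, M.ell i p = 0 := by linarith
        have h6 : β * ∑ i ∈ I, M.ell i q = 0 := by linarith
        rcases hα.eq_or_lt with h | h
        · have : β = 1 := by linarith
          rw [← h, this, zero_smul, one_smul, zero_add]
          rw [this, one_mul] at h6
          exact hq.2 h6
        rcases hβ.eq_or_lt with h' | h'
        · have : α = 1 := by linarith
          rw [← h', this, zero_smul, one_smul, add_zero]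
          rw [this, one_mul] at h5
          exact hp.2 h5
        exact convex_convexHull ℝ _ (hp.2 ((mul_eq_zero.1 h5).resolve_left h.ne'))
          (hq.2 ((mul_eq_zero.1 h6).resolve_left h'.ne')) hα hβ hαβ
    exact (key hxP).2 hfx
  · apply convexHull_min
    · rintro _ ⟨w, hw, rfl⟩
      exact ⟨M.inP_pt w, fun i hi => M.ell_pt (hw hi)⟩
    · intro p hp q hq α β hα hβ hαβ
      refine ⟨M.inP_conv hp.1 hq.1 hα hβ hαβ, fun i hi => ?_⟩
      rw [M.ell_conv _ _ _ _ _ hαβ, hp.2 i hi, hq.2 i hi]; simp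

theorem Geo.face_vertex (G : Geo P M) {I : Finset ι} {x} (hx : x ∈ M.FF I) : ∃ w, I ⊆ M.N w := by
  rw [G.FF_hull] at hx
  obtain ⟨_, w, hw, -⟩ := convexHull_nonempty_iff.1 ⟨x, hx⟩
  exact ⟨w, hw⟩

theorem Geo.le_max (G : Geo P M) (f : (Fin n → ℝ) →ₗ[ℝ] ℝ) {m : ℝ} (h : ∀ w, f (M.pt w) ≤ m) {x}
    (hx : M.inP x) : f x ≤ m := by
  have hxP : x ∈ P := (G.hP x).2 hx
  rw [G.hull] at hxP
  refine convexHull_min (t := {x | f x ≤ m}) ?_ (convex_halfSpace_le f.isLinear m) hxP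
  rintro _ ⟨w, rfl⟩
  exact h w

theorem Geo.rec_cone (G : Geo P M) {v : Fin n → ℝ} (h : ∀ k, 0 ≤ M.u k v) : v = 0 := by
  have key : ∀ f : (Fin n → ℝ) →ₗ[ℝ] ℝ, f v ≤ 0 := by
    intro f
    have : Nonempty ω := ⟨M.w0⟩
    obtain ⟨w, hw⟩ := Finite.exists_max fun w => f (M.pt w)
    have h1 : M.inP (M.pt w + v) := by
      intro l
      rw [M.ell_add]
      exact add_nonneg (M.nonneg w l) (h l)
    have := G.le_max f hw h1
    rw [map_add] at this
    linarith
  ext i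
  have h1 := key (LinearMap.proj i)
  have h2 := key (-LinearMap.proj i)
  simp only [LinearMap.neg_apply, LinearMap.proj_apply] at h1 h2
  simp only [Pi.zero_apply]
  linarith

theorem cont_ell (k : ι) {w : ω} {κ : Fin d → ι} : Continuous fun y => M.ell k (M.psi w κ y) :=
  (M.ell k).continuous_of_finiteDimensional.comp (M.psi w κ).continuous_of_finiteDimensional

theorem null_aff {f : (Fin d → ℝ) →ᵃ[ℝ] ℝ} (hf : ∃ y, f y ≠ 0) : volume {y | f y = 0} = 0 := by
  let s : AffineSubspace ℝ (Fin d → ℝ) := (AffineSubspace.mk' (0 : ℝ) (⊥ : Submodule ℝ ℝ)).comap f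
  have hs : (s : Set (Fin d → ℝ)) = {y | f y = 0} := by
    ext y
    simp [s, AffineSubspace.mem_mk']
  rw [← hs]
  apply Measure.addHaar_affineSubspace
  intro h
  obtain ⟨y, hy⟩ := hf
  have : y ∈ (s : Set (Fin d → ℝ)) := by rw [h]; trivial
  rw [hs] at this
  exact hy this

end Smooth8
end

section
namespace Smooth8
open Finset MeasureTheory

variable {n d : ℕ} {ι ω : Type} [Fintype ι] [DecidableEq ι] [Fintype ω]
    {M : Mdl n ι ω (Fin n → ℝ)} {P : Set (Fin n → ℝ)}

namespace Mdl
variable (M)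

/-- The pyramid over a facet with apex a vertex. -/
def HH (v : ω) (k : ι) : Set (Fin n → ℝ) :=
  {x | M.inP x ∧ ∀ k' ∈ (M.N v)ᶜ, M.ell k x * M.ell k' (M.pt v) ≤ M.ell k' x * M.ell k (M.pt v)}

variable {M}

theorem IsCh.cons {I : Finset ι} {k : ι} (hk : k ∉ I) {w : ω} {κ : Fin d → ι}
    (h : M.IsCh (insert k I) w κ) : M.IsCh I w (Fin.cons k κ : Fin (d + 1) → ι) := by
  have hkw : k ∈ M.N w := h.sub (mem_insert_self _ _)
  refine ⟨fun i hi => h.sub (mem_insert_of_mem hi), ?_, ?_, ?_, ?_⟩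
  · rw [Fin.cons_injective_iff]
    refine ⟨?_, h.inj⟩
    rintro ⟨i, rfl⟩
    exact h.nmem i (mem_insert_self _ _)
  · intro i
    refine Fin.cases ?_ (fun i => ?_) i
    · simpa using hkw
    · simpa using h.mem i
  · intro i
    refine Fin.cases ?_ (fun i => ?_) i
    · simpa using hk
    · simp only [Fin.cons_succ]
      exact fun h' => h.nmem i (mem_insert_of_mem h')
  · intro l hl hlI
    by_cases hlk : l = k
    · exact ⟨0, by simp [hlk]⟩
    · obtain ⟨i, hi⟩ := h.surj l hl (by simp [hlk, hlI])
      exact ⟨i.succ, by simpa using hi⟩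

end Mdl

theorem Geo.HH_measurable (v : ω) (k : ι) (w : ω) (κ : Fin d → ι) :
    MeasurableSet (M.psi w κ ⁻¹' (M.HH v k)) := by
  have : M.psi w κ ⁻¹' (M.HH v k) = (⋂ l, {y | 0 ≤ M.ell l (M.psi w κ y)}) ∩
      ⋂ k' ∈ (M.N v)ᶜ, {y | M.ell k (M.psi w κ y) * M.ell k' (M.pt v) ≤
        M.ell k' (M.psi w κ y) * M.ell k (M.pt v)} := by
    ext y
    simp [Mdl.HH, Mdl.inP]
  rw [this]
  apply IsClosed.measurableSet
  apply IsClosed.inter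
  · exact isClosed_iInter fun l => isClosed_le continuous_const (cont_ell l)
  · refine isClosed_biInter fun k' _ => isClosed_le ?_ ?_
    · exact (cont_ell k).mul continuous_const
    · exact (cont_ell k').mul continuous_const

theorem Geo.HH_le (G : Geo P M) {v : ω} {k : ι} (hk : k ∉ M.N v) {x} (hx : x ∈ M.HH v k)
    (h : M.ell k (M.pt v) ≤ M.ell k x) : x = M.pt v := by
  have hc := M.ell_pt_one hk
  have : x - M.pt v = 0 := by
    apply G.rec_cone
    intro l
    rw [M.ell_sub]
    by_cases hl : l ∈ M.N v
    · rw [M.ell_pt hl, sub_zero]; exact hx.1 l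
    · have h1 := hx.2 l (by simpa using hl)
      have h2 := M.ell_pt_one hl
      nlinarith
  exact sub_eq_zero.1 this

/-- Projection from the apex to the base. -/
theorem Geo.HH_proj {v : ω} {k : ι} (hk : k ∉ M.N v) {x} (hx : x ∈ M.HH v k)
    (h : M.ell k x < M.ell k (M.pt v)) :
    ∃ y, M.inP y ∧ M.ell k y = 0 ∧ (∀ l, l ∈ M.N v → M.ell l x = 0 → M.ell l y = 0) ∧
      x = (M.ell k x / M.ell k (M.pt v)) • M.pt v + (1 - M.ell k x / M.ell k (M.pt v)) • y := by
  have hc := M.ell_pt_one hk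
  set c := M.ell k (M.pt v) with hcdef
  set s := 1 - M.ell k x / c with hs
  have hs0 : 0 < s := by
    rw [hs, sub_pos, div_lt_one (by linarith)]; exact h
  have hval : ∀ l, M.ell l (M.pt v + s⁻¹ • (x - M.pt v)) =
      M.ell l (M.pt v) + s⁻¹ * (M.ell l x - M.ell l (M.pt v)) := by
    intro l
    rw [M.ell_add, map_smul, M.ell_sub, smul_eq_mul]
  refine ⟨M.pt v + s⁻¹ • (x - M.pt v), ?_, ?_, ?_, ?_⟩
  · intro l
    rw [hval]
    by_cases hl : l ∈ M.N v
    · rw [M.ell_pt hl, sub_zero, zero_add]; exact mul_nonneg (inv_nonneg.2 hs0.le) (hx.1 l)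
    · have h1 := hx.2 l (by simpa using hl)
      have h2 : M.ell l (M.pt v) - M.ell l x ≤ s * M.ell l (M.pt v) := by
        have h3 : M.ell k x / c * M.ell l (M.pt v) ≤ M.ell l x := by
          rw [div_mul_eq_mul_div, div_le_iff₀ (by linarith)]; exact h1
        rw [hs]; linarith
      have h3 : s⁻¹ * (M.ell l (M.pt v) - M.ell l x) ≤ M.ell l (M.pt v) := by
        rw [inv_mul_le_iff₀ hs0]; exact h2
      linarith
  · rw [hval, ← hcdef]
    have : M.ell k x - c = - (s * c) := by rw [hs]; field_simp; ring
    rw [this]; field_simp; ring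
  · intro l hl hlx
    rw [hval, M.ell_pt hl, hlx]; simp
  · have : M.ell k x / c = 1 - s := by rw [hs]; ring
    rw [this]
    have h1 : s • (M.pt v + s⁻¹ • (x - M.pt v)) = s • M.pt v + (x - M.pt v) := by
      rw [smul_add, smul_smul, mul_inv_cancel₀ hs0.ne', one_smul]
    rw [h1]; module

theorem Geo.HH_vol (G : Geo P M) {I : Finset ι} {v : ω} {κ : Fin (d + 1) → ι} (hv : M.IsCh I v κ)
    {k : ι} (hk : k ∉ M.N v)
    (ih : ∀ (w : ω) (κ : Fin d → ι), M.IsCh (insert k I) w κ → volume (M.psi w κ ⁻¹' {x | M.inP x}) =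
      ENNReal.ofReal (M.NN (insert k I) / (Nat.factorial d))) :
    volume (M.psi v κ ⁻¹' (M.HH v k)) =
      ENNReal.ofReal (M.ell k (M.pt v) / (d + 1) * (M.NN (insert k I) / (Nat.factorial d))) := by
  have hkI : k ∉ I := fun h => hk (hv.sub h)
  have hc := M.ell_pt_one hk
  have hcard := hv.card
  by_cases hw : ∃ w, insert k I ⊆ M.N w
  · obtain ⟨w, hw⟩ := hw
    obtain ⟨κ', hκ'⟩ := Mdl.IsCh.exists_of_card (M := M) (d := d) hw
      (by rw [card_insert_of_notMem hkI]; omega)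
    have hch := hκ'.cons hkI
    rw [G.chart_vol hv hch, pyr (c := M.ell k (M.pt v)) (by linarith) (Geo.HH_measurable v k w _)
      (M.psi w κ' ⁻¹' {x | M.inP x}) (M.tee κ' (M.pt v)), ih w κ' hκ',
      ENNReal.ofReal_mul (by positivity)]
    · intro h z hz
      have hx : M.psi w (Fin.cons k κ' : Fin (d + 1) → ι) (Fin.cons h z) ∈ M.HH v k := hz
      have h0 : M.ell k (M.psi w (Fin.cons k κ' : Fin (d + 1) → ι) (Fin.cons h z)) = h := by
        have := hch.ell_kap (Fin.cons h z) 0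
        simpa using this
      refine ⟨by rw [← h0]; exact hx.1 k, ?_⟩
      by_contra hlt
      push Not at hlt
      have := G.HH_le hk hx (by rw [h0]; exact hlt.le)
      rw [this] at h0
      linarith
    · intro h hh0 hhc z
      have h0 : M.ell k (M.psi w (Fin.cons k κ' : Fin (d + 1) → ι) (Fin.cons h z)) = h := by
        have := hch.ell_kap (Fin.cons h z) 0
        simpa using this
      have hz : ∀ i, M.ell (κ' i) (M.psi w (Fin.cons k κ' : Fin (d + 1) → ι) (Fin.cons h z)) = z i := by
        intro i
        have := hch.ell_kap (Fin.cons h z) i.succ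
        simpa using this
      have hq0 : 0 ≤ h / M.ell k (M.pt v) := by positivity
      have hq1 : h / M.ell k (M.pt v) < 1 := by rw [div_lt_one (by linarith)]; exact hhc
      constructor
      · intro hx
        obtain ⟨y, hy1, hy2, hy3, hy4⟩ := Geo.HH_proj hk hx (by rw [h0]; exact hhc)
        rw [h0] at hy4
        refine ⟨M.tee κ' y, ?_, ?_⟩
        · show M.inP _
          rw [hκ'.psi_tee]
          · exact hy1
          · intro l hl
            rcases mem_insert.1 hl with rfl | hl
            · exact hy2
            · exact hy3 l (hv.sub hl) (hch.ell_I _ hl)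
        · ext i
          rw [← hz i, hy4, M.ell_conv _ _ _ _ _ (by ring)]
          simp [M.tee_apply]
      · rintro ⟨b, hb, rfl⟩
        have hb' : M.inP (M.psi w κ' b) := hb
        set y := M.psi w κ' b with hy
        have hx : M.psi w (Fin.cons k κ' : Fin (d + 1) → ι) (Fin.cons h
          ((h / M.ell k (M.pt v)) • M.tee κ' (M.pt v) + (1 - h / M.ell k (M.pt v)) • b)) =
          (h / M.ell k (M.pt v)) • M.pt v + (1 - h / M.ell k (M.pt v)) • y := by
          rw [← hch.psi_tee (x := (h / M.ell k (M.pt v)) • M.pt v + (1 - h / M.ell k (M.pt v)) • y)]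
          · congr 1
            ext i
            refine Fin.cases ?_ (fun i => ?_) i
            · rw [M.tee_apply]
              simp only [Fin.cons_zero]
              rw [M.ell_conv _ _ _ _ _ (by ring), hy, hκ'.ell_I _ (mem_insert_self _ _)]
              field_simp; ring
            · rw [M.tee_apply]
              simp only [Fin.cons_succ]
              rw [M.ell_conv _ _ _ _ _ (by ring), hy, hκ'.ell_kap]
              simp [M.tee_apply]
          · intro l hl
            rw [M.ell_conv _ _ _ _ _ (by ring), hy, hκ'.ell_I _ (mem_insert_of_mem hl),
              M.ell_pt (hv.sub hl)]
            simp
        show _ ∈ M.HH v k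
        rw [hx]
        refine ⟨M.inP_conv (M.inP_pt v) hb' hq0 (by linarith) (by ring), fun k' hk' => ?_⟩
        rw [M.ell_conv _ _ _ _ _ (by ring), M.ell_conv _ _ _ _ _ (by ring)]
        have e1 : M.ell k y = 0 := by rw [hy, hκ'.ell_I _ (mem_insert_self _ _)]
        rw [e1]
        have h3 : 0 ≤ (1 - h / M.ell k (M.pt v)) * M.ell k' y * M.ell k (M.pt v) :=
          mul_nonneg (mul_nonneg (by linarith) (hb' k')) (by linarith)
        nlinarith
  · push Not at hw
    rw [M.NN_empty _ hw]
    simp only [zero_div, mul_zero, ENNReal.ofReal_zero]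
    refine measure_mono_null (t := {0}) ?_ (measure_singleton _)
    intro y hy
    have hx : M.psi v κ y ∈ M.HH v k := hy
    by_cases h : M.ell k (M.psi v κ y) < M.ell k (M.pt v)
    · exfalso
      obtain ⟨z, hz1, hz2, hz3, -⟩ := Geo.HH_proj hk hx h
      obtain ⟨w, hw'⟩ := G.face_vertex (I := insert k I) (x := z) ⟨hz1, fun l hl => by
        rcases mem_insert.1 hl with rfl | hl
        · exact hz2
        · exact hz3 l (hv.sub hl) (hv.ell_I _ hl)⟩
      exact hw w hw'
    · push Not at h
      have := G.HH_le hk hx h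
      have h2 := hv.tee_psi y
      rw [this] at h2
      rw [Set.mem_singleton_iff, ← h2]
      ext i
      rw [M.tee_apply, M.ell_pt (hv.mem i)]; rfl

theorem Geo.HH_null {I : Finset ι} {v : ω} {κ : Fin (d + 1) → ι} (hv : M.IsCh I v κ)
    {k k' : ι} (hk : k ∉ M.N v) (hk' : k' ∉ M.N v) (hkk : k ≠ k')
    (hw : ∃ w, insert k I ⊆ M.N w) :
    volume (M.psi v κ ⁻¹' (M.HH v k) ∩ M.psi v κ ⁻¹' (M.HH v k')) = 0 := by
  obtain ⟨w, hw⟩ := hw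
  have hkw : k ∈ M.N w := hw (mem_insert_self _ _)
  have hc' := M.ell_pt_one hk'
  let f : (Fin (d + 1) → ℝ) →ᵃ[ℝ] ℝ :=
    (M.ell k' (M.pt v) • M.ell k - M.ell k (M.pt v) • M.ell k').comp (M.psi v κ)
  have hf : ∀ y, f y = M.ell k' (M.pt v) * M.ell k (M.psi v κ y) -
      M.ell k (M.pt v) * M.ell k' (M.psi v κ y) := by
    intro y; simp [f]
  refine measure_mono_null (t := {y | f y = 0}) ?_ (null_aff ?_)
  · rintro y ⟨h1, h2⟩
    have h3 := h1.2 k' (by simpa using hk')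
    have h4 := h2.2 k (by simpa using hk)
    show f y = 0
    rw [hf]; linarith
  · by_contra hall
    push Not at hall
    have key : ∀ x, (∀ l ∈ I, M.ell l x = 0) →
        M.ell k' (M.pt v) * M.ell k x = M.ell k (M.pt v) * M.ell k' x := by
      intro x hx
      have := hall (M.tee κ x)
      rw [hf, hv.psi_tee hx] at this
      linarith
    have hc := M.ell_pt_one hk
    have h1 := key (M.pt w) (fun l hl => M.ell_pt (hw (mem_insert_of_mem hl)))
    rw [M.ell_pt hkw, mul_zero] at h1
    have h2 : k' ∈ M.N w := by
      rw [M.mem]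
      exact (mul_eq_zero.1 h1.symm).resolve_left (by linarith)
    have h3 := key (M.pt w + M.e w k) (fun l hl => by
      have hlw := hw (mem_insert_of_mem hl)
      rw [M.ell_add, M.ell_pt hlw, M.dual' hkw hlw, if_neg]
      · simp
      · rintro rfl; exact hk (hv.sub hl))
    rw [M.ell_add, M.ell_add, M.ell_pt hkw, M.ell_pt h2, M.dual' hkw hkw, M.dual' hkw h2,
      if_neg hkk.symm] at h3
    simp at h3
    linarith

theorem Geo.vol (G : Geo P M) : ∀ (d : ℕ) (I : Finset ι) (w : ω) (κ : Fin d → ι), M.IsCh I w κ →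
    volume (M.psi w κ ⁻¹' {x | M.inP x}) = ENNReal.ofReal (M.NN I / (Nat.factorial d)) := by
  intro d
  induction d with
  | zero =>
    intro I w κ h
    have hI : I = M.N w := by
      apply eq_of_subset_of_card_le h.sub
      rw [M.card]; have := h.card; omega
    have : M.psi w κ ⁻¹' {x | M.inP x} = Set.univ := by
      ext y
      simp only [Set.mem_preimage, Set.mem_univ, iff_true, Set.mem_ofPred_eq]
      rw [M.psi_apply]
      simpa using M.inP_pt w
    rw [this, hI, M.NN_vert, volume_pi, Measure.pi_of_empty]
    simp
  | succ d ih =>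
    intro I v κ hv
    have hcard := hv.card
    have hKne : ((M.N v)ᶜ).Nonempty := by
      obtain ⟨_, _, g, -, -, -, hg, -⟩ := M.edge (hv.mem 0)
      exact ⟨g, by simpa using hg⟩
    have hU : M.psi v κ ⁻¹' {x | M.inP x} = ⋃ k ∈ (M.N v)ᶜ, M.psi v κ ⁻¹' (M.HH v k) := by
      ext y
      simp only [Set.mem_preimage, Set.mem_iUnion, Set.mem_ofPred_eq]
      constructor
      · intro hy
        obtain ⟨k, hk, hmin⟩ := exists_min_image _
          (fun k => M.ell k (M.psi v κ y) / M.ell k (M.pt v)) hKne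
        refine ⟨k, hk, hy, fun k' hk' => ?_⟩
        have h1 := hmin k' hk'
        have h2 := M.ell_pt_one (mem_compl.1 hk)
        have h3 := M.ell_pt_one (mem_compl.1 hk')
        rwa [div_le_div_iff₀ (by linarith) (by linarith)] at h1
      · rintro ⟨k, hk, h⟩
        exact h.1
    have hvol : ∀ k ∈ (M.N v)ᶜ, volume (M.psi v κ ⁻¹' (M.HH v k)) =
        ENNReal.ofReal (M.ell k (M.pt v) / (d + 1) * (M.NN (insert k I) / (Nat.factorial d))) :=
      fun k hk => G.HH_vol hv (mem_compl.1 hk) (fun w κ h => ih _ w κ h)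
    rw [hU, measure_biUnion_finset₀]
    · rw [Finset.sum_congr rfl hvol, ← ENNReal.ofReal_sum_of_nonneg]
      · congr 1
        rw [M.NN_rec (p := M.pt v) (fun l hl => M.ell_pt (hv.sub hl)) (by omega)]
        rw [← Finset.sum_subset (s₁ := (M.N v)ᶜ) (s₂ := Iᶜ)
          (Finset.compl_subset_compl.2 hv.sub)]
        · rw [Finset.sum_div]
          refine Finset.sum_congr rfl fun k _ => ?_
          rw [Nat.factorial_succ]
          push_cast
          have : (d : ℝ) + 1 ≠ 0 := by positivity
          field_simp
        · intro k _ hk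
          have : k ∈ M.N v := by simpa using hk
          rw [M.ell_pt this, zero_mul]
      · intro k hk
        have := M.nonneg v k
        have := M.NN_nonneg (insert k I)
        positivity
    · intro k hk k' hk' hkk
      have hk1 : k ∉ M.N v := by simpa using hk
      have hk2 : k' ∉ M.N v := by simpa using hk'
      show volume _ = 0
      by_cases hw : ∃ w, insert k I ⊆ M.N w
      · exact Geo.HH_null hv hk1 hk2 hkk hw
      · push Not at hw
        refine measure_mono_null Set.inter_subset_left ?_
        rw [hvol k (by simpa using hk1), M.NN_empty _ hw]
        simp
    · intro k _
      exact (Geo.HH_measurable v k v κ).nullMeasurableSet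

end Smooth8
end

section
namespace Smooth8
open Finset MeasureTheory

variable {n d : ℕ} {ι ω : Type} [Fintype ι] [DecidableEq ι] [Fintype ω]
    {M : Mdl n ι ω (Fin n → ℝ)} {P : Set (Fin n → ℝ)}

namespace Mdl

theorem pt_FF {I : Finset ι} {w : ω} (h : I ⊆ M.N w) : M.pt w ∈ M.FF I :=
  ⟨M.inP_pt w, fun _ hi => M.ell_pt (h hi)⟩

theorem pt_e_FF {I : Finset ι} {w : ω} (h : I ⊆ M.N w) {k} (hk : k ∈ M.N w) (hkI : k ∉ I) :
    M.pt w + M.e w k ∈ M.FF I := by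
  refine ⟨M.inP_e hk, fun i hi => ?_⟩
  rw [M.ell_add, M.ell_pt (h hi), M.dual' hk (h hi), if_neg]
  · simp
  · rintro rfl; exact hkI hi

theorem psi_linear (w : ω) (κ : Fin d → ι) (y) :
    (M.psi w κ).linear y = ∑ i, y i • M.e w (κ i) := by
  simp [psi, Fintype.linearCombination_apply]

theorem IsCh.vectorSpan {I : Finset ι} {w : ω} {κ : Fin d → ι} (h : M.IsCh I w κ) :
    vectorSpan ℝ (M.FF I) = LinearMap.range (M.psi w κ).linear := by
  apply le_antisymm
  · rw [vectorSpan_def, Submodule.span_le]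
    rintro _ ⟨x, hx, y, hy, rfl⟩
    refine ⟨M.tee κ x - M.tee κ y, ?_⟩
    have := (M.psi w κ).linearMap_vsub (M.tee κ x) (M.tee κ y)
    rw [h.psi_tee hx.2, h.psi_tee hy.2] at this
    exact this
  · rintro _ ⟨y, rfl⟩
    rw [psi_linear]
    refine Submodule.sum_mem _ fun i _ => Submodule.smul_mem _ _ ?_
    have := vsub_mem_vectorSpan ℝ (pt_e_FF h.sub (h.mem i) (h.nmem i)) (pt_FF h.sub)
    simpa using this

theorem IsCh.psi_lin_inj {I : Finset ι} {w : ω} {κ : Fin d → ι} (h : M.IsCh I w κ) :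
    Function.Injective (M.psi w κ).linear := by
  rw [AffineMap.linear_injective_iff]
  exact Function.LeftInverse.injective h.tee_psi

theorem IsCh.fdim {I : Finset ι} {w : ω} {κ : Fin d → ι} (h : M.IsCh I w κ) :
    fdim (M.FF I) = d := by
  unfold Smooth8.Mdl.FF _root_.fdim
  have := h.vectorSpan
  unfold Smooth8.Mdl.FF at this
  rw [this, LinearMap.finrank_range_of_inj h.psi_lin_inj]
  simp

theorem IsCh.mem_vectorSpan {I : Finset ι} {w : ω} {κ : Fin d → ι} (h : M.IsCh I w κ) {x} :
    x ∈ _root_.vectorSpan ℝ (M.FF I) ↔ ∀ l ∈ I, M.u l x = 0 := by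
  rw [h.vectorSpan]
  constructor
  · rintro ⟨y, rfl⟩ l hl
    rw [psi_linear, map_sum]
    refine Finset.sum_eq_zero fun i _ => ?_
    rw [map_smul, M.dual' (h.mem i) (h.sub hl), if_neg]
    · simp
    · intro h'; exact h.nmem i (h' ▸ hl)
  · intro hx
    have h1 := h.psi_tee (x := M.pt w + x) (fun l hl => by
      rw [M.ell_add, M.ell_pt (h.sub hl), hx l hl, zero_add])
    refine ⟨M.tee κ (M.pt w + x), ?_⟩
    rw [psi_apply] at h1
    rw [psi_linear]
    exact add_left_cancel h1

theorem IsCh.mem_affineSpan {I : Finset ι} {w : ω} {κ : Fin d → ι} (h : M.IsCh I w κ) {x} :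
    x ∈ affineSpan ℝ (M.FF I) ↔ ∀ l ∈ I, M.ell l x = 0 := by
  have hw : M.pt w ∈ affineSpan ℝ (M.FF I) := subset_affineSpan ℝ _ (pt_FF h.sub)
  rw [← AffineSubspace.vsub_right_mem_direction_iff_mem hw, direction_affineSpan, vsub_eq_sub,
    h.mem_vectorSpan]
  refine forall₂_congr fun l hl => ?_
  rw [M.ell_sub, M.ell_pt (h.sub hl), sub_zero]

theorem FF_inj {I I' : Finset ι} {w w' : ω} (h : I ⊆ M.N w) (h' : I' ⊆ M.N w')
    (he : M.FF I = M.FF I') : I = I' := by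
  have key : ∀ {I I' : Finset ι} {w : ω}, I ⊆ M.N w → M.FF I = M.FF I' → I' ⊆ I := by
    intro I I' w h he i hi
    by_contra hiI
    have h1 := pt_FF h
    rw [he] at h1
    have hiw : i ∈ M.N w := (M.mem w i).2 (h1.2 i hi)
    have h2 := pt_e_FF h hiw hiI
    rw [he] at h2
    have h3 := h2.2 i hi
    rw [M.ell_add, h1.2 i hi, M.dual' hiw hiw] at h3
    simp at h3
  exact Subset.antisymm (key h' he.symm) (key h he)

/-- Positive set of a functional at a vertex. -/
noncomputable def pos (I : Finset ι) (w : ω) (f : (Fin n → ℝ) →ₗ[ℝ] ℝ) : Finset ι :=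
  open Classical in (M.N w).filter (fun k => k ∈ I ∨ f (M.e w k) ≠ 0)

theorem f_span (w : ω) (f : (Fin n → ℝ) →ₗ[ℝ] ℝ) (x) :
    f x = f (M.pt w) + ∑ k ∈ M.N w, M.ell k x * f (M.e w k) := by
  conv_lhs => rw [M.span_pt w x]
  simp [map_add, map_sum]

theorem pos_face {I : Finset ι} {w : ω} (h : I ⊆ M.N w) (f : (Fin n → ℝ) →ₗ[ℝ] ℝ)
    (hf : ∀ k ∈ M.N w, k ∉ I → 0 ≤ f (M.e w k)) {x} (hx : x ∈ M.FF I) :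
    f (M.pt w) ≤ f x ∧ (f x = f (M.pt w) ↔ x ∈ M.FF (pos (M := M) I w f)) := by
  have hnn : ∀ k ∈ M.N w, 0 ≤ M.ell k x * f (M.e w k) := by
    intro k hk
    by_cases hkI : k ∈ I
    · rw [hx.2 k hkI, zero_mul]
    · exact mul_nonneg (hx.1 k) (hf k hk hkI)
  rw [f_span (M := M) w f x]
  refine ⟨by have := Finset.sum_nonneg hnn; linarith, ?_⟩
  rw [add_eq_left, Finset.sum_eq_zero_iff_of_nonneg hnn]
  constructor
  · intro h0
    refine ⟨hx.1, fun i hi => ?_⟩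
    simp only [pos, mem_filter] at hi
    rcases hi.2 with h1 | h1
    · exact hx.2 i h1
    · exact (mul_eq_zero.1 (h0 i hi.1)).resolve_right h1
  · intro h0 i hi
    by_cases h1 : f (M.e w i) = 0
    · rw [h1, mul_zero]
    · rw [h0.2 i (by simp [pos, hi, h1]), zero_mul]

theorem sub_pos {I : Finset ι} {w : ω} (h : I ⊆ M.N w) (f : (Fin n → ℝ) →ₗ[ℝ] ℝ) :
    I ⊆ pos (M := M) I w f := fun i hi => by simp [pos, h hi, hi]

theorem pos_sub (I : Finset ι) (w : ω) (f : (Fin n → ℝ) →ₗ[ℝ] ℝ) :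
    pos (M := M) I w f ⊆ M.N w := filter_subset _ _

theorem FF_mono {I I' : Finset ι} (h : I ⊆ I') : M.FF I' ⊆ M.FF I :=
  fun _ hx => ⟨hx.1, fun i hi => hx.2 i (h hi)⟩

/-- Characterization of the minimizing face. -/
theorem argmin_eq {I : Finset ι} {w : ω} (h : I ⊆ M.N w) (f : (Fin n → ℝ) →ₗ[ℝ] ℝ)
    (hf : ∀ k ∈ M.N w, k ∉ I → 0 ≤ f (M.e w k)) :
    {x ∈ M.FF I | ∀ y ∈ M.FF I, f x ≤ f y} = M.FF (pos (M := M) I w f) := by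
  ext x
  constructor
  · rintro ⟨hx, hmin⟩
    have h1 := pos_face h f hf hx
    exact h1.2.1 (le_antisymm (hmin _ (pt_FF h)) h1.1)
  · intro hx
    have hx' := FF_mono (sub_pos h f) hx
    refine ⟨hx', fun y hy => ?_⟩
    rw [(pos_face h f hf hx').2.2 hx]
    exact (pos_face h f hf hy).1

/-- A vertex in the minimizing face is a local minimum. -/
theorem nonneg_of_min {I : Finset ι} {w : ω} (h : I ⊆ M.N w) (f : (Fin n → ℝ) →ₗ[ℝ] ℝ)
    (hw : ∀ y ∈ M.FF I, f (M.pt w) ≤ f y) : ∀ k ∈ M.N w, k ∉ I → 0 ≤ f (M.e w k) := by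
  intro k hk hkI
  have := hw _ (pt_e_FF h hk hkI)
  rw [map_add] at this
  linarith

end Mdl

theorem Geo.exists_min (G : Geo P M) {I : Finset ι} (hI : ∃ w, I ⊆ M.N w)
    (f : (Fin n → ℝ) →ₗ[ℝ] ℝ) :
    ∃ w, I ⊆ M.N w ∧ ∀ y ∈ M.FF I, f (M.pt w) ≤ f y := by
  obtain ⟨w, hw, hmin⟩ := (Set.toFinite {w | I ⊆ M.N w}).exists_minimalFor (fun w => f (M.pt w)) _ hI
  refine ⟨w, hw, fun y hy => ?_⟩
  rw [G.FF_hull] at hy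
  refine convexHull_min (t := {x | f (M.pt w) ≤ f x}) ?_ (convex_halfSpace_ge f.isLinear _) hy
  rintro _ ⟨w', hw', rfl⟩
  rcases le_total (f (M.pt w)) (f (M.pt w')) with h | h
  · exact h
  · exact hmin hw' h

theorem Geo.isFace_iff (G : Geo P M) {I : Finset ι} (hI : ∃ w, I ⊆ M.N w) (F : Set (Fin n → ℝ)) :
    IsFace (M.FF I) F ↔ ∃ w I', I ⊆ I' ∧ I' ⊆ M.N w ∧ F = M.FF I' := by
  constructor
  · rintro ⟨⟨x, hx⟩, f, c, hc, rfl⟩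
    obtain ⟨w, hw, hmin⟩ := G.exists_min hI f
    have hfc : f (M.pt w) = c := by
      apply le_antisymm
      · rw [← hx.2]; exact hmin x hx.1
      · exact hc _ (Mdl.pt_FF hw)
    refine ⟨w, Mdl.pos I w f, Mdl.sub_pos hw f, Mdl.pos_sub I w f, ?_⟩
    ext y
    have hnn := Mdl.nonneg_of_min hw f hmin
    constructor
    · rintro ⟨hy, hyc⟩
      exact (Mdl.pos_face hw f hnn hy).2.1 (by rw [hyc, hfc])
    · intro hy
      have hy' := Mdl.FF_mono (Mdl.sub_pos hw f) hy
      exact ⟨hy', by rw [(Mdl.pos_face hw f hnn hy').2.2 hy, hfc]⟩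
  · rintro ⟨w, I', hII, hw, rfl⟩
    refine ⟨⟨_, Mdl.pt_FF hw⟩, ∑ i ∈ I', M.u i, ∑ i ∈ I', M.u i (M.pt w), ?_, ?_⟩
    · intro x hx
      rw [LinearMap.sum_apply]
      refine Finset.sum_le_sum fun i hi => ?_
      have := M.ell_sub i x (M.pt w)
      rw [map_sub, M.ell_pt (hw hi)] at this
      have := hx.1 i
      linarith
    · have key : ∀ x, ∑ i ∈ I', M.u i x - ∑ i ∈ I', M.u i (M.pt w) = ∑ i ∈ I', M.ell i x := by
        intro x
        rw [← Finset.sum_sub_distrib]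
        refine Finset.sum_congr rfl fun i hi => ?_
        rw [← map_sub, M.ell_sub, M.ell_pt (hw hi), sub_zero]
      ext x
      simp only [LinearMap.sum_apply]
      constructor
      · intro hx
        refine ⟨Mdl.FF_mono hII hx, ?_⟩
        have := key x
        rw [Finset.sum_eq_zero (fun i hi => hx.2 i hi)] at this
        linarith
      · rintro ⟨hx, hx2⟩
        have h1 := key x
        rw [hx2, sub_self] at h1
        refine ⟨hx.1, fun i hi => ?_⟩
        exact (Finset.sum_eq_zero_iff_of_nonneg (fun i _ => hx.1 i)).1 h1.symm i hi

theorem Geo.FF_empty (G : Geo P M) : M.FF ∅ = P := by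
  ext x; simp [Mdl.FF, G.hP x]

/-- Relative volume with explicit dimension. -/
def RelVolD {n : ℕ} (d : ℕ) (F : Set (Fin n → ℝ)) (vol : ℝ) : Prop :=
  ∃ T : (Fin n → ℝ) →ᵃ[ℝ] (Fin d → ℝ),
    Set.BijOn T (affineSpan ℝ F : Set (Fin n → ℝ)) Set.univ ∧
    T '' ((affineSpan ℝ F : Set (Fin n → ℝ)) ∩ {x | IsLatticePt x}) = {y | IsLatticePt y} ∧
    vol = (volume (T '' F)).toReal

theorem Geo.relVol (G : Geo P M) {I : Finset ι} {w : ω} {κ : Fin d → ι} (h : M.IsCh I w κ) (r : ℝ) :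
    HasRelVol (M.FF I) r ↔ r = M.NN I / (Nat.factorial d) := by
  have hrd : HasRelVol (M.FF I) r ↔ RelVolD d (M.FF I) r := by
    have : HasRelVol (M.FF I) r ↔ RelVolD (fdim (M.FF I)) (M.FF I) r := Iff.rfl
    rw [this, h.fdim]
  rw [hrd]
  have hvol := G.vol d I w κ h
  have hpre : M.psi w κ ⁻¹' {x | M.inP x} = M.psi w κ ⁻¹' (M.FF I) := by
    ext y
    exact ⟨fun hy => ⟨hy, fun i hi => h.ell_I y hi⟩, fun hy => hy.1⟩
  rw [hpre] at hvol
  have hnn : 0 ≤ M.NN I / (Nat.factorial d) := div_nonneg (M.NN_nonneg I) (by positivity)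
  have hpsiA : ∀ y, M.psi w κ y ∈ affineSpan ℝ (M.FF I) := fun y =>
    h.mem_affineSpan.2 fun l hl => h.ell_I y hl
  constructor
  · rintro ⟨T, hT1, hT2, rfl⟩
    let φ := T.comp (M.psi w κ)
    have hinj : Function.Injective φ := by
      intro y y' hyy
      have := hT1.injOn (hpsiA y) (hpsiA y') hyy
      rw [← h.tee_psi y, this, h.tee_psi]
    have hv := lat_vol φ
      (fun y hy => by
        have : φ y ∈ T '' ((affineSpan ℝ (M.FF I) : Set (Fin n → ℝ)) ∩ {x | IsLatticePt x}) :=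
          ⟨M.psi w κ y, ⟨hpsiA y, G.lat_psi h hy⟩, rfl⟩
        rw [hT2] at this
        exact this)
      (fun y hy => by
        have : y ∈ T '' ((affineSpan ℝ (M.FF I) : Set (Fin n → ℝ)) ∩ {x | IsLatticePt x}) := by
          rw [hT2]; exact hy
        obtain ⟨x, ⟨hxA, hxl⟩, rfl⟩ := this
        refine ⟨M.tee κ x, G.lat_tee κ hxl, ?_⟩
        show T (M.psi w κ (M.tee κ x)) = T x
        rw [h.psi_tee (h.mem_affineSpan.1 hxA)])
      (T '' (M.FF I))
    have hpre2 : φ ⁻¹' (T '' (M.FF I)) = M.psi w κ ⁻¹' (M.FF I) := by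
      ext y
      constructor
      · rintro ⟨x, hx, hxy⟩
        have := hT1.injOn (subset_affineSpan ℝ _ hx) (hpsiA y) hxy
        show M.psi w κ y ∈ M.FF I
        rw [← this]; exact hx
      · intro hy; exact ⟨_, hy, rfl⟩
    rw [← hv, hpre2, hvol, ENNReal.toReal_ofReal hnn]
  · rintro rfl
    refine ⟨M.tee κ, ⟨fun _ _ => trivial, ?_, ?_⟩, ?_, ?_⟩
    · intro x hx x' hx' hxx
      rw [← h.psi_tee (h.mem_affineSpan.1 hx), hxx, h.psi_tee (h.mem_affineSpan.1 hx')]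
    · intro y _
      exact ⟨M.psi w κ y, hpsiA y, h.tee_psi y⟩
    · ext y
      constructor
      · rintro ⟨x, ⟨-, hx⟩, rfl⟩
        exact G.lat_tee κ hx
      · intro hy
        exact ⟨M.psi w κ y, ⟨hpsiA y, G.lat_psi h hy⟩, h.tee_psi y⟩
    · have : M.tee κ '' (M.FF I) = M.psi w κ ⁻¹' (M.FF I) := by
        ext y
        constructor
        · rintro ⟨x, hx, rfl⟩
          show M.psi w κ (M.tee κ x) ∈ M.FF I
          rw [h.psi_tee hx.2]; exact hx
        · intro hy
          exact ⟨_, hy, h.tee_psi y⟩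
      rw [this, hvol, ENNReal.toReal_ofReal hnn]

theorem Geo.faceSum_eq (G : Geo P M) (𝓕 : Finset (Set (Fin n → ℝ))) (volf : Set (Fin n → ℝ) → ℝ)
    (h1 : ∀ F, F ∈ 𝓕 ↔ IsFace P F) (h2 : ∀ F ∈ 𝓕, HasRelVol F (volf F)) :
    faceSum 𝓕 volf = M.DD ∅ := by
  classical
  have h𝓕 : 𝓕 = ((univ : Finset (Finset ι)).filter (fun I => ∃ w, I ⊆ M.N w)).image M.FF := by
    ext F
    rw [h1, ← G.FF_empty, G.isFace_iff ⟨M.w0, empty_subset _⟩]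
    simp only [mem_image, mem_filter, mem_univ, true_and, empty_subset]
    constructor
    · rintro ⟨w, I, hI, rfl⟩; exact ⟨I, ⟨w, hI⟩, rfl⟩
    · rintro ⟨I, ⟨w, hI⟩, rfl⟩; exact ⟨w, I, hI, rfl⟩
  unfold faceSum
  rw [h𝓕, sum_image]
  · unfold Mdl.DD
    rw [sum_filter]
    refine Finset.sum_congr rfl fun I _ => ?_
    simp only [empty_subset, if_true, card_empty, pow_zero, one_mul]
    split_ifs with hI
    · obtain ⟨w, hw⟩ := id hI
      have hle : I.card ≤ n := by rw [← M.card w]; exact card_le_card hw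
      obtain ⟨κ, hκ⟩ := Mdl.IsCh.exists_of_card (M := M) (d := n - I.card) hw (by omega)
      have hv := (G.relVol hκ _).1 (h2 (M.FF I) (by
        rw [h𝓕]; exact mem_image_of_mem _ (by simpa using hI)))
      rw [hv, hκ.fdim, Nat.sub_sub_self hle, Nat.factorial_succ]
      have : (Nat.factorial (n - I.card) : ℝ) ≠ 0 := by positivity
      push_cast [Nat.cast_sub hle]
      field_simp
      ring
    · push Not at hI
      rw [M.NN_empty I hI]; simp
  · intro I hI I' hI' he
    simp only [coe_filter, mem_univ, true_and] at hI hI'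
    obtain ⟨w, hw⟩ := hI
    obtain ⟨w', hw'⟩ := hI'
    exact Mdl.FF_inj hw hw' he

theorem Geo.faceSumZero_iff (G : Geo P M) : FaceSumZero P ↔ M.DD ∅ = 0 := by
  classical
  constructor
  · rintro ⟨𝓕, volf, h1, h2, h0⟩
    rw [← G.faceSum_eq 𝓕 volf h1 h2, h0]
  · intro h0
    let 𝓕 := ((univ : Finset (Finset ι)).filter (fun I => ∃ w, I ⊆ M.N w)).image M.FF
    have h1 : ∀ F, F ∈ 𝓕 ↔ IsFace P F := by
      intro F
      rw [← G.FF_empty, G.isFace_iff ⟨M.w0, empty_subset _⟩]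
      simp only [𝓕, mem_image, mem_filter, mem_univ, true_and, empty_subset]
      constructor
      · rintro ⟨I, ⟨w, hI⟩, rfl⟩; exact ⟨w, I, hI, rfl⟩
      · rintro ⟨w, I, hI, rfl⟩; exact ⟨I, ⟨w, hI⟩, rfl⟩
    have h2 : ∀ F, F ∈ 𝓕 → ∃ r, HasRelVol F r := by
      intro F hF
      simp only [𝓕, mem_image, mem_filter, mem_univ, true_and] at hF
      obtain ⟨I, ⟨w, hw⟩, rfl⟩ := hF
      have hle : I.card ≤ n := by rw [← M.card w]; exact card_le_card hw
      obtain ⟨κ, hκ⟩ := Mdl.IsCh.exists_of_card (M := M) (d := n - I.card) hw (by omega)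
      exact ⟨_, (G.relVol hκ _).2 rfl⟩
    choose! volf hvolf using h2
    exact ⟨𝓕, volf, h1, hvolf, by rw [G.faceSum_eq 𝓕 volf h1 hvolf, h0]⟩

end Smooth8
end

section
namespace Smooth8
open Finset MeasureTheory

variable {n d : ℕ} {ι ω : Type} [Fintype ι] [DecidableEq ι] [Fintype ω]
    {M : Mdl n ι ω (Fin n → ℝ)} {P : Set (Fin n → ℝ)}

theorem Geo.FF_edge (G : Geo P M) {w : ω} {k : ι} (hk : k ∈ M.N w) :
    ∃ c : ℝ, 0 < c ∧ M.FF ((M.N w).erase k) = segment ℝ (M.pt w) (M.pt w + c • M.e w k) := by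
  obtain ⟨w', c, hc, hpt, hadj, -⟩ := M.adj w k hk
  refine ⟨c, by linarith, ?_⟩
  rw [G.FF_hull, ← hpt, ← convexHull_pair]
  congr 1
  ext x
  constructor
  · rintro ⟨y, hy, rfl⟩
    rcases hadj y hy with rfl | rfl
    · exact Or.inl rfl
    · exact Or.inr rfl
  · rintro (rfl | rfl)
    · exact ⟨w, erase_subset _ _, rfl⟩
    · refine ⟨w', fun l hl => ?_, rfl⟩
      rw [mem_erase] at hl
      rw [M.mem, hpt, M.ell_add, map_smul, M.dual' hk hl.2, M.ell_pt hl.2, if_neg hl.1]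
      simp

theorem Geo.FF_lattice (G : Geo P M) (I : Finset ι) : IsLatticePolytope (M.FF I) := by
  classical
  refine ⟨(univ.filter (fun w => I ⊆ M.N w)).image M.pt, ?_, ?_⟩
  · intro v hv
    rw [mem_image] at hv
    obtain ⟨w, -, rfl⟩ := hv
    exact G.latpt w
  · rw [G.FF_hull]
    congr 1
    ext x
    simp

theorem Mdl.fdim_card {I : Finset ι} {w : ω} (h : I ⊆ M.N w) : I.card + fdim (M.FF I) = n := by
  have hle : I.card ≤ n := by rw [← M.card w]; exact card_le_card h
  obtain ⟨κ, hκ⟩ := Mdl.IsCh.exists_of_card (M := M) (d := n - I.card) h (by omega)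
  rw [hκ.fdim]; omega

theorem Geo.FF_smooth (G : Geo P M) (I : Finset ι) : IsSmoothPoly (M.FF I) := by
  intro v hv
  have hv0 : v ∈ M.FF I := hv.1
  rw [G.FF_hull] at hv
  obtain ⟨w, hw, rfl⟩ := extremePoints_convexHull_subset hv
  have hw : I ⊆ M.N w := hw
  clear hv
  obtain ⟨κ, hκ⟩ := Mdl.IsCh.exists_of_card (M := M) hw (Mdl.fdim_card hw)
  choose z hz using fun i => G.late w (κ i) (hκ.mem i)
  choose c hc hce using fun i => G.FF_edge (hκ.mem i)
  have hzz : ∀ i, ((fun j => ((z i j : ℝ))) : Fin n → ℝ) = M.e w (κ i) := fun i => by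
    funext j; rw [hz i j]
  have hdual : ∀ i j, M.u (κ j) (M.e w (κ i)) = if j = i then 1 else 0 := by
    intro i j
    rw [M.dual' (hκ.mem i) (hκ.mem j)]
    simp [hκ.inj.eq_iff]
  have hsum : ∀ (y : Fin (fdim (M.FF I)) → ℝ) j, M.u (κ j) (∑ i, y i • M.e w (κ i)) = y j := by
    intro y j
    rw [map_sum]
    simp [hdual]
  refine ⟨z, c, hc, ?_, ?_, ?_, ?_, ?_⟩
  · intro i
    refine ⟨?_, ?_⟩
    · intro h0
      have := hzz i
      rw [h0] at this
      have h2 := hdual i i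
      rw [← this] at h2
      have h3 : (fun j => (((0 : Fin n → ℤ) j : ℤ) : ℝ)) = (0 : Fin n → ℝ) := by funext j; simp
      rw [h3] at h2
      simp at h2
    · intro d hd
      choose q hq using hd
      have h1 : M.e w (κ i) = (d : ℝ) • (fun j => (q j : ℝ)) := by
        rw [← hzz i]; funext j
        rw [hq j]; simp
      obtain ⟨m, hm⟩ := G.latl (κ i) (fun j => (q j : ℝ)) (fun j => ⟨q j, rfl⟩)
      have h2 := hdual i i
      rw [h1, map_smul, hm] at h2
      simp only [if_true, smul_eq_mul] at h2
      exact IsUnit.of_mul_eq_one m (by exact_mod_cast h2)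
  · have hzz' : (fun i => ((fun j => ((z i j : ℝ))) : Fin n → ℝ)) = fun i => M.e w (κ i) := funext hzz
    rw [hzz', Fintype.linearIndependent_iff]
    intro g hg i
    have := hsum g i
    rw [hg, map_zero] at this
    exact this.symm
  · intro i
    rw [hzz, hκ.mem_vectorSpan]
    intro l hl
    rw [M.dual' (hκ.mem i) (hw hl), if_neg]
    intro h; exact hκ.nmem i (h ▸ hl)
  · intro x hx
    rw [hκ.vectorSpan] at hx
    obtain ⟨y, hy⟩ := hx
    rw [Mdl.psi_linear] at hy
    choose m hm using fun i => G.latl (κ i) (fun j => (x j : ℝ)) (fun j => ⟨x j, rfl⟩)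
    refine ⟨m, ?_⟩
    rw [← hy]
    refine Finset.sum_congr rfl fun i _ => ?_
    rw [hzz, ← hm i, ← hy, hsum]
  · intro F
    simp only [hzz]
    constructor
    · rintro ⟨hF, hvF, hd⟩
      obtain ⟨w', I', hII, hw', rfl⟩ := (G.isFace_iff ⟨w, hw⟩ F).1 hF
      have hI' : I' ⊆ M.N w := fun i hi => (M.mem w i).2 (hvF.2 i hi)
      have hcard := Mdl.fdim_card hI'
      have h1 : (M.N w \ I').card = 1 := by
        rw [card_sdiff_of_subset hI', M.card]; omega
      obtain ⟨k, hk⟩ := card_eq_one.1 h1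
      have hkm : k ∈ M.N w \ I' := by rw [hk]; simp
      rw [mem_sdiff] at hkm
      obtain ⟨i, rfl⟩ := hκ.surj k hkm.1 (fun h => hkm.2 (hII h))
      refine ⟨i, ?_⟩
      rw [← hce i]
      congr 1
      ext l
      rw [mem_erase]
      constructor
      · intro hl
        exact ⟨fun h => hkm.2 (h ▸ hl), hI' hl⟩
      · rintro ⟨h1, h2⟩
        by_contra h3
        have : l ∈ M.N w \ I' := mem_sdiff.2 ⟨h2, h3⟩
        rw [hk, mem_singleton] at this
        exact h1 this
    · rintro ⟨i, rfl⟩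
      rw [← hce i]
      have hsub : (M.N w).erase (κ i) ⊆ M.N w := erase_subset _ _
      refine ⟨(G.isFace_iff ⟨w, hw⟩ _).2 ⟨w, _, ?_, hsub, rfl⟩, Mdl.pt_FF hsub, ?_⟩
      · intro l hl
        exact mem_erase.2 ⟨fun h => hκ.nmem i (h ▸ hl), hw hl⟩
      · have := Mdl.fdim_card (M := M) hsub
        rw [card_erase_of_mem (hκ.mem i), M.card] at this
        have h3 : 0 < n := by rw [← M.card w]; exact card_pos.2 ⟨_, hκ.mem i⟩
        omega

end Smooth8
end

section
namespace Smooth8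
open Finset MeasureTheory

variable {n d : ℕ} {ι ω : Type} [Fintype ι] [DecidableEq ι] [Fintype ω]
    {M : Mdl n ι ω (Fin n → ℝ)} {P : Set (Fin n → ℝ)}

/-- Moving between the pieces of a Cayley structure. -/
theorem Mdl.move {C : Finset ι} (hC : ∀ p, ∑ c ∈ C, M.ell c p = 1) {a b : ι} (ha : a ∈ C) (hb : b ∈ C)
    (hab : b ≠ a) {w : ω} (hw : C.erase a ⊆ M.N w) :
    ∃ w', C.erase b ⊆ M.N w' ∧ M.N w' = insert a ((M.N w).erase b) ∧
      ∀ k ∈ M.N w, k ∉ C → M.e w' k = M.e w k := by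
  have hbw : b ∈ M.N w := hw (mem_erase.2 ⟨hab, hb⟩)
  obtain ⟨w', c, g, -, -, -, hg, hN, -, -, -, he⟩ := M.edge hbw
  have hbw' : b ∉ M.N w' := by
    rw [hN, mem_insert, mem_erase]
    rintro (h | h)
    · exact hg (h ▸ hbw)
    · exact h.1 rfl
  obtain ⟨c', hc', hcn, -, hall⟩ := M.miss hC w'
  obtain ⟨c₂, hc₂, hcn₂, -, hall₂⟩ := M.miss hC w
  have h1 : b = c' := by
    by_contra h; exact hbw' (hall b hb h)
  have h2 : a = c₂ := by
    by_contra h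
    exact hcn₂ (hw (mem_erase.2 ⟨fun h' => h h'.symm, hc₂⟩))
  subst h1 h2
  have haw' : a ∈ M.N w' := hall a ha (Ne.symm hab)
  have hag : a = g := by
    rw [hN, mem_insert, mem_erase] at haw'
    rcases haw' with h | h
    · exact h
    · exact absurd h.2 hcn₂
  subst hag
  refine ⟨w', fun l hl => ?_, hN, fun k hk hkC => ?_⟩
  · rw [mem_erase] at hl; exact hall l hl.2 hl.1
  · rw [he k hk (fun h => hkC (h ▸ hb))]
    have h3 : ∑ c ∈ C, M.u c (M.e w k) = 0 := by
      have h4 := hC (M.pt w + M.e w k)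
      simp only [M.ell_add] at h4
      rw [sum_add_distrib, hC] at h4
      linarith
    rw [Finset.sum_eq_single_of_mem a ha] at h3
    · rw [h3]; simp
    · intro c hc hca
      rw [M.dual' hk (hw (mem_erase.2 ⟨hca, hc⟩)), if_neg]
      rintro rfl; exact hkC hc

theorem Geo.normEquiv_aux (G : Geo P M) {C : Finset ι} (hC : ∀ p, ∑ c ∈ C, M.ell c p = 1) {a b : ι}
    (ha : a ∈ C) (hb : b ∈ C) (hab : b ≠ a) (hI : ∃ w, C.erase a ⊆ M.N w)
    (f f' : (Fin n → ℝ) →ₗ[ℝ] ℝ)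
    (h : {x ∈ M.FF (C.erase a) | ∀ y ∈ M.FF (C.erase a), f x ≤ f y} =
      {x ∈ M.FF (C.erase a) | ∀ y ∈ M.FF (C.erase a), f' x ≤ f' y}) :
    {x ∈ M.FF (C.erase b) | ∀ y ∈ M.FF (C.erase b), f x ≤ f y} =
      {x ∈ M.FF (C.erase b) | ∀ y ∈ M.FF (C.erase b), f' x ≤ f' y} := by
  obtain ⟨w, hw, hmin⟩ := G.exists_min hI f
  have hf := Mdl.nonneg_of_min hw f hmin
  have hmem : M.pt w ∈ {x ∈ M.FF (C.erase a) | ∀ y ∈ M.FF (C.erase a), f' x ≤ f' y} := by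
    rw [← h]; exact ⟨Mdl.pt_FF hw, hmin⟩
  have hf' := Mdl.nonneg_of_min hw f' hmem.2
  rw [Mdl.argmin_eq hw f hf, Mdl.argmin_eq hw f' hf'] at h
  have hpos := Mdl.FF_inj (Mdl.pos_sub _ _ _) (Mdl.pos_sub _ _ _) h
  obtain ⟨w', hw', hN, he⟩ := Mdl.move hC ha hb hab hw
  have haw : a ∉ M.N w := by
    obtain ⟨c₂, hc₂, hcn₂, -, hall₂⟩ := M.miss hC w
    have h2 : a = c₂ := by
      by_contra h
      exact hcn₂ (hw (mem_erase.2 ⟨fun h' => h h'.symm, hc₂⟩))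
    rw [h2]; exact hcn₂
  have hkey : ∀ k ∈ M.N w', k ∉ C.erase b → k ∈ M.N w ∧ k ∉ C ∧ M.e w' k = M.e w k := by
    intro k hk hkC
    have hkC' : k ∉ C := by
      intro h1
      have : k = b := by
        by_contra h2; exact hkC (mem_erase.2 ⟨h2, h1⟩)
      rw [hN, mem_insert, mem_erase] at hk
      rcases hk with h3 | h3
      · exact hab (this ▸ h3)
      · exact h3.1 this
    have hkw : k ∈ M.N w := by
      rw [hN, mem_insert, mem_erase] at hk
      rcases hk with h3 | h3
      · exact absurd (h3 ▸ ha) hkC'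
      · exact h3.2
    exact ⟨hkw, hkC', he k hkw hkC'⟩
  rw [Mdl.argmin_eq hw' f, Mdl.argmin_eq hw' f']
  · congr 1
    ext k
    by_cases hkI : k ∈ C.erase b
    · simp only [Mdl.pos, mem_filter, hkI, true_or]
    · by_cases hkw : k ∈ M.N w'
      · obtain ⟨h1, h2, h3⟩ := hkey k hkw hkI
        have h4 : k ∉ C.erase a := fun h => h2 (mem_of_mem_erase h)
        have h5 := Finset.ext_iff.1 hpos k
        simp only [Mdl.pos, mem_filter, h1, h4, false_or, true_and] at h5
        simp only [Mdl.pos, mem_filter, hkI, hkw, false_or, true_and, h3, h5]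
      · simp [Mdl.pos, hkw]
  · intro k hk hkI
    obtain ⟨h1, h2, h3⟩ := hkey k hk hkI
    rw [h3]; exact hf' k h1 (fun h => h2 (mem_of_mem_erase h))
  · intro k hk hkI
    obtain ⟨h1, h2, h3⟩ := hkey k hk hkI
    rw [h3]; exact hf k h1 (fun h => h2 (mem_of_mem_erase h))

theorem Mdl.piece_vertex {C : Finset ι} (hC : ∀ p, ∑ c ∈ C, M.ell c p = 1) {a : ι} (ha : a ∈ C) :
    ∃ w, C.erase a ⊆ M.N w := by
  obtain ⟨g, hg, -, -, hall⟩ := M.miss hC M.w0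
  have hw0 : C.erase g ⊆ M.N M.w0 := fun l hl => by
    rw [mem_erase] at hl; exact hall l hl.2 hl.1
  by_cases h : a = g
  · exact ⟨M.w0, h ▸ hw0⟩
  · obtain ⟨w', h1, -⟩ := Mdl.move hC hg ha h hw0
    exact ⟨w', h1⟩

theorem Geo.normEquiv (G : Geo P M) {C : Finset ι} (hC : ∀ p, ∑ c ∈ C, M.ell c p = 1) {a b : ι}
    (ha : a ∈ C) (hb : b ∈ C) : NormEquiv (M.FF (C.erase a)) (M.FF (C.erase b)) := by
  by_cases hab : b = a
  · subst hab; intro _ _; exact Iff.rfl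
  intro f f'
  exact ⟨G.normEquiv_aux hC ha hb hab (Mdl.piece_vertex hC ha) f f',
    G.normEquiv_aux hC hb ha (Ne.symm hab) (Mdl.piece_vertex hC hb) f f'⟩

/-- The translated model. -/
def Mdl.trans (M : Mdl n ι ω (Fin n → ℝ)) (v : Fin n → ℝ) : Mdl n ι ω (Fin n → ℝ) where
  N := M.N
  ell k := M.ell k + AffineMap.const ℝ _ (M.u k v)
  pt w := M.pt w - v
  e := M.e
  w0 := M.w0
  inj w w' h := M.inj w w' (sub_left_injective h)
  card := M.card
  mem w k := by
    rw [M.mem]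
    have := M.ell_add k (M.pt w - v) v
    rw [sub_add_cancel] at this
    rw [this]; rfl
  dual w k l hk hl := by
    have := M.dual w k l hk hl
    simpa using this
  span w p := by
    have := M.span w p
    simpa using this
  int w k := by
    obtain ⟨z, hz⟩ := M.int w k
    refine ⟨z, ?_⟩
    rw [← hz]
    have := M.ell_add k (M.pt w - v) v
    rw [sub_add_cancel] at this
    rw [this]; rfl
  inte w k l hk := by
    have := M.inte w k l hk
    simpa using this
  nonneg w k := by
    have h := M.nonneg w k
    have := M.ell_add k (M.pt w - v) v
    rw [sub_add_cancel] at this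
    rw [this] at h; exact h
  adj w k hk := by
    obtain ⟨w', c, h1, h2, h3⟩ := M.adj w k hk
    exact ⟨w', c, h1, by rw [h2]; abel, h3⟩

theorem Mdl.trans_u (v : Fin n → ℝ) (k : ι) : (M.trans v).u k = M.u k := by
  simp [Mdl.u, Mdl.trans]

theorem Mdl.trans_ell (v : Fin n → ℝ) (k : ι) (x) : (M.trans v).ell k x = M.ell k (x + v) := by
  rw [M.ell_add]; rfl

theorem Geo.trans (G : Geo P M) {v : Fin n → ℝ} (hv : IsLatticePt v) :
    Geo ((fun x => x - v) '' P) (M.trans v) where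
  hP x := by
    constructor
    · rintro ⟨y, hy, rfl⟩ l
      rw [Mdl.trans_ell]
      simpa using (G.hP y).1 hy l
    · intro h
      refine ⟨x + v, (G.hP _).2 fun l => ?_, by simp⟩
      rw [← Mdl.trans_ell]; exact h l
  hull := by
    have h1 := (AffineMap.id ℝ (Fin n → ℝ) - AffineMap.const ℝ _ v).image_convexHull (Set.range M.pt)
    rw [← G.hull, ← Set.range_comp] at h1
    exact h1
  ext := by
    apply Set.Subset.antisymm
    · intro x hx
      have h1 := (AffineMap.id ℝ (Fin n → ℝ) - AffineMap.const ℝ _ v).image_convexHull (Set.range M.pt)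
      rw [← G.hull, ← Set.range_comp] at h1
      have h2 : (fun x => x - v) '' P = convexHull ℝ (Set.range (M.trans v).pt) := h1
      rw [h2] at hx
      exact extremePoints_convexHull_subset hx
    · rintro _ ⟨w, rfl⟩
      have h3 : M.pt w ∈ Set.extremePoints ℝ P := by rw [G.ext]; exact ⟨w, rfl⟩
      rw [mem_extremePoints_iff_left] at h3 ⊢
      refine ⟨⟨_, h3.1, rfl⟩, ?_⟩
      rintro _ ⟨x, hx, rfl⟩ _ ⟨y, hy, rfl⟩ ⟨a, b, ha, hb, hab, hxy⟩
      have := h3.2 x hx y hy ⟨a, b, ha, hb, hab, by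
        have h4 : a • (x - v) + b • (y - v) = M.pt w - v := hxy
        have h5 : a • (x - v) + b • (y - v) = a • x + b • y - (a + b) • v := by module
        rw [h5, hab, one_smul] at h4
        exact sub_left_injective h4⟩
      rw [this]; rfl
  latpt w := lat_sub (G.latpt w) hv
  late := G.late
  latl k x hx := by rw [Mdl.trans_u]; exact G.latl k x hx

end Smooth8
end

section
namespace Smooth8
open Finset MeasureTheory

variable {n d : ℕ} {ι ω : Type} [Fintype ι] [DecidableEq ι] [Fintype ω]
    {M : Mdl n ι ω (Fin n → ℝ)} {P : Set (Fin n → ℝ)}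

/-- The linear map underlying `matMap`. -/
def matLin {t n : ℕ} (A : Matrix (Fin t) (Fin n) ℤ) : (Fin n → ℝ) →ₗ[ℝ] (Fin t → ℝ) where
  toFun := matMap A
  map_add' x y := by
    funext k; simp [matMap, mul_add, sum_add_distrib]
  map_smul' c x := by
    funext k; simp only [matMap, Pi.smul_apply, smul_eq_mul, RingHom.id_apply, mul_sum]
    exact Finset.sum_congr rfl fun j _ => by ring

/-- Cayley structure when the base vertex is the origin. -/
theorem Geo.cayley0 (G : Geo P M) {C : Finset ι} (hC : ∀ p, ∑ c ∈ C, M.ell c p = 1)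
    (hcard : n + 2 < 2 * C.card) {v : ω} (hv : M.pt v = 0) :
    ∃ (t : ℕ) (A : Matrix (Fin t) (Fin n) ℤ), IsCayleyWith P A ∧
        ∀ k : Fin (t + 1), IsSmoothPoly (cayleyPiece A P k) ∧
          IsLatticePolytope (cayleyPiece A P k) ∧ fdim (cayleyPiece A P k) < t := by
  classical
  obtain ⟨g, hg, hgn, -, hall⟩ := M.miss hC v
  have htc : (C.erase g).card = C.card - 1 := card_erase_of_mem hg
  have hvC : C.erase g ⊆ M.N v := fun l hl => by
    rw [mem_erase] at hl; exact hall l hl.2 hl.1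
  set t := (C.erase g).card with ht
  let ee := (C.erase g).equivFin
  let κ : Fin t → ι := fun j => (ee.symm j).1
  have hκi : Function.Injective κ := fun i j hij => ee.symm.injective (Subtype.ext hij)
  have hκm : ∀ j, κ j ∈ C.erase g := fun j => (ee.symm j).2
  have hκC : ∀ j, κ j ∈ C := fun j => mem_of_mem_erase (hκm j)
  have hκg : ∀ j, κ j ≠ g := fun j => ne_of_mem_erase (hκm j)
  have hκs : ∀ c ∈ C, c ≠ g → ∃ j, κ j = c := by
    intro c hc hcg
    exact ⟨ee ⟨c, mem_erase.2 ⟨hcg, hc⟩⟩, by simp [κ]⟩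
  have hsum : ∀ x, M.ell g x + ∑ j, M.ell (κ j) x = 1 := by
    intro x
    rw [← hC x, ← add_sum_erase C _ hg]
    congr 1
    have h1 : C.erase g = univ.image κ := by
      ext c
      rw [mem_image]
      constructor
      · intro hc
        obtain ⟨j, hj⟩ := hκs c (mem_of_mem_erase hc) (ne_of_mem_erase hc)
        exact ⟨j, mem_univ _, hj⟩
      · rintro ⟨j, -, rfl⟩; exact hκm j
    rw [h1, sum_image (fun i _ j _ h => hκi h)]
  choose A hA using fun (j : Fin t) (i : Fin n) =>
    G.latl (κ j) (Pi.single i 1) (fun l => ⟨if l = i then 1 else 0, by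
      rw [Pi.single_apply]; split <;> simp⟩)
  have hAu : ∀ x j, matMap A x j = M.u (κ j) x := by
    intro x j
    conv_rhs => rw [← Finset.univ_sum_single x, map_sum]
    refine Finset.sum_congr rfl fun i _ => ?_
    have : (Pi.single i (x i) : Fin n → ℝ) = x i • Pi.single i 1 := by
      rw [← Pi.single_smul]; simp
    rw [this, map_smul, hA j i, smul_eq_mul, mul_comm]
  have hAe : ∀ x j, matMap A x j = M.ell (κ j) x := by
    intro x j
    have h1 := M.ell_sub (κ j) x (M.pt v)
    rw [M.ell_pt (hvC (hκm j)), hv, sub_zero, sub_zero] at h1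
    rw [hAu, h1]
  let γ : Fin (t + 1) → ι := Fin.cons g κ
  have hγC : ∀ k, γ k ∈ C := by
    intro k
    refine Fin.cases ?_ (fun j => ?_) k
    · exact hg
    · exact hκC j
  have hγs : ∀ c ∈ C, ∃ k, γ k = c := by
    intro c hc
    by_cases h : c = g
    · exact ⟨0, h.symm⟩
    · obtain ⟨j, hj⟩ := hκs c hc h
      exact ⟨j.succ, hj⟩
  have hone : ∀ x k, (∀ c ∈ C, c ≠ γ k → M.ell c x = 0) → M.ell (γ k) x = 1 := by
    intro x k h
    rw [← hC x, Finset.sum_eq_single_of_mem _ (hγC k) h]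
  have hmat : ∀ x k, (∀ c ∈ C, c ≠ γ k → M.ell c x = 0) ↔ matMap A x = stdSimplexVert t k := by
    intro x k
    constructor
    · intro h
      have h1 := hone x k h
      funext j
      rw [hAe]
      unfold stdSimplexVert
      revert h1 h
      refine Fin.cases ?_ (fun j0 => ?_) k
      · intro h h1
        rw [if_neg (by simp)]
        exact h _ (hκC j) (hκg j)
      · intro h h1
        by_cases hj : j0 = j
        · subst hj; rw [if_pos (by simp)]; exact h1
        · rw [if_neg (by simp only [Fin.val_succ]; omega)]
          exact h _ (hκC j) (fun h' => hj (hκi h').symm)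
    · intro h c hc hck
      have h2 : ∀ j : Fin t, M.ell (κ j) x = if (k : ℕ) = (j : ℕ) + 1 then 1 else 0 := by
        intro j; rw [← hAe, h]; rfl
      revert h2 hck
      refine Fin.cases ?_ (fun j0 => ?_) k
      · intro hck h2
        obtain ⟨j, rfl⟩ := hκs c hc hck
        rw [h2]; simp
      · intro hck h2
        by_cases hcg : c = g
        · have h3 := hsum x
          rw [Finset.sum_eq_single j0, h2 j0, if_pos (by simp)] at h3
          · rw [hcg]; linarith
          · intro j _ hj
            rw [h2, if_neg (by simp only [Fin.val_succ]; omega)]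
          · simp
        · obtain ⟨j, rfl⟩ := hκs c hc hcg
          have : j ≠ j0 := by rintro rfl; exact hck rfl
          rw [h2, if_neg (by simp only [Fin.val_succ]; omega)]
  have hpiece : ∀ k, cayleyPiece A P k = M.FF (C.erase (γ k)) := by
    intro k
    ext x
    constructor
    · rintro ⟨h1, h2⟩
      refine ⟨(G.hP x).1 h1, fun i hi => ?_⟩
      rw [mem_erase] at hi
      exact (hmat x k).2 h2 i hi.2 hi.1
    · rintro ⟨h1, h2⟩
      exact ⟨(G.hP x).2 h1, (hmat x k).1 fun c hc hck => h2 c (mem_erase.2 ⟨hck, hc⟩)⟩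
  refine ⟨t, A, ⟨?_, ?_, ?_⟩, ?_⟩
  · intro y
    choose z hz using fun j => G.late v (κ j) (hvC (hκm j))
    refine ⟨fun i => ∑ j, y j * z j i, ?_⟩
    funext j
    have h1 : ((Matrix.mulVec A (fun i => ∑ j, y j * z j i) j : ℤ) : ℝ)
        = matMap A (∑ i, (y i : ℝ) • M.e v (κ i)) j := by
      simp only [Matrix.mulVec, dotProduct, matMap]
      push_cast
      refine Finset.sum_congr rfl fun i _ => ?_
      rw [Finset.sum_apply]
      congr 1
      refine Finset.sum_congr rfl fun l _ => ?_
      rw [Pi.smul_apply, hz l i, smul_eq_mul]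
    rw [hAu, map_sum, Finset.sum_eq_single j] at h1
    · rw [map_smul, M.dual' (hvC (hκm j)) (hvC (hκm j)), if_pos rfl, smul_eq_mul, mul_one] at h1
      exact_mod_cast h1
    · intro i _ hij
      rw [map_smul, M.dual' (hvC (hκm i)) (hvC (hκm j)), if_neg, smul_zero]
      intro h; exact hij (hκi h).symm
    · simp
  · have h1 := (matLin A).image_convexHull (Set.range M.pt)
    rw [← G.hull] at h1
    have h2 : (matLin A) '' P = matMap A '' P := rfl
    rw [← h2, h1, unimodSimplex]
    congr 1
    ext y
    constructor
    · rintro ⟨_, ⟨w, rfl⟩, rfl⟩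
      obtain ⟨c, hc, -, -, hcall⟩ := M.miss hC w
      obtain ⟨k, rfl⟩ := hγs c hc
      exact ⟨k, ((hmat _ k).1 fun c' hc' hne => M.ell_pt (hcall c' hc' hne)).symm⟩
    · rintro ⟨k, rfl⟩
      obtain ⟨w, hw⟩ := Mdl.piece_vertex hC (hγC k)
      exact ⟨_, ⟨w, rfl⟩, (hmat _ k).1 fun c' hc' hne => M.ell_pt (hw (mem_erase.2 ⟨hne, hc'⟩))⟩
  · intro k l
    rw [hpiece, hpiece]
    exact G.normEquiv hC (hγC k) (hγC l)
  · intro k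
    rw [hpiece]
    refine ⟨G.FF_smooth _, G.FF_lattice _, ?_⟩
    obtain ⟨w, hw⟩ := Mdl.piece_vertex hC (hγC k)
    have h1 := Mdl.fdim_card hw
    rw [card_erase_of_mem (hγC k)] at h1
    omega

theorem Geo.cayley (G : Geo P M) {C : Finset ι} (hC : ∀ p, ∑ c ∈ C, M.ell c p = 1)
    (hcard : n + 2 < 2 * C.card) :
    ∃ (t : ℕ) (U : Matrix (Fin n) (Fin n) ℤ) (w : Fin n → ℤ)
        (A : Matrix (Fin t) (Fin n) ℤ), IsUnit U.det ∧
        IsCayleyWith (unimodMap U w '' P) A ∧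
        ∀ k : Fin (t + 1),
          IsSmoothPoly (cayleyPiece A (unimodMap U w '' P) k) ∧
          IsLatticePolytope (cayleyPiece A (unimodMap U w '' P) k) ∧
          fdim (cayleyPiece A (unimodMap U w '' P) k) < t := by
  choose z hz using G.latpt M.w0
  have h1 : unimodMap (1 : Matrix (Fin n) (Fin n) ℤ) (-z) = fun x => x - M.pt M.w0 := by
    funext x i
    simp [unimodMap, Matrix.one_apply, hz, sub_eq_add_neg]
  have hC' : ∀ p, ∑ c ∈ C, (M.trans (M.pt M.w0)).ell c p = 1 := by
    intro p
    simp only [Mdl.trans_ell]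
    exact hC _
  obtain ⟨t, A, h2, h3⟩ := (G.trans (G.latpt M.w0)).cayley0 hC' hcard (v := M.w0) (sub_self _)
  refine ⟨t, 1, -z, A, by simp, ?_, ?_⟩
  · rw [h1]; exact h2
  · rw [h1]; exact h3

end Smooth8
end

section
namespace Smooth8
open Finset MeasureTheory

variable {n d : ℕ} {ι ω : Type} [Fintype ι] [DecidableEq ι] [Fintype ω]
    {M : Mdl n ι ω (Fin n → ℝ)} {P : Set (Fin n → ℝ)}

theorem Mdl.aff_span (w : ω) (f : (Fin n → ℝ) →ᵃ[ℝ] ℝ) (x) :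
    f x = f (M.pt w) + ∑ k ∈ M.N w, M.ell k x * f.linear (M.e w k) := by
  have h1 := f.linearMap_vsub x (M.pt w)
  have h2 := Mdl.f_span (M := M) w f.linear x
  simp only [vsub_eq_sub, map_sub] at h1
  linarith

theorem int_simplex {t : ℕ} (a : Fin (t + 1) → ℝ) (h0 : ∀ k, 0 ≤ a k) (hs : ∑ k, a k = 1)
    (hi : ∀ k, ∃ z : ℤ, a k = z) : ∃ m, a m = 1 ∧ ∀ k, k ≠ m → a k = 0 := by
  have hex : ∃ m, a m ≠ 0 := by
    by_contra h
    push Not at h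
    rw [Finset.sum_eq_zero (fun k _ => h k)] at hs
    exact zero_ne_one hs
  obtain ⟨m, hm⟩ := hex
  have hm1 : 1 ≤ a m := by
    obtain ⟨z, hz⟩ := hi m
    have h1 := lt_of_le_of_ne (h0 m) (Ne.symm hm)
    rw [hz] at h1 ⊢
    have : 0 < z := by exact_mod_cast h1
    exact_mod_cast this
  rw [← add_sum_erase _ _ (mem_univ m)] at hs
  have h2 := Finset.sum_nonneg (s := univ.erase m) (fun k _ => h0 k)
  have h3 : ∑ k ∈ univ.erase m, a k = 0 := by linarith
  refine ⟨m, by linarith, fun k hk => ?_⟩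
  exact (Finset.sum_eq_zero_iff_of_nonneg (fun k _ => h0 k)).1 h3 k (mem_erase.2 ⟨hk, mem_univ _⟩)

theorem Geo.combin (G : Geo P M) {t : ℕ} (f : Fin (t + 1) → (Fin n → ℝ) →ᵃ[ℝ] ℝ)
    (hf0 : ∀ k x, x ∈ P → 0 ≤ f k x) (hsum : ∀ x, ∑ k, f k x = 1)
    (hinteg : ∀ k x, IsLatticePt x → ∃ z : ℤ, f k x = z) (hne : ∀ k, ∃ x ∈ P, f k x = 1)
    (hnorm : ∀ k l (φ : (Fin n → ℝ) →ₗ[ℝ] ℝ),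
      (∀ x ∈ P, f k x = 1 → ∀ y ∈ P, f k y = 1 → φ x = φ y) →
      (∀ x ∈ P, f l x = 1 → ∀ y ∈ P, f l y = 1 → φ x = φ y))
    (hdim : ∀ k, fdim {x ∈ P | f k x = 1} < t) :
    ∃ C : Finset ι, (∀ p, ∑ c ∈ C, M.ell c p = 1) ∧ n + 2 < 2 * C.card := by
  classical
  have hpt : ∀ w, M.pt w ∈ P := fun w => (G.hP _).2 (M.inP_pt w)
  have hlat : ∀ x ∈ P, IsLatticePt x → ∃ m, f m x = 1 ∧ ∀ k, k ≠ m → f k x = 0 := fun x hx hl =>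
    int_simplex (fun k => f k x) (fun k => hf0 k x hx) (hsum x) (fun k => hinteg k x hl)
  have hzero : ∀ x ∈ P, ∀ m, f m x = 1 → ∀ k, k ≠ m → f k x = 0 := by
    intro x hx m hm k hk
    have hs := hsum x
    rw [← add_sum_erase _ _ (mem_univ m), hm] at hs
    have h3 : ∑ k ∈ univ.erase m, f k x = 0 := by linarith
    exact (Finset.sum_eq_zero_iff_of_nonneg (fun k _ => hf0 k x hx)).1 h3 k
      (mem_erase.2 ⟨hk, mem_univ _⟩)
  have hvert : ∀ m, ∃ w, f m (M.pt w) = 1 := by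
    intro m
    by_contra h
    push Not at h
    obtain ⟨x, hx, hx1⟩ := hne m
    have h0 : ∀ w, f m (M.pt w) = 0 := by
      intro w
      obtain ⟨m', h1, h2⟩ := hlat _ (hpt w) (G.latpt w)
      apply h2
      rintro rfl
      exact h w h1
    have hx' := hx
    rw [G.hull] at hx'
    have : convexHull ℝ (Set.range M.pt) ⊆ (f m) ⁻¹' {0} := by
      refine convexHull_min ?_ ((convex_singleton 0).affine_preimage (f m))
      rintro _ ⟨w, rfl⟩
      exact h0 w
    have h3 : f m x = 0 := this hx'
    rw [hx1] at h3
    exact one_ne_zero h3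
  have step : ∀ w m k, f m (M.pt w) = 1 → k ≠ m → ∃ l, ∀ x, f k x = M.ell l x := by
    intro w m k hm hkm
    have hk0 : f k (M.pt w) = 0 := hzero _ (hpt w) m hm k hkm
    have hpe : ∀ l ∈ M.N w, M.pt w + M.e w l ∈ P := fun l hl => (G.hP _).2 (M.inP_e hl)
    have hlin : ∀ l, f k (M.pt w + M.e w l) = (f k).linear (M.e w l) := by
      intro l
      have h1 := (f k).map_vadd (M.pt w) (M.e w l)
      rw [vadd_eq_add, vadd_eq_add, hk0, add_zero] at h1
      rw [add_comm, h1]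
    have hval : ∀ l ∈ M.N w, (f k).linear (M.e w l) = 0 ∨ (f k).linear (M.e w l) = 1 := by
      intro l hl
      rw [← hlin]
      obtain ⟨m', h1, h2⟩ := hlat _ (hpe l hl) (lat_add (G.latpt w) (G.late w l hl))
      by_cases h : k = m'
      · right; rw [h]; exact h1
      · left; exact h2 k h
    have hex : ∃ l ∈ M.N w, (f k).linear (M.e w l) = 1 := by
      by_contra h
      push Not at h
      obtain ⟨x, hx, hx1⟩ := hne k
      rw [Mdl.aff_span (M := M) w (f k) x, hk0, zero_add, Finset.sum_eq_zero] at hx1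
      · exact zero_ne_one hx1
      · intro l hl
        rw [(hval l hl).resolve_right (h l hl), mul_zero]
    obtain ⟨l, hl, hl1⟩ := hex
    have huniq : ∀ l' ∈ M.N w, l' ≠ l → (f k).linear (M.e w l') = 0 := by
      intro l' hl' hne'
      refine (hval l' hl').resolve_right fun hl'1 => ?_
      have hc : ∀ x ∈ P, f m x = 1 → M.ell l x = 0 := by
        intro x hx hx1
        have h1 := hzero x hx m hx1 k hkm
        rw [Mdl.aff_span (M := M) w (f k) x, hk0, zero_add, Finset.sum_eq_zero_iff_of_nonneg] at h1
        · have := h1 l hl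
          rwa [hl1, mul_one] at this
        · intro i hi
          refine mul_nonneg ((G.hP x).1 hx i) ?_
          rcases hval i hi with h | h <;> rw [h]
          exact zero_le_one
      have h2 := hnorm m k (M.u l) (fun x hx hx1 y hy hy1 => by
        have h3 := M.ell_sub l x y
        rw [hc x hx hx1, hc y hy hy1, map_sub, sub_zero] at h3
        linarith) _ (hpe l hl) (by rw [hlin, hl1]) _ (hpe l' hl') (by rw [hlin, hl'1])
      rw [map_add, map_add, M.dual' hl hl, M.dual' hl' hl, if_pos rfl, if_neg (Ne.symm hne')] at h2
      linarith
    refine ⟨l, fun x => ?_⟩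
    rw [Mdl.aff_span (M := M) w (f k) x, hk0, zero_add, Finset.sum_eq_single_of_mem l hl, hl1, mul_one]
    intro i hi hil
    rw [huniq i hi hil, mul_zero]
  have ht : 0 < t := lt_of_le_of_lt (Nat.zero_le _) (hdim 0)
  have hall : ∀ k, ∃ c, ∀ x, f k x = M.ell c x := by
    intro k
    have hm : ∃ m, k ≠ m := by
      by_cases h : k = 0
      · refine ⟨⟨1, by omega⟩, ?_⟩
        rw [h]; intro h'
        have := congrArg Fin.val h'
        simp at this
      · exact ⟨0, h⟩
    obtain ⟨m, hm⟩ := hm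
    obtain ⟨w, hw⟩ := hvert m
    exact step w m k hw hm
  choose c hc using hall
  have hcinj : Function.Injective c := by
    intro k k' hkk
    by_contra hne'
    obtain ⟨x, hx, hx1⟩ := hne k
    have h1 := hzero x hx k hx1 k' (Ne.symm hne')
    rw [hc, ← hkk, ← hc, hx1] at h1
    exact one_ne_zero h1
  have hC : ∀ p, ∑ i ∈ univ.image c, M.ell i p = 1 := by
    intro p
    rw [sum_image (fun i _ j _ h => hcinj h), ← hsum p]
    exact Finset.sum_congr rfl fun k _ => (hc k p).symm
  refine ⟨univ.image c, hC, ?_⟩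
  have hcard : (univ.image c).card = t + 1 := by
    rw [card_image_of_injective _ hcinj]; simp
  have hc0 : c 0 ∈ univ.image c := mem_image_of_mem _ (mem_univ _)
  have hp : {x ∈ P | f 0 x = 1} = M.FF ((univ.image c).erase (c 0)) := by
    ext x
    constructor
    · rintro ⟨hx, hx1⟩
      refine ⟨(G.hP x).1 hx, fun i hi => ?_⟩
      rw [mem_erase, mem_image] at hi
      obtain ⟨hi, k, -, rfl⟩ := hi
      rw [← hc]
      exact hzero x hx 0 hx1 k (fun h => hi (h ▸ rfl))
    · rintro ⟨hx, hx1⟩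
      refine ⟨(G.hP x).2 hx, ?_⟩
      have := hC x
      rw [← add_sum_erase _ _ hc0, Finset.sum_eq_zero hx1, add_zero, ← hc] at this
      exact this
  have hd := hdim 0
  rw [hp] at hd
  obtain ⟨w, hw⟩ := Mdl.piece_vertex hC hc0
  have h1 := Mdl.fdim_card hw
  rw [card_erase_of_mem hc0, hcard] at h1
  omega

end Smooth8
end

section
namespace Smooth8
open Finset MeasureTheory

variable {n d : ℕ} {ι ω : Type} [Fintype ι] [DecidableEq ι] [Fintype ω]
    {M : Mdl n ι ω (Fin n → ℝ)} {P : Set (Fin n → ℝ)}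

theorem matMap_comp {a b c : ℕ} (A : Matrix (Fin a) (Fin b) ℤ) (B : Matrix (Fin b) (Fin c) ℤ) (x) :
    matMap A (matMap B x) = matMap (A * B) x := by
  funext k
  simp only [matMap, Matrix.mul_apply, mul_sum]
  rw [sum_comm]
  refine Finset.sum_congr rfl fun j _ => ?_
  push_cast
  rw [sum_mul]
  exact Finset.sum_congr rfl fun i _ => by ring

theorem matMap_one (x : Fin n → ℝ) : matMap (1 : Matrix (Fin n) (Fin n) ℤ) x = x := by
  funext k
  simp [matMap, Matrix.one_apply]

theorem lat_matMap {a b : ℕ} (A : Matrix (Fin a) (Fin b) ℤ) {x} (hx : IsLatticePt x) :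
    IsLatticePt (matMap A x) := by
  choose z hz using hx
  intro k
  refine ⟨∑ j, A k j * z j, ?_⟩
  simp only [matMap, hz]
  push_cast
  rfl

/-- The affine map underlying `unimodMap`. -/
def uniAff (U : Matrix (Fin n) (Fin n) ℤ) (w : Fin n → ℤ) : (Fin n → ℝ) →ᵃ[ℝ] (Fin n → ℝ) :=
  (matLin U).toAffineMap + AffineMap.const ℝ _ (fun i => (w i : ℝ))

theorem uniAff_apply (U : Matrix (Fin n) (Fin n) ℤ) (w : Fin n → ℤ) (x) :
    uniAff U w x = unimodMap U w x := rfl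

theorem uniAff_linear (U : Matrix (Fin n) (Fin n) ℤ) (w : Fin n → ℤ) :
    (uniAff U w).linear = matLin U := by
  simp [uniAff]

theorem simplex_nonneg {t : ℕ} {y} (hy : y ∈ unimodSimplex t) : (∀ j, 0 ≤ y j) ∧ ∑ j, y j ≤ 1 := by
  have hconv : Convex ℝ {y : Fin t → ℝ | (∀ j, 0 ≤ y j) ∧ ∑ j, y j ≤ 1} := by
    rintro x ⟨hx, hx1⟩ y ⟨hy, hy1⟩ a b ha hb hab
    refine ⟨fun j => ?_, ?_⟩
    · have := mul_nonneg ha (hx j)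
      have := mul_nonneg hb (hy j)
      simp only [Pi.add_apply, Pi.smul_apply, smul_eq_mul]
      linarith
    · simp only [Pi.add_apply, Pi.smul_apply, smul_eq_mul, sum_add_distrib, ← mul_sum]
      nlinarith
  refine convexHull_min (t := {y : Fin t → ℝ | (∀ j, 0 ≤ y j) ∧ ∑ j, y j ≤ 1}) ?_ hconv hy
  rintro _ ⟨k, rfl⟩
  refine ⟨fun j => ?_, ?_⟩
  · unfold stdSimplexVert; split <;> norm_num
  · unfold stdSimplexVert
    refine Fin.cases ?_ (fun j0 => ?_) k
    · simp
    · rw [Finset.sum_eq_single j0]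
      · simp
      · intro j _ hj
        rw [if_neg (by simp only [Fin.val_succ]; omega)]
      · simp

/-- Barycentric coordinates. -/
def bary {t : ℕ} (y : Fin t → ℝ) : Fin (t + 1) → ℝ := Fin.cons (1 - ∑ j, y j) y

theorem bary_one {t : ℕ} {y} (hy : y ∈ unimodSimplex t) (k : Fin (t + 1)) :
    bary y k = 1 ↔ y = stdSimplexVert t k := by
  obtain ⟨h0, h1⟩ := simplex_nonneg hy
  refine Fin.cases ?_ (fun j0 => ?_) k
  · constructor
    · intro h
      have h2 : ∑ j, y j = 0 := by
        have : 1 - ∑ j, y j = 1 := h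
        linarith
      funext j
      rw [(Finset.sum_eq_zero_iff_of_nonneg (fun j _ => h0 j)).1 h2 j (mem_univ _)]
      simp [stdSimplexVert]
    · intro h
      show 1 - ∑ j, y j = 1
      rw [h]; simp [stdSimplexVert]
  · constructor
    · intro h
      have h' : y j0 = 1 := h
      rw [← add_sum_erase _ _ (mem_univ j0), h'] at h1
      have h2 := Finset.sum_nonneg (s := univ.erase j0) (fun k _ => h0 k)
      have h3 : ∑ k ∈ univ.erase j0, y k = 0 := by linarith
      funext j
      unfold stdSimplexVert
      by_cases hj : j = j0
      · subst hj; rw [if_pos (by simp), h']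
      · rw [if_neg (by simp only [Fin.val_succ]; omega)]
        exact (Finset.sum_eq_zero_iff_of_nonneg (fun k _ => h0 k)).1 h3 j
          (mem_erase.2 ⟨hj, mem_univ _⟩)
    · intro h
      show y j0 = 1
      rw [h]; simp [stdSimplexVert]

/-- Barycentric coordinates of the projection, as affine maps. -/
def baff {t : ℕ} (A : Matrix (Fin t) (Fin n) ℤ) (U : Matrix (Fin n) (Fin n) ℤ) (w : Fin n → ℤ) :
    Fin (t + 1) → (Fin n → ℝ) →ᵃ[ℝ] ℝ :=
  Fin.cons
    ((LinearMap.toAffineMap (- ∑ j, (LinearMap.proj j ∘ₗ matLin A)) + AffineMap.const ℝ _ 1).comp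
      (uniAff U w))
    (fun j => (LinearMap.proj j ∘ₗ matLin A).toAffineMap.comp (uniAff U w))

theorem baff_apply {t : ℕ} (A : Matrix (Fin t) (Fin n) ℤ) (U : Matrix (Fin n) (Fin n) ℤ)
    (w : Fin n → ℤ) (k x) : baff A U w k x = bary (matMap A (unimodMap U w x)) k := by
  refine Fin.cases ?_ (fun j0 => ?_) k
  · simp only [baff, bary, Fin.cons_zero, AffineMap.comp_apply, uniAff_apply]
    simp [matLin]
    ring
  · rfl

theorem Geo.cayley_conv (G : Geo P M) {t : ℕ} (U : Matrix (Fin n) (Fin n) ℤ) (w : Fin n → ℤ)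
    (A : Matrix (Fin t) (Fin n) ℤ) (hU : IsUnit U.det)
    (hA : IsCayleyWith (unimodMap U w '' P) A)
    (hdim : ∀ k : Fin (t + 1), fdim (cayleyPiece A (unimodMap U w '' P) k) < t) :
    ∃ C : Finset ι, (∀ p, ∑ c ∈ C, M.ell c p = 1) ∧ n + 2 < 2 * C.card := by
  obtain ⟨-, himg, hnorm⟩ := hA
  have hinv : ∀ x, matMap U⁻¹ (matMap U x) = x := by
    intro x
    rw [matMap_comp, Matrix.nonsing_inv_mul _ hU, matMap_one]
  have hmem : ∀ x ∈ P, matMap A (unimodMap U w x) ∈ unimodSimplex t := fun x hx => by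
    rw [← himg]; exact ⟨_, ⟨x, hx, rfl⟩, rfl⟩
  have hone : ∀ k, ∀ x ∈ P, (baff A U w k x = 1 ↔ matMap A (unimodMap U w x) = stdSimplexVert t k) :=
    fun k x hx => by rw [baff_apply, bary_one (hmem x hx)]
  have hpiece : ∀ k, cayleyPiece A (unimodMap U w '' P) k =
      uniAff U w '' {x ∈ P | baff A U w k x = 1} := by
    intro k
    ext y
    constructor
    · rintro ⟨⟨x, hx, rfl⟩, h⟩
      exact ⟨x, ⟨hx, (hone k x hx).2 h⟩, rfl⟩
    · rintro ⟨x, ⟨hx, h⟩, rfl⟩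
      exact ⟨⟨x, hx, rfl⟩, (hone k x hx).1 h⟩
  have hconst : ∀ (S : Set (Fin n → ℝ)) (φ : (Fin n → ℝ) →ₗ[ℝ] ℝ),
      ({x ∈ S | ∀ y ∈ S, φ x ≤ φ y} =
        {x ∈ S | ∀ y ∈ S, (0 : (Fin n → ℝ) →ₗ[ℝ] ℝ) x ≤ (0 : (Fin n → ℝ) →ₗ[ℝ] ℝ) y}) ↔
      ∀ x ∈ S, ∀ y ∈ S, φ x = φ y := by
    intro S φ
    constructor
    · intro h
      have h1 : ∀ x ∈ S, ∀ y ∈ S, φ x ≤ φ y := by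
        intro x hx
        have : x ∈ {x ∈ S | ∀ y ∈ S, (0 : (Fin n → ℝ) →ₗ[ℝ] ℝ) x ≤ (0 : (Fin n → ℝ) →ₗ[ℝ] ℝ) y} :=
          ⟨hx, fun y _ => le_refl _⟩
        rw [← h] at this
        exact this.2
      exact fun x hx y hy => le_antisymm (h1 x hx y hy) (h1 y hy x hx)
    · intro h
      ext x
      constructor
      · rintro ⟨hx, -⟩; exact ⟨hx, fun y _ => le_refl _⟩
      · rintro ⟨hx, -⟩; exact ⟨hx, fun y hy => (h x hx y hy).le⟩
  have hinvd : ∀ x y, matMap U⁻¹ (uniAff U w x) - matMap U⁻¹ (uniAff U w y) = x - y := by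
    intro x y
    have h1 : (matLin U⁻¹) (uniAff U w x) - (matLin U⁻¹) (uniAff U w y) = x - y := by
      rw [← map_sub]
      have h2 := (uniAff U w).linearMap_vsub x y
      rw [uniAff_linear, vsub_eq_sub, vsub_eq_sub] at h2
      rw [← h2]
      exact hinv _
    exact h1
  refine G.combin (baff A U w) ?_ ?_ ?_ ?_ ?_ ?_
  · intro k x hx
    rw [baff_apply]
    obtain ⟨h0, h1⟩ := simplex_nonneg (hmem x hx)
    refine Fin.cases ?_ (fun j0 => ?_) k
    · show 0 ≤ 1 - _
      linarith
    · exact h0 j0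
  · intro x
    simp only [baff_apply]
    rw [Fin.sum_univ_succ]
    simp [bary]
  · intro k x hx
    rw [baff_apply]
    have h1 : IsLatticePt (unimodMap U w x) := by
      have h2 := lat_add (lat_matMap U hx) (y := fun i => (w i : ℝ)) (fun i => ⟨w i, rfl⟩)
      exact h2
    have h2 := lat_matMap A h1
    refine Fin.cases ?_ (fun j0 => ?_) k
    · choose z hz using h2
      refine ⟨1 - ∑ j, z j, ?_⟩
      simp only [bary, Fin.cons_zero, hz]
      push_cast
      rfl
    · exact h2 j0
  · intro k
    have h1 : stdSimplexVert t k ∈ matMap A '' (unimodMap U w '' P) := by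
      rw [himg]; exact subset_convexHull ℝ _ ⟨k, rfl⟩
    obtain ⟨_, ⟨x, hx, rfl⟩, h2⟩ := h1
    exact ⟨x, hx, (hone k x hx).2 h2⟩
  · intro k l φ hk
    have h1 := hnorm k l (φ ∘ₗ matLin U⁻¹) 0
    rw [hconst, hconst, hpiece, hpiece] at h1
    have hφ : ∀ x y, (φ ∘ₗ matLin U⁻¹) (uniAff U w x) - (φ ∘ₗ matLin U⁻¹) (uniAff U w y)
        = φ x - φ y := by
      intro x y
      have h5 := congrArg φ (hinvd x y)
      rw [map_sub, map_sub] at h5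
      exact h5
    have h2 := h1.1 (by
      rintro _ ⟨x, ⟨hx, hx1⟩, rfl⟩ _ ⟨y, ⟨hy, hy1⟩, rfl⟩
      have h3 := hφ x y
      rw [hk x hx hx1 y hy hy1] at h3
      linarith)
    intro x hx hx1 y hy hy1
    have h4 := h2 _ ⟨x, ⟨hx, hx1⟩, rfl⟩ _ ⟨y, ⟨hy, hy1⟩, rfl⟩
    have h3 := hφ x y
    linarith
  · intro k
    refine lt_of_le_of_lt ?_ (hdim k)
    rw [hpiece]
    unfold fdim
    rw [← (uniAff U w).map_vectorSpan, uniAff_linear]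
    set S := vectorSpan ℝ {x ∈ P | baff A U w k x = 1}
    have h1 : (S.map (matLin U)).map (matLin U⁻¹) = S := by
      rw [← Submodule.map_comp]
      have : matLin U⁻¹ ∘ₗ matLin U = LinearMap.id := LinearMap.ext hinv
      rw [this, Submodule.map_id]
    calc Module.finrank ℝ S = Module.finrank ℝ ((S.map (matLin U)).map (matLin U⁻¹)) := by rw [h1]
      _ ≤ _ := Submodule.finrank_map_le _ _

end Smooth8
end

/-- A smooth full-dimensional lattice polytope `P ⊆ ℝ^n` satisfies
`Σ_F (-1)^{n - dim F} (dim F + 1)! Vol(F) = 0` iff `P` is unimodularly equivalent to a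
Cayley sum `Cayley(R_0, …, R_t)_π` of normally equivalent smooth lattice polytopes `R_i`
with `dim R_i < t`. -/
theorem stmt8 {n : ℕ} (P : Set (Fin n → ℝ)) (hP : IsLatticePolytope P)
    (hfull : affineSpan ℝ P = ⊤) (hsm : IsSmoothPoly P) :
    FaceSumZero P ↔
      ∃ (t : ℕ) (U : Matrix (Fin n) (Fin n) ℤ) (w : Fin n → ℤ)
        (A : Matrix (Fin t) (Fin n) ℤ), IsUnit U.det ∧
        IsCayleyWith (unimodMap U w '' P) A ∧
        ∀ k : Fin (t + 1),
          IsSmoothPoly (cayleyPiece A (unimodMap U w '' P) k) ∧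
          IsLatticePolytope (cayleyPiece A (unimodMap U w '' P) k) ∧
          fdim (cayleyPiece A (unimodMap U w '' P) k) < t := by
  obtain ⟨ι, ω, _, _, _, M, G⟩ := Smooth8.exists_model hP hfull hsm
  rw [G.faceSumZero_iff, M.main_comb]
  constructor
  · rintro ⟨C, hC, hcard⟩
    exact G.cayley hC hcard
  · rintro ⟨t, U, w, A, hU, hA, h⟩
    exact G.cayley_conv U w A hU hA (fun k => (h k).2.2)
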